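/- arXiv:2407.13634 — 5 statements merged into one kernel-verified Lean document; each statement's English description precedes it below -/
import Mathlib

section
/- Let p = 1, q = 1/50, r = 0. For all positive integers u and v, with m = 200(u+v) items and two agents whose additive valuations assign each item a value in {p, q, r}, there is no fractional allocation rule F on such profiles that is truthful and such that, for every profile, the fractional allocation F(v_1,v_2) can be realized as a finite probability distribution (matching the marginal probabilities x_{ig} of F(v_1,v_2)) over allocations each of which is both Pareto-optimal among integral allocations and EF^{+u}_{-v}. -/
open Finset

/-- `A` is an ordered partition of the item set `M` into `n` bundles. -/
def IsPartition {ι : Type*} [DecidableEq ι] {n : ℕ} (M : Finset ι)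
    (A : Fin n → Finset ι) : Prop :=
  (∀ i, A i ⊆ M) ∧ (∀ i j, i ≠ j → Disjoint (A i) (A j)) ∧ (∀ g ∈ M, ∃ i, g ∈ A i)

/-- The allocation `A` of the items `M` is EF^{+u}_{-w} for the additive valuations `v`. -/
def EFpm {ι : Type*} [DecidableEq ι] {n : ℕ} (M : Finset ι) (v : Fin n → ι → ℝ)
    (A : Fin n → Finset ι) (u w : ℕ) : Prop :=
  ∀ i j : Fin n, ∃ Si Sj : Finset ι,
    Si ⊆ M ∧ Disjoint Si (A i) ∧ Si.card ≤ u ∧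
    Sj ⊆ A j ∧ Sj.card ≤ w ∧
    ∑ g ∈ A j \ Sj, v i g ≤ ∑ g ∈ A i ∪ Si, v i g

/-- The allocation `A` is Pareto-optimal among integral allocations. -/
def ParetoOptimal {n m : ℕ} (v : Fin n → Fin m → ℝ) (A : Fin n → Finset (Fin m)) : Prop :=
  ¬ ∃ B : Fin n → Finset (Fin m), IsPartition Finset.univ B ∧
      (∀ i, ∑ g ∈ A i, v i g ≤ ∑ g ∈ B i, v i g) ∧
      (∃ i, ∑ g ∈ A i, v i g < ∑ g ∈ B i, v i g)

/-- A valuation is tri-valued with values `1`, `1/50`, `0`. -/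
def TriValued {m : ℕ} (w : Fin m → ℝ) : Prop :=
  ∀ g, w g = 1 ∨ w g = 1 / 50 ∨ w g = 0

/-!
Fix a set `X` of items, with complement of size `b`, and put `s = u + w`. On the valuations that are
constant on `X` and on its complement, written `(value on X, value off X)`, consider
`A = (1, 0)`, `B = (1, q)`, `B' = (q, 1)` and `C = (1, 1)`. For each profile let `x` and `y` be the
expected numbers of items that agent `0` receives inside and outside `X`. Truthfulness of agent `0`
says that her true report maximizes her own value, and truthfulness of agent `1` that his true
report minimizes his value for the bundle of agent `0`. If `b + s ≤ |X|`, fairness and efficiency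
force `y = 0` at the profile `(B, C)`, whence
`(|X| + b - s) / 2 ≤ x(C, B') ≤ (x + q y)(C, B') ≤ (x + q y)(B, B') ≤ (x + y / q)(B, B')
  ≤ (x + y / q)(B, C) = x(B, C) ≤ x(A, C) ≤ (x + y)(A, C) ≤ (x + y)(A, B) ≤ (|X| + q b + s) / 2`.
So `(1 - q) b ≤ 2 s`, which fails once there are sufficiently many items.
-/

section Allocations

variable {ι : Type*} [DecidableEq ι] {n m u w : ℕ}

theorem IsPartition.one_eq_compl_zero [Fintype ι] {A : Fin 2 → Finset ι}
    (hA : IsPartition univ A) : A 1 = (A 0)ᶜ := by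
  obtain ⟨-, hdisj, hcover⟩ := hA
  refine subset_antisymm (subset_compl_iff_disjoint_left.mpr (hdisj 0 1 (by decide))) fun g hg ↦ ?_
  obtain ⟨i, hi⟩ := hcover g (mem_univ g)
  fin_cases i
  · exact absurd hi (mem_compl.mp hg)
  · exact hi

theorem isPartition_compl [Fintype ι] (S : Finset ι) : IsPartition univ ![S, Sᶜ] := by
  refine ⟨fun i ↦ subset_univ _, fun i j hij ↦ ?_, fun g _ ↦ ?_⟩
  · fin_cases i <;> fin_cases j <;> simp_all [disjoint_compl_right, disjoint_compl_left]
  · simpa [Fin.exists_fin_two] using em (g ∈ S)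

theorem IsPartition.sum_zero_add_sum_one [Fintype ι] {A : Fin 2 → Finset ι}
    (hA : IsPartition univ A) (f : ι → ℝ) : ∑ g ∈ A 0, f g + ∑ g ∈ A 1, f g = ∑ g, f g := by
  rw [hA.one_eq_compl_zero, sum_add_sum_compl]

theorem EFpm.sum_le_sum_add {M : Finset ι} {v : Fin n → ι → ℝ} {A : Fin n → Finset ι}
    (h : EFpm M v A u w) {i : Fin n} {c : ℝ} (hc : 0 ≤ c) (hv : ∀ g, v i g ≤ c) (j : Fin n) :
    ∑ g ∈ A j, v i g ≤ ∑ g ∈ A i, v i g + (u + w) * c := by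
  obtain ⟨S, T, -, hS, hSu, hT, hTw, hle⟩ := h i j
  have sum_le {k : ℕ} {R : Finset ι} (hR : #R ≤ k) : ∑ g ∈ R, v i g ≤ k * c :=
    calc ∑ g ∈ R, v i g ≤ #R * c := by simpa using sum_le_card_nsmul R (v i) c fun g _ ↦ hv g
      _ ≤ k * c := by gcongr
  rw [sum_union hS.symm] at hle
  linarith [sum_sdiff (f := v i) hT, sum_le hSu, sum_le hTw]

/-- `A` divides all items between two agents in a way that is Pareto-optimal and EF^{+u}_{-w}. -/
structure IsFairEfficient (v : Fin 2 → Fin m → ℝ) (u w : ℕ) (A : Fin 2 → Finset (Fin m)) :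
    Prop where
  isPartition : IsPartition univ A
  paretoOptimal : ParetoOptimal v A
  efpm : EFpm univ v A u w

namespace IsFairEfficient

variable {v : Fin 2 → Fin m → ℝ} {A : Fin 2 → Finset (Fin m)}

theorem sum_le_two_mul_sum_zero (h : IsFairEfficient v u w A) (hv : ∀ g, v 0 g ≤ 1) :
    ∑ g, v 0 g ≤ 2 * ∑ g ∈ A 0, v 0 g + (u + w) := by
  linarith [h.efpm.sum_le_sum_add zero_le_one hv 1, h.isPartition.sum_zero_add_sum_one (v 0)]

theorem two_mul_sum_zero_le (h : IsFairEfficient v u w A) (hv : ∀ g, v 1 g ≤ 1) :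
    2 * ∑ g ∈ A 0, v 1 g ≤ ∑ g, v 1 g + (u + w) := by
  linarith [h.efpm.sum_le_sum_add zero_le_one hv 0, h.isPartition.sum_zero_add_sum_one (v 1)]

end IsFairEfficient

namespace ParetoOptimal

variable {v : Fin 2 → Fin m → ℝ} {A : Fin 2 → Finset (Fin m)}

theorem not_improvement (hPO : ParetoOptimal v A) (hA : IsPartition univ A) {S : Finset (Fin m)}
    (h0 : ∑ g ∈ A 0, v 0 g ≤ ∑ g ∈ S, v 0 g) (h1 : ∑ g ∈ S, v 1 g ≤ ∑ g ∈ A 0, v 1 g) :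
    ¬ (∑ g ∈ A 0, v 0 g < ∑ g ∈ S, v 0 g ∨ ∑ g ∈ S, v 1 g < ∑ g ∈ A 0, v 1 g) := by
  intro hlt
  have hS := sum_add_sum_compl S (v 1)
  have hA1 := hA.sum_zero_add_sum_one (v 1)
  refine hPO ⟨![S, Sᶜ], isPartition_compl S, ?_, ?_⟩
  · simp only [Fin.forall_fin_two, Matrix.cons_val_zero, Matrix.cons_val_one]
    exact ⟨h0, by linarith⟩
  · simp only [Fin.exists_fin_two, Matrix.cons_val_zero, Matrix.cons_val_one]
    exact hlt.imp_right fun h ↦ by linarith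

theorem notMem_zero_of_eq_zero (hPO : ParetoOptimal v A) (hA : IsPartition univ A) {k : Fin m}
    (h0 : v 0 k = 0) (h1 : 0 < v 1 k) : k ∉ A 0 := by
  intro hk
  have erase_sum (f : Fin m → ℝ) := add_sum_erase (A 0) f hk
  refine hPO.not_improvement hA (S := (A 0).erase k) ?_ ?_ (.inr ?_) <;>
    linarith [erase_sum (v 0), erase_sum (v 1)]

theorem mem_zero_of_mem_zero (hPO : ParetoOptimal v A) (hA : IsPartition univ A) {g k : Fin m}
    (h0 : v 0 k ≤ v 0 g) (h1 : v 1 g ≤ v 1 k) (hlt : v 0 k < v 0 g ∨ v 1 g < v 1 k)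
    (hk : k ∈ A 0) : g ∈ A 0 := by
  by_contra hg
  have swap_sum (f : Fin m → ℝ) :
      ∑ x ∈ insert g ((A 0).erase k), f x + f k = ∑ x ∈ A 0, f x + f g := by
    rw [sum_insert fun h ↦ hg (mem_of_mem_erase h), ← add_sum_erase (A 0) f hk]
    ring
  have hswap0 := swap_sum (v 0)
  have hswap1 := swap_sum (v 1)
  exact hPO.not_improvement hA (S := insert g ((A 0).erase k)) (by linarith) (by linarith)
    (hlt.imp (fun h ↦ by linarith) fun h ↦ by linarith)

theorem zero_subset_or_subset_zero (hPO : ParetoOptimal v A) (hA : IsPartition univ A)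
    {X : Finset (Fin m)}
    (hX : ∀ g ∈ X, ∀ k ∉ X, v 0 k ≤ v 0 g ∧ v 1 g ≤ v 1 k ∧ (v 0 k < v 0 g ∨ v 1 g < v 1 k)) :
    A 0 ⊆ X ∨ X ⊆ A 0 := by
  refine or_iff_not_imp_left.mpr fun hAX g hg ↦ ?_
  obtain ⟨k, hkA, hkX⟩ := not_subset.mp hAX
  obtain ⟨h0, h1, hlt⟩ := hX g hg k hkX
  exact hPO.mem_zero_of_mem_zero hA h0 h1 hlt hkA

end ParetoOptimal

end Allocations

section FractionalAllocations

variable {ι : Type*} {n : ℕ}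

/-- `x` is a fractional allocation: `x i g` is the share of item `g` that agent `i` receives. -/
def IsFractionalAllocation (x : Fin n → ι → ℝ) : Prop :=
  (∀ i g, 0 ≤ x i g) ∧ ∀ g, ∑ i, x i g = 1

/-- `x` is the matrix of marginals of a finite lottery over allocations satisfying `P`. -/
def IsRealizable [DecidableEq ι] (P : (Fin n → Finset ι) → Prop) (x : Fin n → ι → ℝ) : Prop :=
  ∃ (K : ℕ) (p : Fin K → ℝ) (A : Fin K → Fin n → Finset ι),
    (∀ k, 0 ≤ p k) ∧ ∑ k, p k = 1 ∧ (∀ k, P (A k)) ∧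
      ∀ i g, ∑ k, (if g ∈ A k i then p k else 0) = x i g

/-- The rule `F` is truthful in expectation for agents whose valuations, true or reported, lie in
`D`. -/
def IsTruthfulOn [Fintype ι] (D : Set (ι → ℝ)) (F : (Fin n → ι → ℝ) → Fin n → ι → ℝ) : Prop :=
  ∀ val : Fin n → ι → ℝ, (∀ i, val i ∈ D) → ∀ i, ∀ v' ∈ D,
    ∑ g, val i g * F (Function.update val i v') i g ≤ ∑ g, val i g * F val i g

theorem IsRealizable.sum_mul_mem [Fintype ι] [DecidableEq ι] {P : (Fin n → Finset ι) → Prop}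
    {x : Fin n → ι → ℝ} (h : IsRealizable P x) {s : Set ℝ} (hs : Convex ℝ s) (i : Fin n)
    (c : ι → ℝ) (hP : ∀ A, P A → ∑ g ∈ A i, c g ∈ s) : ∑ g, c g * x i g ∈ s := by
  obtain ⟨K, p, A, hp, hp1, hA, hx⟩ := h
  have expectation : ∑ g, c g * x i g = ∑ k, p k • ∑ g ∈ A k i, c g := by
    simp_rw [← hx, mul_sum, smul_eq_mul, mul_sum]
    rw [sum_comm]
    simp [sum_ite_mem, mul_comm]
  rw [expectation]
  exact hs.sum_mem (fun k _ ↦ hp k) hp1 fun k _ ↦ hP _ (hA k)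

theorem forall_mem_pair {D : Set (ι → ℝ)} {P Q : ι → ℝ} (hP : P ∈ D) (hQ : Q ∈ D) :
    ∀ i, ![P, Q] i ∈ D :=
  Fin.forall_fin_two.mpr ⟨hP, hQ⟩

section TwoAgents

variable [Fintype ι] {D : Set (ι → ℝ)} {F : (Fin 2 → ι → ℝ) → Fin 2 → ι → ℝ} {P P' Q Q' : ι → ℝ}

theorem IsTruthfulOn.sum_mul_le_of_misreport_zero (hF : IsTruthfulOn D F)
    (hP : P ∈ D) (hP' : P' ∈ D) (hQ : Q ∈ D) :
    ∑ g, P g * F ![P', Q] 0 g ≤ ∑ g, P g * F ![P, Q] 0 g := by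
  have hupdate : Function.update ![P, Q] 0 P' = ![P', Q] := by ext i; fin_cases i <;> rfl
  simpa [hupdate] using hF ![P, Q] (forall_mem_pair hP hQ) 0 P' hP'

theorem IsTruthfulOn.sum_mul_le_of_misreport_one (hF : IsTruthfulOn D F)
    (hfrac : ∀ val, (∀ i, val i ∈ D) → IsFractionalAllocation (F val))
    (hP : P ∈ D) (hQ : Q ∈ D) (hQ' : Q' ∈ D) :
    ∑ g, Q g * F ![P, Q] 0 g ≤ ∑ g, Q g * F ![P, Q'] 0 g := by
  have share_one {R : ι → ℝ} (hR : R ∈ D) :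
      ∑ g, Q g * F ![P, R] 1 g = ∑ g, Q g - ∑ g, Q g * F ![P, R] 0 g := by
    rw [← sum_sub_distrib]
    refine sum_congr rfl fun g _ ↦ ?_
    have hsum := (hfrac _ (forall_mem_pair hP hR)).2 g
    rw [Fin.sum_univ_two] at hsum
    rw [eq_sub_of_add_eq' hsum]
    ring
  have hupdate : Function.update ![P, Q] 1 Q' = ![P, Q'] := by ext i; fin_cases i <;> rfl
  have htruth : ∑ g, Q g * F ![P, Q'] 1 g ≤ ∑ g, Q g * F ![P, Q] 1 g := by
    simpa [hupdate] using hF ![P, Q] (forall_mem_pair hP hQ) 1 Q' hQ'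
  linarith [share_one hQ, share_one hQ']

end TwoAgents

end FractionalAllocations

section TwoLevel

variable {ι : Type*} [DecidableEq ι] {X : Finset ι} {α β q : ℝ}

/-- The valuations with values `1`, `q` and `0`; at `q = 1 / 50` these are the `TriValued` ones. -/
def triValuations (ι : Type*) (q : ℝ) : Set (ι → ℝ) :=
  {v | ∀ g, v g = 1 ∨ v g = q ∨ v g = 0}

/-- The valuation with value `α` on the items in `X` and value `β` on all others. -/
noncomputable def twoLevel (X : Finset ι) (α β : ℝ) : ι → ℝ :=
  X.piecewise (fun _ ↦ α) fun _ ↦ β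

theorem twoLevel_of_mem {g : ι} (hg : g ∈ X) : twoLevel X α β g = α :=
  piecewise_eq_of_mem _ _ _ hg

theorem twoLevel_of_notMem {g : ι} (hg : g ∉ X) : twoLevel X α β g = β :=
  piecewise_eq_of_notMem _ _ _ hg

theorem twoLevel_mem_triValuations (hα : α = 1 ∨ α = q ∨ α = 0) (hβ : β = 1 ∨ β = q ∨ β = 0) :
    twoLevel X α β ∈ triValuations ι q :=
  fun _ ↦ X.piecewise_cases (fun _ ↦ α) (fun _ ↦ β) (fun r ↦ r = 1 ∨ r = q ∨ r = 0) hα hβ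

theorem twoLevel_le {c : ℝ} (hα : α ≤ c) (hβ : β ≤ c) (g : ι) : twoLevel X α β g ≤ c :=
  X.piecewise_cases (fun _ ↦ α) (fun _ ↦ β) (· ≤ c) hα hβ

theorem sum_twoLevel (S : Finset ι) :
    ∑ g ∈ S, twoLevel X α β g = α * #(S ∩ X) + β * #(S \ X) := by
  simp [twoLevel, sum_piecewise, mul_comm]

theorem sum_twoLevel_mul [Fintype ι] (f : ι → ℝ) :
    ∑ g, twoLevel X α β g * f g = α * ∑ g ∈ X, f g + β * ∑ g ∈ Xᶜ, f g := by
  rw [← sum_add_sum_compl X, mul_sum, mul_sum]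
  exact congr_arg₂ (· + ·) (sum_congr rfl fun g hg ↦ by rw [twoLevel_of_mem hg])
    (sum_congr rfl fun g hg ↦ by rw [twoLevel_of_notMem (mem_compl.mp hg)])

end TwoLevel

namespace IsFairEfficient

variable {m u w : ℕ} {q : ℝ} {X : Finset (Fin m)} {A : Fin 2 → Finset (Fin m)}

theorem two_mul_card_zero_le (hq : 0 < q) (hq1 : q ≤ 1)
    (h : IsFairEfficient ![twoLevel X 1 0, twoLevel X 1 q] u w A) :
    2 * (#(A 0) : ℝ) ≤ #X + q * #Xᶜ + (u + w) := by
  have hsub : A 0 ⊆ X := fun k hk ↦ by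
    by_contra hkX
    exact h.paretoOptimal.notMem_zero_of_eq_zero h.isPartition (twoLevel_of_notMem hkX)
      (hq.trans_eq (twoLevel_of_notMem hkX).symm) hk
  have hEF := h.two_mul_sum_zero_le (twoLevel_le le_rfl hq1)
  simpa [sum_twoLevel, compl_eq_univ_sdiff, inter_eq_left.mpr hsub,
    sdiff_eq_empty_iff_subset.mpr hsub] using hEF

theorem zero_subset (hq1 : q < 1) (hX : #Xᶜ + (u + w) ≤ #X)
    (h : IsFairEfficient ![twoLevel X 1 q, twoLevel X 1 1] u w A) : A 0 ⊆ X := by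
  have hcases : A 0 ⊆ X ∨ X ⊆ A 0 :=
    h.paretoOptimal.zero_subset_or_subset_zero h.isPartition fun g hg k hk ↦ by
      simp [twoLevel_of_mem hg, twoLevel_of_notMem hk, hq1, hq1.le]
  have hcard : #(A 0) ≤ #X := by
    have hEF := h.two_mul_sum_zero_le (twoLevel_le le_rfl le_rfl)
    have hsplit := card_inter_add_card_sdiff (A 0) X
    rw [compl_eq_univ_sdiff] at hX
    simp only [Matrix.cons_val_one, Matrix.cons_val_fin_one, sum_twoLevel, univ_inter, one_mul]
      at hEF
    norm_cast at hEF
    omega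
  exact hcases.elim id fun hXA ↦ (eq_of_subset_of_card_le hXA hcard).ge

theorem le_two_mul_card_zero_inter (hq1 : q < 1) (hX : #Xᶜ ≤ #X)
    (h : IsFairEfficient ![twoLevel X 1 1, twoLevel X q 1] u w A) :
    (#X + #Xᶜ : ℝ) ≤ 2 * #(A 0 ∩ X) + (u + w) := by
  have hcases : A 0 ⊆ X ∨ X ⊆ A 0 :=
    h.paretoOptimal.zero_subset_or_subset_zero h.isPartition fun g hg k hk ↦ by
      simp [twoLevel_of_mem hg, twoLevel_of_notMem hk, hq1, hq1.le]
  rcases hcases with hAX | hXA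
  · have hEF := h.sum_le_two_mul_sum_zero (twoLevel_le le_rfl le_rfl)
    simpa [sum_twoLevel, compl_eq_univ_sdiff, sdiff_eq_empty_iff_subset.mpr hAX] using hEF
  · rw [inter_eq_right.mpr hXA]
    norm_cast
    omega

end IsFairEfficient

namespace IsRealizable

variable {m u w : ℕ} {q : ℝ} {X : Finset (Fin m)} {x : Fin 2 → Fin m → ℝ}

theorem two_mul_sum_zero_le (hq : 0 < q) (hq1 : q ≤ 1)
    (h : IsRealizable (IsFairEfficient ![twoLevel X 1 0, twoLevel X 1 q] u w) x) :
    2 * (∑ g ∈ X, x 0 g + ∑ g ∈ Xᶜ, x 0 g) ≤ #X + q * #Xᶜ + (u + w) := by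
  have hmem := h.sum_mul_mem (convex_Iic _) 0 (fun _ ↦ 2) fun A hA ↦ by
    simpa [mul_comm] using hA.two_mul_card_zero_le hq hq1
  simpa only [← mul_sum, sum_add_sum_compl, Set.mem_Iic] using hmem

theorem sum_compl_zero_eq_zero (hq1 : q < 1) (hX : #Xᶜ + (u + w) ≤ #X)
    (h : IsRealizable (IsFairEfficient ![twoLevel X 1 q, twoLevel X 1 1] u w) x) :
    ∑ g ∈ Xᶜ, x 0 g = 0 := by
  have hmem := h.sum_mul_mem (convex_singleton 0) 0 (twoLevel X 0 1) fun A hA ↦ by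
    simp [sum_twoLevel, sdiff_eq_empty_iff_subset.mpr (hA.zero_subset hq1 hX)]
  simpa [sum_twoLevel_mul] using hmem

theorem le_two_mul_sum_zero (hq1 : q < 1) (hX : #Xᶜ ≤ #X)
    (h : IsRealizable (IsFairEfficient ![twoLevel X 1 1, twoLevel X q 1] u w) x) :
    (#X + #Xᶜ : ℝ) ≤ 2 * ∑ g ∈ X, x 0 g + (u + w) := by
  have hmem := h.sum_mul_mem (convex_Ici (#X + #Xᶜ - (u + w) : ℝ)) 0 (twoLevel X 2 0) fun A hA ↦ by
    simpa [sum_twoLevel] using hA.le_two_mul_card_zero_inter hq1 hX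
  simpa [sum_twoLevel_mul] using hmem

end IsRealizable

/-- `F` is a truthful rule for two agents with values in `{1, q, 0}` whose outputs are lotteries
over Pareto-optimal EF^{+u}_{-w} allocations. Nothing is required of `F` on other profiles. -/
structure IsTruthfulFairRule {m : ℕ} (q : ℝ) (u w : ℕ)
    (F : (Fin 2 → Fin m → ℝ) → Fin 2 → Fin m → ℝ) : Prop where
  isFractionalAllocation : ∀ val : Fin 2 → Fin m → ℝ, (∀ i, val i ∈ triValuations (Fin m) q) →
    IsFractionalAllocation (F val)
  isTruthfulOn : IsTruthfulOn (triValuations (Fin m) q) F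
  isRealizable : ∀ val : Fin 2 → Fin m → ℝ, (∀ i, val i ∈ triValuations (Fin m) q) →
    IsRealizable (IsFairEfficient val u w) (F val)

namespace IsTruthfulFairRule

variable {m u w : ℕ} {q : ℝ} {F : (Fin 2 → Fin m → ℝ) → Fin 2 → Fin m → ℝ} {X : Finset (Fin m)}

theorem sum_zero_nonneg (hF : IsTruthfulFairRule q u w F) {P Q : Fin m → ℝ}
    (hP : P ∈ triValuations (Fin m) q) (hQ : Q ∈ triValuations (Fin m) q) (S : Finset (Fin m)) :
    0 ≤ ∑ g ∈ S, F ![P, Q] 0 g :=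
  sum_nonneg fun g _ ↦ (hF.isFractionalAllocation _ (forall_mem_pair hP hQ)).1 0 g

theorem sum_add_mul_sum_compl_le (hF : IsTruthfulFairRule q u w F) (hq : 0 < q) (hq1 : q ≤ 1)
    {P Q : Fin m → ℝ} (hP : P ∈ triValuations (Fin m) q) (hQ : Q ∈ triValuations (Fin m) q)
    (hy : ∑ g ∈ Xᶜ, F ![P, Q] 0 g = 0) :
    ∑ g ∈ X, F ![P, twoLevel X q 1] 0 g + q * ∑ g ∈ Xᶜ, F ![P, twoLevel X q 1] 0 g ≤
      ∑ g ∈ X, F ![P, Q] 0 g := by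
  set B' := twoLevel X q 1
  have hB' : B' ∈ triValuations (Fin m) q := twoLevel_mem_triValuations (by simp) (by simp)
  have reports_Q : q * ∑ g ∈ X, F ![P, B'] 0 g + ∑ g ∈ Xᶜ, F ![P, B'] 0 g ≤
      q * ∑ g ∈ X, F ![P, Q] 0 g := by
    simpa only [B', sum_twoLevel_mul, one_mul, hy, add_zero] using
      hF.isTruthfulOn.sum_mul_le_of_misreport_one hF.isFractionalAllocation hP hB' hQ
  refine le_of_mul_le_mul_left ?_ hq
  calc q * (∑ g ∈ X, F ![P, B'] 0 g + q * ∑ g ∈ Xᶜ, F ![P, B'] 0 g)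
      = q * ∑ g ∈ X, F ![P, B'] 0 g + q ^ 2 * ∑ g ∈ Xᶜ, F ![P, B'] 0 g := by ring
    _ ≤ q * ∑ g ∈ X, F ![P, B'] 0 g + ∑ g ∈ Xᶜ, F ![P, B'] 0 g := by
      gcongr
      exact mul_le_of_le_one_left (hF.sum_zero_nonneg hP hB' Xᶜ) (pow_le_one₀ hq.le hq1)
    _ ≤ q * ∑ g ∈ X, F ![P, Q] 0 g := reports_Q

theorem card_compl_le (hF : IsTruthfulFairRule q u w F) (hq : 0 < q) (hq1 : q < 1)
    (hX : #Xᶜ + (u + w) ≤ #X) : (1 - q) * #Xᶜ ≤ 2 * (u + w) := by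
  set A := twoLevel X 1 0
  set B := twoLevel X 1 q
  set B' := twoLevel X q 1
  set C := twoLevel X 1 1
  have hA : A ∈ triValuations (Fin m) q := twoLevel_mem_triValuations (by simp) (by simp)
  have hB : B ∈ triValuations (Fin m) q := twoLevel_mem_triValuations (by simp) (by simp)
  have hB' : B' ∈ triValuations (Fin m) q := twoLevel_mem_triValuations (by simp) (by simp)
  have hC : C ∈ triValuations (Fin m) q := twoLevel_mem_triValuations (by simp) (by simp)
  let x (P Q : Fin m → ℝ) : ℝ := ∑ g ∈ X, F ![P, Q] 0 g
  let y (P Q : Fin m → ℝ) : ℝ := ∑ g ∈ Xᶜ, F ![P, Q] 0 g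
  have upper_AB : 2 * (x A B + y A B) ≤ #X + q * #Xᶜ + (u + w) :=
    (hF.isRealizable _ (forall_mem_pair hA hB)).two_mul_sum_zero_le hq hq1.le
  have y_BC : y B C = 0 :=
    (hF.isRealizable _ (forall_mem_pair hB hC)).sum_compl_zero_eq_zero hq1 hX
  have lower_CB' : (#X + #Xᶜ : ℝ) ≤ 2 * x C B' + (u + w) :=
    (hF.isRealizable _ (forall_mem_pair hC hB')).le_two_mul_sum_zero hq1 (by omega)
  have C_reports_B : x A C + y A C ≤ x A B + y A B := by
    simpa only [C, sum_twoLevel_mul, one_mul] using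
      hF.isTruthfulOn.sum_mul_le_of_misreport_one hF.isFractionalAllocation hA hC hB
  have A_reports_B : x B C ≤ x A C := by
    simpa only [A, sum_twoLevel_mul, one_mul, zero_mul, add_zero] using
      hF.isTruthfulOn.sum_mul_le_of_misreport_zero hA hB hC
  have B_reports_C : x C B' + q * y C B' ≤ x B B' + q * y B B' := by
    simpa only [B, sum_twoLevel_mul, one_mul] using
      hF.isTruthfulOn.sum_mul_le_of_misreport_zero hB hC hB'
  have BB'_le_BC : x B B' + q * y B B' ≤ x B C :=
    hF.sum_add_mul_sum_compl_le hq hq1.le hB hC y_BC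
  have y_CB'_nonneg : 0 ≤ q * y C B' := mul_nonneg hq.le (hF.sum_zero_nonneg hC hB' Xᶜ)
  have y_AC_nonneg : 0 ≤ y A C := hF.sum_zero_nonneg hA hC Xᶜ
  linarith

end IsTruthfulFairRule

/-- The number `m - (u + w) - 1` is at most twice the size of the largest complement `Xᶜ` to which
`IsTruthfulFairRule.card_compl_le` applies. -/
theorem no_truthful_PO_EFpm_trivalued_general {m u w : ℕ} {q : ℝ} (hq : 0 < q) (hq1 : q < 1)
    (hm : 4 * (u + w) < (1 - q) * (m - (u + w) - 1)) :
    ¬ ∃ F : (Fin 2 → Fin m → ℝ) → Fin 2 → Fin m → ℝ, IsTruthfulFairRule q u w F := by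
  rintro ⟨F, hF⟩
  have hum : u + w ≤ m := by
    have hpos : 0 < (m : ℝ) - (u + w) - 1 :=
      pos_of_mul_pos_right ((by positivity : (0 : ℝ) ≤ 4 * (u + w)).trans_lt hm) (by linarith)
    exact_mod_cast (by linarith : (u + w : ℝ) ≤ m)
  obtain ⟨Y, -, hY⟩ := exists_subset_card_eq (s := (univ : Finset (Fin m)))
    (n := (m - (u + w)) / 2) (by simp; omega)
  have hcompl : #Yᶜᶜ + (u + w) ≤ #Yᶜ := by
    rw [compl_compl, card_compl, Fintype.card_fin, hY]
    omega
  have hYlarge : (m : ℝ) - (u + w) - 1 ≤ 2 * #Y := by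
    have : m ≤ 2 * #Y + (u + w) + 1 := by omega
    have : (m : ℝ) ≤ 2 * #Y + (u + w) + 1 := by exact_mod_cast this
    linarith
  have hbound := hF.card_compl_le hq hq1 hcompl
  rw [compl_compl] at hbound
  have := mul_le_mul_of_nonneg_left hYlarge (sub_nonneg.mpr hq1.le)
  linarith

/-- With `p = 1`, `q = 1/50`, `r = 0`: for all positive `u, v` and `m = 200(u+v)` items and
two agents with tri-valued additive valuations, there is no truthful fractional allocation
rule whose output is always realizable as a finite probability distribution over allocations
each of which is Pareto-optimal (among integral allocations) and EF^{+u}_{-v}. -/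
theorem no_truthful_PO_EFpm_trivalued (u w : ℕ) (hu : 0 < u) (hw : 0 < w) :
    ¬ ∃ F : (Fin 2 → Fin (200 * (u + w)) → ℝ) → (Fin 2 → Fin (200 * (u + w)) → ℝ),
      -- F outputs fractional allocations on tri-valued profiles
      (∀ val : Fin 2 → Fin (200 * (u + w)) → ℝ, (∀ i, TriValued (val i)) →
        (∀ i g, 0 ≤ F val i g) ∧ (∀ g, ∑ i, F val i g = 1)) ∧
      -- F is truthful (in expectation) on tri-valued profiles
      (∀ val : Fin 2 → Fin (200 * (u + w)) → ℝ, (∀ i, TriValued (val i)) →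
        ∀ i : Fin 2, ∀ v' : Fin (200 * (u + w)) → ℝ, TriValued v' →
          ∑ g, val i g * F (Function.update val i v') i g ≤
            ∑ g, val i g * F val i g) ∧
      -- the output of F is realizable over Pareto-optimal EF^{+u}_{-w} allocations
      (∀ val : Fin 2 → Fin (200 * (u + w)) → ℝ, (∀ i, TriValued (val i)) →
        ∃ (K : ℕ) (p : Fin K → ℝ) (A : Fin K → Fin 2 → Finset (Fin (200 * (u + w)))),
          (∀ k, 0 ≤ p k) ∧ (∑ k, p k = 1) ∧
          (∀ k, IsPartition Finset.univ (A k)) ∧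
          (∀ k, ParetoOptimal val (A k)) ∧
          (∀ k, EFpm Finset.univ val (A k) u w) ∧
          (∀ i g, ∑ k, (if g ∈ A k i then p k else 0) = F val i g)) := by
  rintro ⟨F, hfrac, htruth, hreal⟩
  have hs : (1 : ℝ) ≤ u + w := by exact_mod_cast Nat.le_add_right_of_le hu
  refine no_truthful_PO_EFpm_trivalued_general (u := u) (w := w) (q := 1 / 50) (by norm_num)
    (by norm_num) (by push_cast; linarith) ⟨F, hfrac, htruth, fun val hval ↦ ?_⟩
  obtain ⟨K, p, A, hp, hp1, hpart, hPO, hEF, hmarg⟩ := hreal val hval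
  exact ⟨K, p, A, hp, hp1, fun k ↦ ⟨hpart k, hPO k, hEF k⟩, hmarg⟩
end

section
/- Fix reals p > q ≥ 0. For n agents whose additive valuations assign each item a value in {p, q}, there exists a fractional allocation rule F on such profiles such that: (i) F is truthful; (ii) for every profile, the fractional allocation output by F is Pareto-optimal among all fractional allocations; and (iii) for every profile, the fractional allocation output by F is EF1-realizable. -/
open Finset

/-- The fractional allocation `x` is Pareto-optimal among all fractional allocations. -/
def FracParetoOptimal {n m : ℕ} (v : Fin n → Fin m → ℝ)
    (x : Fin n → Fin m → ℝ) : Prop :=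
  ¬ ∃ y : Fin n → Fin m → ℝ,
      (∀ i g, 0 ≤ y i g) ∧ (∀ g, ∑ i, y i g = 1) ∧
      (∀ i, ∑ g, v i g * x i g ≤ ∑ g, v i g * y i g) ∧
      (∃ i, ∑ g, v i g * x i g < ∑ g, v i g * y i g)

/-- The fractional allocation `x` is EF1-realizable for the valuations `v`. -/
def EF1Realizable {n m : ℕ} (v : Fin n → Fin m → ℝ) (x : Fin n → Fin m → ℝ) : Prop :=
  ∃ (K : ℕ) (p : Fin K → ℝ) (A : Fin K → Fin n → Finset (Fin m)),
    (∀ k, 0 ≤ p k) ∧ (∑ k, p k = 1) ∧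
    (∀ k, IsPartition Finset.univ (A k)) ∧
    (∀ k, EFpm Finset.univ v (A k) 0 1) ∧
    (∀ i g, ∑ k, (if g ∈ A k i then p k else 0) = x i g)

/-
Only the set of liked items (those of value `p`) of each agent matters. Cap the amount of items per
agent at `c`, where `c = m / n` if `0 < q`, and `c > m` if `q = 0`. First divide the liked items by
water filling: make the loads of the agents as equal as possible subject to the cap. Then hand out
the leftover items, which only agents at the cap may like, in proportion to the remaining
capacities, so that for `0 < q` everybody ends up with exactly `c` items.

Pareto-optimality: the rule maximizes a weighted welfare, with weight `p` for the agents below the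
cap and `q` for those at the cap. Truthfulness: below any load level, the agents receive everything
they like, so a Hall-type count shows that what a misreporting agent gains from the leftovers is
paid for by what she loses in the water filling. EF1: viewed as flows, the fractional allocations
whose shares, liked loads and total loads lie between given integers form an integral polytope, so
the output is a lottery over assignments that round all these quantities up or down.
-/

open scoped Topology

lemma exists_ne_zero_map_eq_zero_of_sum_eq_zero {K U ι : Type*} [Field K] [AddCommGroup U]
    [Module K U] [FiniteDimensional K U] [Fintype ι] [Nonempty ι] (φ : U →ₗ[K] ι → K)
    (hsum : ∀ u, ∑ i, φ u i = 0) (hcard : Fintype.card ι ≤ Module.finrank K U) :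
    ∃ u ≠ 0, φ u = 0 := by
  classical
  let total : (ι → K) →ₗ[K] K := ∑ i, LinearMap.proj i
  have total_ker_ne_top : LinearMap.ker total ≠ ⊤ := by
    intro htop
    have : Pi.single (Classical.arbitrary ι) 1 ∈ LinearMap.ker total := htop ▸ Submodule.mem_top
    simp [total] at this
  have finrank_lt : Module.finrank K (LinearMap.ker total) < Module.finrank K U :=
    (Submodule.finrank_lt total_ker_ne_top).trans_le (by simpa using hcard)
  obtain ⟨u, hu, hu0⟩ := Submodule.exists_mem_ne_zero_of_ne_bot <|
    LinearMap.ker_ne_bot_of_finrank_lt finrank_lt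
      (f := φ.codRestrict (LinearMap.ker total) fun u => by simpa [total] using hsum u)
  exact ⟨u, hu0, congrArg Subtype.val hu⟩

lemma eventually_add_smul_mem_Icc {E : Type*} [Finite E] {lo hi x d : E → ℝ}
    (hx : x ∈ Set.Icc lo hi) (hd : ∀ e, d e ≠ 0 → lo e < x e ∧ x e < hi e) :
    ∀ᶠ ε in 𝓝 (0 : ℝ), x + ε • d ∈ Set.Icc lo hi := by
  have coordinate (e : E) : ∀ᶠ ε in 𝓝 (0 : ℝ), x e + ε * d e ∈ Set.Icc (lo e) (hi e) := by
    by_cases he : d e = 0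
    · simpa [he] using ⟨hx.1 e, hx.2 e⟩
    · have hcont : Filter.Tendsto (fun ε : ℝ => x e + ε * d e) (𝓝 0) (𝓝 (x e)) :=
        Continuous.tendsto' (by fun_prop) _ _ (by simp)
      exact hcont.eventually (Icc_mem_nhds (hd e he).1 (hd e he).2)
  filter_upwards [Filter.eventually_all.mpr coordinate] with ε hε
  exact ⟨fun e => (hε e).1, fun e => (hε e).2⟩

lemma eq_zero_of_mem_extremePoints {X : Type*} [AddCommGroup X] [Module ℝ X] {K : Set X} {x d : X}
    (hx : x ∈ K.extremePoints ℝ) (hd : x + d ∈ K) (hd' : x + -d ∈ K) : d = 0 := by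
  have hmid : x ∈ openSegment ℝ (x + d) (x + -d) :=
    ⟨1 / 2, 1 / 2, by norm_num, by norm_num, by norm_num, by module⟩
  simpa using ((mem_extremePoints.mp hx).2 _ hd _ hd' hmid).1

/- `(⊥ : Subring ℝ)` is the ring of integers inside `ℝ`. -/
lemma floor_lt_and_lt_ceil_of_mem_Icc {a x : ℝ} (hx : x ∈ Set.Icc (⌊a⌋ : ℝ) ⌈a⌉)
    (hinteg : x ∉ (⊥ : Subring ℝ)) : (⌊a⌋ : ℝ) < x ∧ x < ⌈a⌉ :=
  ⟨hx.1.lt_of_ne fun h => hinteg (h ▸ intCast_mem _ _),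
    hx.2.lt_of_ne fun h => hinteg (h ▸ intCast_mem _ _)⟩

lemma finite_integral_Icc {E : Type*} [Finite E] (lo hi : E → ℝ) :
    {x ∈ Set.Icc lo hi | ∀ e, x e ∈ (⊥ : Subring ℝ)}.Finite := by
  classical
  cases nonempty_fintype E
  refine ((Set.finite_Icc (fun e => ⌈lo e⌉) fun e => ⌊hi e⌋).image fun z e => (z e : ℝ)).subset ?_
  rintro x ⟨hx, hinteg⟩
  choose z hz using fun e => Subring.mem_bot.mp (hinteg e)
  exact ⟨z, ⟨fun e => Int.ceil_le.mpr ((hx.1 e).trans_eq (hz e).symm),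
    fun e => Int.le_floor.mpr ((hz e).trans_le (hx.2 e))⟩, funext hz⟩

lemma exists_eq_single_of_sum_eq_one {ι : Type*} [Fintype ι] [DecidableEq ι] {z : ι → ℝ}
    (hinteg : ∀ i, z i ∈ (⊥ : Subring ℝ)) (hz0 : ∀ i, 0 ≤ z i) (hz1 : ∑ i, z i = 1) :
    ∃ i, z = Pi.single i 1 := by
  choose k hk using fun i => Subring.mem_bot.mp (hinteg i)
  lift k to ι → ℕ using fun i => mod_cast (hz0 i).trans_eq (hk i).symm
  have hz (i : ι) : z i = k i := (hk i).symm
  have hk1 : ∑ i, k i = 1 := by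
    simp only [hz] at hz1
    exact_mod_cast hz1
  obtain ⟨i, hi⟩ := (Finsupp.sum_eq_one_iff (Finsupp.equivFunOnFinite.symm k)).mp <| by
    rwa [Finsupp.sum_fintype _ _ fun _ => rfl]
  refine ⟨i, funext fun j => ?_⟩
  have hkj : k j = Finsupp.single i 1 j := DFunLike.congr_fun hi j
  simp [hz, hkj, Finsupp.single_apply, Pi.single_apply, eq_comm]

section Flows

open scoped Matrix

variable {V E : Type*} [DecidableEq V]

/-- The incidence matrix of the directed multigraph in which the edge `e` runs from `s e` to `t e`,
so that `incidence s t *ᵥ f` is the net outflow of the flow `f`. Loops have zero columns. -/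
def incidence (s t : E → V) : Matrix V E ℝ :=
  Matrix.of fun v e => (if s e = v then 1 else 0) - (if t e = v then 1 else 0)

lemma incidence_apply (s t : E → V) (v : V) (e : E) :
    incidence s t v e = (if s e = v then 1 else 0) - (if t e = v then 1 else 0) := rfl

lemma incidence_eq_zero_or_one_or_neg_one (s t : E → V) (v : V) (e : E) :
    incidence s t v e = 0 ∨ incidence s t v e = 1 ∨ incidence s t v e = -1 := by
  rw [incidence_apply]
  split_ifs <;> simp

lemma eq_or_eq_of_incidence_ne_zero {s t : E → V} {v : V} {e : E} (h : incidence s t v e ≠ 0) :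
    v = s e ∨ v = t e := by
  by_contra! hv
  exact h (by simp [incidence_apply, hv.1.symm, hv.2.symm])

lemma sum_incidence [Fintype V] (s t : E → V) (e : E) : ∑ v, incidence s t v e = 0 := by
  simp [incidence_apply]

variable [Fintype E]

lemma incidence_mulVec_apply (s t : E → V) (f : E → ℝ) (v : V) :
    (incidence s t *ᵥ f) v = ∑ e, incidence s t v e * f e := rfl

open Classical in
lemma card_incident_vertices_le [Fintype V] {s t : E → V}
    (h : ∀ v e, incidence s t v e ≠ 0 → ∃ e' ≠ e, incidence s t v e' ≠ 0) :
    #{v | ∃ e, incidence s t v e ≠ 0} ≤ Fintype.card E := by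
  refine Nat.le_of_mul_le_mul_right (?_ : _ * 2 ≤ #(univ : Finset E) * 2) two_pos
  refine card_mul_le_card_mul (fun v e => incidence s t v e ≠ 0) (fun v hv => ?_) fun e _ => ?_
  · obtain ⟨e, he⟩ := (mem_filter.mp hv).2
    obtain ⟨e', hne, he'⟩ := h v e he
    exact one_lt_card.mpr ⟨e', by simpa [bipartiteAbove], e, by simpa [bipartiteAbove], hne⟩
  · refine (card_le_card fun v hv => ?_).trans (card_le_two (a := s e) (b := t e))
    simpa using eq_or_eq_of_incidence_ne_zero (mem_filter.mp hv).2

/- Net outflows sum to zero, so once there are at least as many edges as non-isolated vertices, the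
conservation equations are underdetermined. -/
lemma exists_circulation_of_no_pendant [Finite V] [Nonempty E] {s t : E → V}
    (h : ∀ v e, incidence s t v e ≠ 0 → ∃ e' ≠ e, incidence s t v e' ≠ 0) :
    ∃ d ≠ 0, incidence s t *ᵥ d = 0 := by
  classical
  cases nonempty_fintype V
  let T : Finset V := {v | ∃ e, incidence s t v e ≠ 0}
  have incidence_eq_zero {v : V} (hv : v ∉ T) (e : E) : incidence s t v e = 0 := by
    by_contra he
    exact hv (by simpa [T] using ⟨e, he⟩)
  have outflow_eq_zero (d : E → ℝ) {v : V} (hv : v ∉ T) : (incidence s t *ᵥ d) v = 0 := by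
    simp [incidence_mulVec_apply, incidence_eq_zero hv]
  obtain hempty | hT := T.eq_empty_or_nonempty
  · exact ⟨1, one_ne_zero, funext fun v => outflow_eq_zero 1 (by simp [hempty])⟩
  have column_sum (e : E) : ∑ v : T, incidence s t v e = 0 := by
    rw [sum_coe_sort T fun v => incidence s t v e, ← sum_incidence s t e]
    exact sum_subset (subset_univ T) fun v _ hv => incidence_eq_zero hv e
  have total_outflow (d : E → ℝ) : ∑ v : T, (incidence s t *ᵥ d) v = 0 := by
    simp only [incidence_mulVec_apply]
    rw [sum_comm]
    exact sum_eq_zero fun e _ => by rw [← sum_mul, column_sum, zero_mul]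
  have : Nonempty T := hT.coe_sort
  obtain ⟨d, hd0, hd⟩ := exists_ne_zero_map_eq_zero_of_sum_eq_zero
    ((incidence s t).submatrix (Subtype.val : T → V) id).mulVecLin total_outflow
    (by simpa using card_incident_vertices_le h)
  refine ⟨d, hd0, funext fun v => ?_⟩
  by_cases hv : v ∈ T
  · exact congrFun hd ⟨v, hv⟩
  · exact outflow_eq_zero d hv

lemma exists_ne_incident_nonintegral {s t : E → V} {f : E → ℝ} {v : V}
    (hf : (incidence s t *ᵥ f) v ∈ (⊥ : Subring ℝ)) {e : E} (he : f e ∉ (⊥ : Subring ℝ))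
    (hv : incidence s t v e ≠ 0) :
    ∃ e' ≠ e, f e' ∉ (⊥ : Subring ℝ) ∧ incidence s t v e' ≠ 0 := by
  classical
  by_contra! hinteg
  have term_mem (e' : E) (hne : e' ≠ e) : incidence s t v e' * f e' ∈ (⊥ : Subring ℝ) := by
    by_cases hf' : f e' ∈ (⊥ : Subring ℝ)
    · obtain h | h | h := incidence_eq_zero_or_one_or_neg_one s t v e' <;> simp [h, hf']
    · simp [hinteg e' hne hf']
  have rest_mem : ∑ e' ∈ univ.erase e, incidence s t v e' * f e' ∈ (⊥ : Subring ℝ) :=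
    sum_mem fun e' he' => term_mem e' (ne_of_mem_erase he')
  have : incidence s t v e * f e ∈ (⊥ : Subring ℝ) := by
    rw [incidence_mulVec_apply, ← add_sum_erase _ _ (mem_univ e)] at hf
    exact (add_mem_cancel_right rest_mem).mp hf
  obtain h | h | h := incidence_eq_zero_or_one_or_neg_one s t v e
  · exact hv h
  · exact he (by simpa [h] using this)
  · exact he (by simpa [h] using this)

lemma exists_circulation_supported_on_nonintegral [Finite V] {s t : E → V} {f : E → ℝ}
    (hf : ∀ v, (incidence s t *ᵥ f) v ∈ (⊥ : Subring ℝ)) {e₀ : E}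
    (he₀ : f e₀ ∉ (⊥ : Subring ℝ)) :
    ∃ d ≠ 0, incidence s t *ᵥ d = 0 ∧ ∀ e, d e ≠ 0 → f e ∉ (⊥ : Subring ℝ) := by
  classical
  let N := {e : E // f e ∉ (⊥ : Subring ℝ)}
  have : Nonempty N := ⟨⟨e₀, he₀⟩⟩
  obtain ⟨d, hd0, hd⟩ := exists_circulation_of_no_pendant (E := N)
    (s := fun e => s e) (t := fun e => t e) fun v e he =>
      let ⟨e', hne, he', hv⟩ := exists_ne_incident_nonintegral (hf v) e.2 he
      ⟨⟨e', he'⟩, fun h => hne (congrArg Subtype.val h), hv⟩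
  refine ⟨Function.extend Subtype.val d 0, ?_, funext fun v => ?_, fun e he hinteg => he ?_⟩
  · intro h
    refine hd0 (funext fun e => ?_)
    rw [← Subtype.val_injective.extend_apply d 0 e, h]
    rfl
  · refine Eq.trans (Eq.symm ?_) (congrFun hd v)
    refine Fintype.sum_of_injective Subtype.val Subtype.val_injective _ _
      (fun e he => ?_) fun e => ?_
    · rw [Function.extend_apply' _ _ _ (by simpa using he), Pi.zero_apply, mul_zero]
    · rw [Subtype.val_injective.extend_apply]; rfl
  · exact Function.extend_apply' _ _ _ fun ⟨a, ha⟩ => a.2 (ha ▸ hinteg)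

/-- The flows obtained from `f` by rounding every edge up or down without changing the net outflow
of any vertex, before integrality is imposed. -/
def flowBox (s t : E → V) (f : E → ℝ) : Set (E → ℝ) :=
  {g | incidence s t *ᵥ g = incidence s t *ᵥ f} ∩
    Set.Icc (fun e => (⌊f e⌋ : ℝ)) fun e => (⌈f e⌉ : ℝ)

lemma self_mem_flowBox (s t : E → V) (f : E → ℝ) : f ∈ flowBox s t f :=
  ⟨rfl, fun _ => Int.floor_le _, fun _ => Int.le_ceil _⟩

lemma convex_flowBox (s t : E → V) (f : E → ℝ) : Convex ℝ (flowBox s t f) :=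
  ((convex_singleton _).linear_preimage (incidence s t).mulVecLin).inter (convex_Icc _ _)

lemma isCompact_flowBox (s t : E → V) (f : E → ℝ) : IsCompact (flowBox s t f) :=
  isCompact_Icc.inter_left (isClosed_eq (by fun_prop) (by fun_prop))

lemma integral_of_mem_extremePoints_flowBox [Finite V] {s t : E → V} {f g : E → ℝ}
    (hf : ∀ v, (incidence s t *ᵥ f) v ∈ (⊥ : Subring ℝ))
    (hg : g ∈ (flowBox s t f).extremePoints ℝ) (e : E) : g e ∈ (⊥ : Subring ℝ) := by
  by_contra he
  have ⟨hdiv, hbox⟩ := hg.1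
  obtain ⟨d, hd0, hd, hsupp⟩ := exists_circulation_supported_on_nonintegral
    (fun v => (congrFun hdiv v).symm ▸ hf v) he
  have interior (e : E) (hde : d e ≠ 0) : (⌊f e⌋ : ℝ) < g e ∧ g e < ⌈f e⌉ :=
    floor_lt_and_lt_ceil_of_mem_Icc ⟨hbox.1 e, hbox.2 e⟩ (hsupp e hde)
  have div_eq (ε : ℝ) : incidence s t *ᵥ (g + ε • d) = incidence s t *ᵥ f := by
    rw [Matrix.mulVec_add, Matrix.mulVec_smul, hd, smul_zero, add_zero]
    exact hdiv
  have near : ∀ᶠ ε in 𝓝 (0 : ℝ), g + ε • d ∈ flowBox s t f :=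
    (eventually_add_smul_mem_Icc hbox interior).mono fun ε hε => ⟨div_eq ε, hε⟩
  have near_neg : ∀ᶠ ε in 𝓝 (0 : ℝ), g + (-ε) • d ∈ flowBox s t f :=
    (continuous_neg.tendsto' 0 0 neg_zero).eventually near
  obtain ⟨ε, ⟨hε, hε'⟩, hε0⟩ : ∃ ε : ℝ, (g + ε • d ∈ flowBox s t f ∧
      g + (-ε) • d ∈ flowBox s t f) ∧ ε ≠ 0 :=
    (((near.and near_neg).filter_mono nhdsWithin_le_nhds).and
      (self_mem_nhdsWithin : {0}ᶜ ∈ 𝓝[≠] (0 : ℝ))).exists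
  rw [neg_smul] at hε'
  exact (smul_ne_zero hε0 hd0) (eq_zero_of_mem_extremePoints hg hε hε')

theorem mem_convexHull_integral_flowBox [Finite V] {s t : E → V} {f : E → ℝ}
    (hf : ∀ v, (incidence s t *ᵥ f) v ∈ (⊥ : Subring ℝ)) :
    f ∈ convexHull ℝ {g ∈ flowBox s t f | ∀ e, g e ∈ (⊥ : Subring ℝ)} := by
  have hfin : {g ∈ flowBox s t f | ∀ e, g e ∈ (⊥ : Subring ℝ)}.Finite :=
    (finite_integral_Icc _ _).subset fun g hg => ⟨hg.1.2, hg.2⟩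
  have hext : (flowBox s t f).extremePoints ℝ ⊆
      {g ∈ flowBox s t f | ∀ e, g e ∈ (⊥ : Subring ℝ)} :=
    fun g hg => ⟨hg.1, integral_of_mem_extremePoints_flowBox hf hg⟩
  refine closure_minimal (convexHull_mono hext) (hfin.isClosed_convexHull ℝ) ?_
  rw [closure_convexHull_extremePoints (isCompact_flowBox s t f) (convex_flowBox s t f)]
  exact self_mem_flowBox s t f

end Flows

section Rounding

open scoped Matrix

variable {ι κ : Type*} [DecidableEq ι]

/-- The items received by agent `i` in the deterministic allocation giving each item `g` to the
agent `a g`. -/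
def bundle [Fintype κ] (a : κ → ι) (i : ι) : Finset κ := {g | a g = i}

/-- The deterministic allocation `a`, which gives the item `g` to the agent `a g`, viewed as a
fractional allocation. -/
def assignmentMatrix (a : κ → ι) : ι → κ → ℝ := fun i g => if a g = i then 1 else 0

lemma sum_assignmentMatrix [Fintype κ] [DecidableEq κ] (a : κ → ι) (i : ι) (T : Finset κ) :
    ∑ g ∈ T, assignmentMatrix a i g = #(bundle a i ∩ T) := by
  simp [assignmentMatrix, bundle, filter_inter]

/-- The deterministic allocation `a` rounds the fractional allocation `x`: only positive shares
are realized, and every agent receives the expected number of items in total and among her liked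
items `L i`, up to rounding. -/
structure IsRounding [Fintype κ] [DecidableEq κ] (L : ι → Finset κ) (x : ι → κ → ℝ)
    (a : κ → ι) : Prop where
  share_pos : ∀ g, 0 < x (a g) g
  card_liked : ∀ i, (#(bundle a i ∩ L i) : ℤ) ∈ Set.Icc ⌊∑ g ∈ L i, x i g⌋ ⌈∑ g ∈ L i, x i g⌉
  card_bundle : ∀ i, (#(bundle a i) : ℤ) ∈ Set.Icc ⌊∑ g, x i g⌋ ⌈∑ g, x i g⌉

/-- The vertices of the network whose integral flows are the roundings of a fractional allocation:
every item, two counters for every agent, and a sink. -/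
inductive RoundingVertex (ι κ : Type*)
  | item (g : κ)
  | liked (i : ι)
  | total (i : ι)
  | sink
  deriving DecidableEq, Fintype

namespace RoundingVertex

/-- The edges of the rounding network: the share of agent `i` in item `g`, then for every agent the
number of liked items and the number of all items she receives. -/
abbrev Edge (ι κ : Type*) := ι × κ ⊕ ι ⊕ ι

/-- The source of an edge of the rounding network. -/
def source : Edge ι κ → RoundingVertex ι κ :=
  Sum.elim (fun e => item e.2) (Sum.elim liked total)

variable [DecidableEq κ] (L : ι → Finset κ)

/-- The target of an edge of the rounding network. -/
def target : Edge ι κ → RoundingVertex ι κ :=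
  Sum.elim (fun e => if e.2 ∈ L e.1 then liked e.1 else total e.1)
    (Sum.elim total fun _ => sink)

variable [Fintype ι] [Fintype κ]

lemma outflow_item (f : Edge ι κ → ℝ) (g : κ) :
    (incidence source (target L) *ᵥ f) (item g) = ∑ i, f (.inl (i, g)) := by
  have target_ne (i : ι) (h : κ) :
      (if h ∈ L i then liked i else total i) ≠ (item g : RoundingVertex ι κ) := by
    split_ifs <;> simp
  simp [incidence_mulVec_apply, incidence_apply, source, target, target_ne,
    Fintype.sum_prod_type]

lemma outflow_liked (f : Edge ι κ → ℝ) (i : ι) :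
    (incidence source (target L) *ᵥ f) (liked i) =
      f (.inr (.inl i)) - ∑ g ∈ L i, f (.inl (i, g)) := by
  have target_eq (k : ι) (h : κ) :
      (if h ∈ L k then liked k else total k) = (liked i : RoundingVertex ι κ) ↔
        k = i ∧ h ∈ L k := by
    split_ifs <;> simp_all
  simp [incidence_mulVec_apply, incidence_apply, source, target, target_eq,
    Fintype.sum_prod_type, ite_and, neg_add_eq_sub]

lemma outflow_total (f : Edge ι κ → ℝ) (i : ι) :
    (incidence source (target L) *ᵥ f) (total i) =
      f (.inr (.inr i)) - f (.inr (.inl i)) - ∑ g ∈ (L i)ᶜ, f (.inl (i, g)) := by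
  have target_eq (k : ι) (h : κ) :
      (if h ∈ L k then liked k else total k) = (total i : RoundingVertex ι κ) ↔
        k = i ∧ h ∈ (L k)ᶜ := by
    split_ifs <;> simp_all
  simp [-mem_compl, incidence_mulVec_apply, incidence_apply, source, target, target_eq,
    Fintype.sum_prod_type, ite_and]
  ring

lemma outflow_sink (f : Edge ι κ → ℝ) :
    (incidence source (target L) *ᵥ f) sink = -∑ i, f (.inr (.inr i)) := by
  have target_ne (i : ι) (h : κ) :
      (if h ∈ L i then liked i else total i) ≠ (sink : RoundingVertex ι κ) := by
    split_ifs <;> simp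
  simp [incidence_mulVec_apply, incidence_apply, source, target, target_ne]

/-- The flow in the rounding network induced by a fractional allocation. -/
def flow (x : ι → κ → ℝ) : Edge ι κ → ℝ :=
  Sum.elim (fun e => x e.1 e.2) (Sum.elim (fun i => ∑ g ∈ L i, x i g) fun i => ∑ g, x i g)

lemma eq_flow_of_outflow_eq_zero {f : Edge ι κ → ℝ}
    (hliked : ∀ i, (incidence source (target L) *ᵥ f) (liked i) = 0)
    (htotal : ∀ i, (incidence source (target L) *ᵥ f) (total i) = 0) :
    f = flow L fun i g => f (.inl (i, g)) := by
  have liked_eq (i : ι) : f (.inr (.inl i)) = ∑ g ∈ L i, f (.inl (i, g)) :=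
    sub_eq_zero.mp ((outflow_liked L f i).symm.trans (hliked i))
  have total_eq (i : ι) : f (.inr (.inr i)) = ∑ g, f (.inl (i, g)) := by
    have := (outflow_total L f i).symm.trans (htotal i)
    rw [← sum_add_sum_compl (L i), ← liked_eq]
    linarith
  ext (e | i | i)
  · rfl
  · exact liked_eq i
  · exact total_eq i

lemma outflow_flow_item (x : ι → κ → ℝ) (g : κ) :
    (incidence source (target L) *ᵥ flow L x) (item g) = ∑ i, x i g :=
  outflow_item L _ g

lemma outflow_flow_liked (x : ι → κ → ℝ) (i : ι) :
    (incidence source (target L) *ᵥ flow L x) (liked i) = 0 :=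
  (outflow_liked L _ i).trans (sub_self _)

lemma outflow_flow_total (x : ι → κ → ℝ) (i : ι) :
    (incidence source (target L) *ᵥ flow L x) (total i) = 0 := by
  refine (outflow_total L _ i).trans ?_
  rw [sub_sub]
  exact sub_eq_zero.mpr (sum_add_sum_compl (L i) (x i)).symm

lemma outflow_flow_sink (x : ι → κ → ℝ) :
    (incidence source (target L) *ᵥ flow L x) sink = -∑ g, ∑ i, x i g := by
  rw [outflow_sink, sum_comm]
  rfl

lemma outflow_flow_mem_bot {x : ι → κ → ℝ} (hx : ∀ g, ∑ i, x i g = 1)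
    (v : RoundingVertex ι κ) :
    (incidence source (target L) *ᵥ flow L x) v ∈ (⊥ : Subring ℝ) := by
  cases v with
  | item g => simp [outflow_flow_item, hx]
  | liked i => simp [outflow_flow_liked]
  | total i => simp [outflow_flow_total]
  | sink => simp [outflow_flow_sink, hx]

lemma exists_flow_assignmentMatrix_eq {x : ι → κ → ℝ} (hx0 : ∀ i g, 0 ≤ x i g)
    (hx1 : ∀ g, ∑ i, x i g = 1) {f : Edge ι κ → ℝ}
    (hf : f ∈ flowBox source (target L) (flow L x)) (hinteg : ∀ e, f e ∈ (⊥ : Subring ℝ)) :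
    ∃ a : κ → ι, f = flow L (assignmentMatrix a) := by
  obtain ⟨hdiv, hbox⟩ := hf
  have column_sum (g : κ) : ∑ i, f (.inl (i, g)) = 1 := by
    rw [← outflow_item L f g, hdiv, outflow_flow_item, hx1]
  have share_nonneg (i : ι) (g : κ) : 0 ≤ f (.inl (i, g)) :=
    (Int.cast_nonneg (Int.floor_nonneg.mpr (hx0 i g))).trans (hbox.1 (.inl (i, g)))
  choose a ha using fun g => exists_eq_single_of_sum_eq_one (fun i => hinteg (.inl (i, g)))
    (share_nonneg · g) (column_sum g)
  have shares_eq : (fun i g => f (.inl (i, g))) = assignmentMatrix a := by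
    ext i g
    simpa [assignmentMatrix, Pi.single_apply, eq_comm] using congrFun (ha g) i
  refine ⟨a, shares_eq ▸ eq_flow_of_outflow_eq_zero L (fun i => ?_) fun i => ?_⟩
  · rw [hdiv, outflow_flow_liked]
  · rw [hdiv, outflow_flow_total]

variable {L}

lemma isRounding_of_flow_mem_flowBox {x : ι → κ → ℝ} {a : κ → ι}
    (ha : flow L (assignmentMatrix a) ∈ flowBox source (target L) (flow L x)) :
    IsRounding L x a := by
  obtain ⟨-, hlo, hhi⟩ := ha
  refine ⟨fun g => ?_, fun i => ?_, fun i => ?_⟩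
  · have : (1 : ℝ) ≤ ⌈x (a g) g⌉ := by
      simpa [flow, assignmentMatrix] using hhi (.inl (a g, g))
    exact Int.ceil_pos.mp (mod_cast this)
  · have lo := hlo (.inr (.inl i))
    have hi := hhi (.inr (.inl i))
    simp only [flow, Sum.elim_inr, Sum.elim_inl, sum_assignmentMatrix] at lo hi
    exact ⟨mod_cast lo, mod_cast hi⟩
  · have lo := hlo (.inr (.inr i))
    have hi := hhi (.inr (.inr i))
    simp only [flow, Sum.elim_inr, sum_assignmentMatrix, inter_univ] at lo hi
    exact ⟨mod_cast lo, mod_cast hi⟩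

end RoundingVertex

open RoundingVertex in
theorem mem_convexHull_isRounding [DecidableEq κ] [Fintype ι] [Fintype κ] (L : ι → Finset κ)
    {x : ι → κ → ℝ} (hx0 : ∀ i g, 0 ≤ x i g) (hx1 : ∀ g, ∑ i, x i g = 1) :
    x ∈ convexHull ℝ (assignmentMatrix '' {a | IsRounding L x a}) := by
  let shares : (Edge ι κ → ℝ) →ₗ[ℝ] (ι → κ → ℝ) :=
    LinearMap.pi fun i => LinearMap.pi fun g => LinearMap.proj (.inl (i, g))
  have hx : shares (flow L x) ∈ shares '' convexHull ℝ _ :=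
    Set.mem_image_of_mem _ (mem_convexHull_integral_flowBox (outflow_flow_mem_bot L hx1))
  rw [LinearMap.image_convexHull] at hx
  refine convexHull_mono (Set.image_subset_iff.mpr ?_) hx
  rintro f ⟨hf, hinteg⟩
  obtain ⟨a, rfl⟩ := exists_flow_assignmentMatrix_eq L hx0 hx1 hf hinteg
  exact ⟨a, isRounding_of_flow_mem_flowBox hf, rfl⟩

end Rounding

section Projection

variable {ι : Type*} [Fintype ι]

lemma exists_mem_forall_sum_mul_nonpos {K : Set (ι → ℝ)} (hne : K.Nonempty) (hcomp : IsCompact K)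
    (hconv : Convex ℝ K) (u : ι → ℝ) :
    ∃ p ∈ K, ∀ w ∈ K, ∑ i, (u i - p i) * (w i - p i) ≤ 0 := by
  let φ := (EuclideanSpace.equiv ι ℝ).symm
  have himage : Convex ℝ (φ '' K) := hconv.linear_image φ.toLinearMap
  obtain ⟨_, ⟨p, hp, rfl⟩, hmin⟩ := exists_norm_eq_iInf_of_complete_convex (hne.image φ)
    (hcomp.image φ.continuous).isComplete himage (φ u)
  refine ⟨p, hp, fun w hw => ?_⟩
  have := (norm_eq_iInf_iff_real_inner_le_zero himage (Set.mem_image_of_mem φ hp)).mp hmin _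
    (Set.mem_image_of_mem φ hw)
  simpa [PiLp.inner_apply, φ, mul_comm] using this

end Projection

section Leximin

variable {ι κ : Type*}

/-- The array whose only nonzero entry is the share `ε` of agent `i` in item `g`. -/
def singleShare [DecidableEq ι] [DecidableEq κ] (i : ι) (g : κ) (ε : ℝ) : ι → κ → ℝ :=
  Pi.single i (Pi.single g ε)

lemma singleShare_apply [DecidableEq ι] [DecidableEq κ] (i k : ι) (g h : κ) (ε : ℝ) :
    singleShare i g ε k h = if k = i ∧ h = g then ε else 0 := by
  obtain rfl | hk := eq_or_ne k i <;> simp [singleShare, Pi.single_apply, *]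

lemma sum_singleShare [Fintype ι] [DecidableEq ι] [DecidableEq κ] (i : ι) (g h : κ) (ε : ℝ) :
    ∑ k, singleShare i g ε k h = if h = g then ε else 0 := by
  simp [singleShare_apply, ite_and]

variable [Fintype κ]

/-- The total amount of items that agent `i` receives in the (possibly partial) allocation `y`. -/
def load (y : ι → κ → ℝ) (i : ι) : ℝ := ∑ g, y i g

lemma isLinearMap_load : IsLinearMap ℝ (load : (ι → κ → ℝ) → ι → ℝ) :=
  ⟨fun _ _ => funext fun _ => sum_add_distrib, fun _ _ => funext fun _ => (mul_sum ..).symm⟩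

lemma load_singleShare [DecidableEq ι] [DecidableEq κ] (i : ι) (g : κ) (ε : ℝ) :
    load (singleShare i g ε) = Pi.single i ε := by
  ext k
  simp [load, singleShare_apply, Pi.single_apply, ite_and]

variable [Fintype ι]

/-- A fractional allocation of parts of the items in which every agent only receives liked items
and at most the amount `c` in total. -/
structure IsCappedPartial (c : ℝ) (L : ι → Finset κ) (y : ι → κ → ℝ) : Prop where
  nonneg : ∀ i g, 0 ≤ y i g
  eq_zero : ∀ i, ∀ g ∉ L i, y i g = 0
  sum_le_one : ∀ g, ∑ i, y i g ≤ 1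
  load_le : ∀ i, load y i ≤ c

/-- The capped partial allocations whose loads are as close as possible to the constant vector `c`
in the Euclidean norm, expressed by the variational inequality of the projection. These are also
the leximin-optimal ones. -/
structure IsCappedLeximin (c : ℝ) (L : ι → Finset κ) (y : ι → κ → ℝ) : Prop extends
    IsCappedPartial c L y where
  sum_mul_nonpos : ∀ z, IsCappedPartial c L z → ∑ i, (c - load y i) * (load z i - load y i) ≤ 0

variable {c : ℝ} {L : ι → Finset κ} {y : ι → κ → ℝ}

lemma setOf_isCappedPartial_eq : {y | IsCappedPartial c L y} =
    {y | ∀ i g, 0 ≤ y i g} ∩ {y | ∀ i, ∀ g ∉ L i, y i g = 0} ∩ {y | ∀ g, ∑ i, y i g ≤ 1} ∩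
      {y | ∀ i, load y i ≤ c} :=
  Set.ext fun _ => ⟨fun h => ⟨⟨⟨h.nonneg, h.eq_zero⟩, h.sum_le_one⟩, h.load_le⟩,
    fun ⟨⟨⟨h₁, h₂⟩, h₃⟩, h₄⟩ => ⟨h₁, h₂, h₃, h₄⟩⟩

lemma convex_setOf_isCappedPartial : Convex ℝ {y | IsCappedPartial c L y} := by
  intro y hy z hz a b ha hb hab
  refine ⟨fun i g => ?_, fun i g hg => ?_, fun g => ?_, fun i => ?_⟩
  · exact convex_Ici (0 : ℝ) (hy.nonneg i g) (hz.nonneg i g) ha hb hab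
  · simp [hy.eq_zero i g hg, hz.eq_zero i g hg]
  · simpa [sum_add_distrib, mul_sum] using
      convex_Iic (1 : ℝ) (hy.sum_le_one g) (hz.sum_le_one g) ha hb hab
  · rw [isLinearMap_load.map_add, isLinearMap_load.map_smul, isLinearMap_load.map_smul]
    exact convex_Iic c (hy.load_le i) (hz.load_le i) ha hb hab

lemma IsCappedPartial.share_le_one (hy : IsCappedPartial c L y) (i : ι) (g : κ) : y i g ≤ 1 :=
  (single_le_sum (fun k _ => hy.nonneg k g) (mem_univ i)).trans (hy.sum_le_one g)

lemma IsCappedPartial.load_le_card (hy : IsCappedPartial c L y) (i : ι) :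
    load y i ≤ Fintype.card κ := by
  simpa [load] using sum_le_sum fun g (_ : g ∈ univ) => hy.share_le_one i g

lemma isCompact_setOf_isCappedPartial : IsCompact {y | IsCappedPartial c L y} := by
  refine (isCompact_Icc (a := (0 : ι → κ → ℝ)) (b := 1)).of_isClosed_subset ?_ fun y hy =>
    ⟨hy.nonneg, hy.share_le_one⟩
  simp only [setOf_isCappedPartial_eq, Set.ofPred_forall, load]
  refine (((?_ : IsClosed _).inter ?_).inter ?_).inter ?_
  all_goals
    repeat refine isClosed_iInter fun _ => ?_
    first
    | exact isClosed_le (by fun_prop) (by fun_prop)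
    | exact isClosed_eq (by fun_prop) (by fun_prop)

lemma exists_isCappedLeximin (hc : 0 ≤ c) (L : ι → Finset κ) : ∃ y, IsCappedLeximin c L y := by
  have hne : {y | IsCappedPartial c L y}.Nonempty :=
    ⟨0, by simp, by simp, by simp, by simp [load, hc]⟩
  have hcont : Continuous (load : (ι → κ → ℝ) → ι → ℝ) := by
    unfold load
    fun_prop
  obtain ⟨_, ⟨y, hy, rfl⟩, hmin⟩ := exists_mem_forall_sum_mul_nonpos (hne.image load)
    (isCompact_setOf_isCappedPartial.image hcont)
    (convex_setOf_isCappedPartial.is_linear_image isLinearMap_load) fun _ => c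
  exact ⟨y, hy, fun z hz => hmin _ (Set.mem_image_of_mem load hz)⟩

section Transfer

variable [DecidableEq ι] [DecidableEq κ]

lemma IsCappedPartial.add_singleShare (hy : IsCappedPartial c L y) {i : ι} {g : κ} (hg : g ∈ L i)
    {ε : ℝ} (hε : 0 ≤ ε) (hsum : ∑ k, y k g + ε ≤ 1) (hload : load y i + ε ≤ c) :
    IsCappedPartial c L (y + singleShare i g ε) := by
  refine ⟨fun k h => ?_, fun k h hk => ?_, fun h => ?_, fun k => ?_⟩
  · have := hy.nonneg k h
    rw [Pi.add_apply, Pi.add_apply, singleShare_apply]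
    split_ifs <;> linarith
  · have : ¬ (k = i ∧ h = g) := fun ⟨hki, hhg⟩ => hk (hki ▸ hhg ▸ hg)
    simp [singleShare_apply, hy.eq_zero k h hk, this]
  · simp only [Pi.add_apply, sum_add_distrib, sum_singleShare]
    split_ifs with hh
    · exact hh ▸ hsum
    · simpa using hy.sum_le_one h
  · rw [isLinearMap_load.map_add, load_singleShare, Pi.add_apply, Pi.single_apply]
    split_ifs with hk
    · exact hk ▸ hload
    · simpa using hy.load_le k

lemma IsCappedPartial.sub_singleShare (hy : IsCappedPartial c L y) {j : ι} {g : κ} {ε : ℝ}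
    (hε : 0 ≤ ε) (hj : ε ≤ y j g) : IsCappedPartial c L (y - singleShare j g ε) := by
  refine ⟨fun k h => ?_, fun k h hk => ?_, fun h => ?_, fun k => ?_⟩
  · rw [Pi.sub_apply, Pi.sub_apply, singleShare_apply]
    split_ifs with hkh
    · rw [hkh.1, hkh.2]
      exact sub_nonneg.mpr hj
    · simpa using hy.nonneg k h
  · have hyk := hy.eq_zero k h hk
    rw [Pi.sub_apply, Pi.sub_apply, singleShare_apply, hyk, zero_sub, neg_eq_zero]
    split_ifs with hkh
    · obtain ⟨rfl, rfl⟩ := hkh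
      exact le_antisymm (hj.trans_eq hyk) hε
    · rfl
  · have := hy.sum_le_one h
    simp only [Pi.sub_apply, sum_sub_distrib, sum_singleShare]
    split_ifs <;> linarith
  · have := hy.load_le k
    rw [isLinearMap_load.map_sub, load_singleShare, Pi.sub_apply, Pi.single_apply]
    split_ifs <;> linarith

end Transfer

namespace IsCappedLeximin

/- Otherwise part of the rest of `g` could be given to `i`. -/
lemma sum_eq_one (hy : IsCappedLeximin c L y) {i : ι} (hi : load y i < c) {g : κ}
    (hg : g ∈ L i) : ∑ k, y k g = 1 := by
  classical
  by_contra hne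
  have hlt : ∑ k, y k g < 1 := (hy.sum_le_one g).lt_of_ne hne
  obtain ⟨ε, hε0, hε⟩ := exists_between (lt_min (sub_pos.mpr hi) (sub_pos.mpr hlt))
  rw [lt_min_iff] at hε
  have hvar := hy.sum_mul_nonpos _ <| hy.add_singleShare hg hε0.le (by linarith) (by linarith)
  have : (c - load y i) * ε ≤ 0 := by
    simpa [isLinearMap_load.map_add, load_singleShare, Pi.single_apply] using hvar
  exact this.not_gt (mul_pos (sub_pos.mpr hi) hε0)

/- Otherwise part of the share of `j` in `g` could be moved to `i`. -/
lemma load_le_load (hy : IsCappedLeximin c L y) {i j : ι} (hi : load y i < c) {g : κ}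
    (hg : g ∈ L i) (hj : 0 < y j g) : load y j ≤ load y i := by
  classical
  obtain ⟨ε, hε0, hε⟩ := exists_between (lt_min (sub_pos.mpr hi) hj)
  rw [lt_min_iff] at hε
  have hsub := hy.sub_singleShare hε0.le hε.2.le
  have hvar := hy.sum_mul_nonpos _ <| hsub.add_singleShare hg hε0.le
    (by simpa [sum_singleShare] using hy.sum_le_one g)
    (by
      rw [isLinearMap_load.map_sub, load_singleShare, Pi.sub_apply, Pi.single_apply]
      split_ifs <;> linarith)
  have load_sub_load (k : ι) : load (y - singleShare j g ε + singleShare i g ε) k - load y k =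
      (Pi.single i ε - Pi.single j ε : ι → ℝ) k := by
    rw [isLinearMap_load.map_add, isLinearMap_load.map_sub, load_singleShare, load_singleShare]
    simp only [Pi.add_apply, Pi.sub_apply]
    ring
  have : (c - load y i) * ε ≤ (c - load y j) * ε := by
    simpa [load_sub_load, mul_sub, sum_sub_distrib, Pi.single_apply] using hvar
  linarith [le_of_mul_le_mul_right this hε0]

end IsCappedLeximin

/-- The part of the item `g` that the partial allocation `y` leaves unassigned. -/
def leftover (y : ι → κ → ℝ) (g : κ) : ℝ := 1 - ∑ i, y i g

/-- The completion of the partial allocation `y` in which the leftover of each item is shared among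
the agents in proportion to their remaining capacities. If no agent has capacity left, the division
by zero returns `0`; this is harmless because nothing is left over then. -/
noncomputable def fill (c : ℝ) (y : ι → κ → ℝ) : ι → κ → ℝ := fun i g =>
  y i g + (c - load y i) / (∑ k, (c - load y k)) * leftover y g

lemma sum_leftover (y : ι → κ → ℝ) : ∑ g, leftover y g = Fintype.card κ - ∑ i, load y i := by
  simp [leftover, load, sum_comm (s := (univ : Finset ι))]

lemma load_fill (c : ℝ) (y : ι → κ → ℝ) (i : ι) : load (fill c y) i =
    load y i + (c - load y i) / (∑ k, (c - load y k)) * ∑ g, leftover y g := by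
  simp [load, fill, sum_add_distrib, mul_sum]

namespace IsCappedPartial

lemma leftover_nonneg (hy : IsCappedPartial c L y) (g : κ) : 0 ≤ leftover y g :=
  sub_nonneg.mpr (hy.sum_le_one g)

lemma slack_nonneg (hy : IsCappedPartial c L y) (i : ι) : 0 ≤ c - load y i :=
  sub_nonneg.mpr (hy.load_le i)

lemma sum_slack_nonneg (hy : IsCappedPartial c L y) : 0 ≤ ∑ i, (c - load y i) :=
  sum_nonneg fun i _ => hy.slack_nonneg i

lemma sum_liked (hy : IsCappedPartial c L y) (i : ι) : ∑ g ∈ L i, y i g = load y i :=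
  sum_subset (subset_univ _) fun g _ hg => hy.eq_zero i g hg

lemma le_fill (hy : IsCappedPartial c L y) (i : ι) (g : κ) : y i g ≤ fill c y i g :=
  le_add_of_nonneg_right <|
    mul_nonneg (div_nonneg (hy.slack_nonneg i) hy.sum_slack_nonneg) (hy.leftover_nonneg g)

lemma fill_nonneg (hy : IsCappedPartial c L y) (i : ι) (g : κ) : 0 ≤ fill c y i g :=
  (hy.nonneg i g).trans (hy.le_fill i g)

lemma load_fill_le (hy : IsCappedPartial c L y) (hc : Fintype.card κ ≤ Fintype.card ι * c)
    (i : ι) : load (fill c y) i ≤ c := by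
  have leftover_le_slack : ∑ g, leftover y g ≤ ∑ k, (c - load y k) := by
    simpa [sum_leftover] using hc
  have : (c - load y i) / (∑ k, (c - load y k)) * ∑ g, leftover y g ≤ c - load y i := by
    rw [div_mul_eq_mul_div, mul_div_assoc]
    exact mul_le_of_le_one_right (hy.slack_nonneg i)
      (div_le_one_of_le₀ leftover_le_slack hy.sum_slack_nonneg)
  rw [load_fill]
  linarith

lemma sum_fill (hy : IsCappedPartial c L y) (hc : Fintype.card κ ≤ Fintype.card ι * c) (g : κ) :
    ∑ i, fill c y i g = 1 := by
  have leftover_le_slack : leftover y g ≤ ∑ k, (c - load y k) :=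
    (single_le_sum (fun h _ => hy.leftover_nonneg h) (mem_univ g)).trans
      (by simpa [sum_leftover] using hc)
  have absorbed :
      (∑ k, (c - load y k)) / (∑ k, (c - load y k)) * leftover y g = leftover y g := by
    obtain h | h := eq_or_ne (∑ k, (c - load y k)) 0
    · rw [h, div_zero, zero_mul]
      exact le_antisymm (hy.leftover_nonneg g) (h ▸ leftover_le_slack)
    · rw [div_self h, one_mul]
  simp only [fill]
  rw [sum_add_distrib, ← sum_mul, ← sum_div, absorbed, leftover, add_sub_cancel]

lemma load_fill_eq (hy : IsCappedPartial c L y) (hc : Fintype.card ι * c = Fintype.card κ)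
    (i : ι) : load (fill c y) i = c := by
  have total : ∑ i, load (fill c y) i = ∑ _i : ι, c := by
    simp only [load]
    rw [sum_comm]
    simp [hy.sum_fill hc.ge, hc]
  exact (sum_eq_sum_iff_of_le fun i _ => hy.load_fill_le hc.ge i).mp total i (mem_univ i)

lemma mem_of_fill_pos_of_load_eq (hy : IsCappedPartial c L y) {i : ι} (hi : load y i = c) {g : κ}
    (hg : 0 < fill c y i g) : g ∈ L i := by
  by_contra h
  simp [fill, hi, hy.eq_zero i g h] at hg

end IsCappedPartial

namespace IsCappedLeximin

lemma leftover_eq_zero (hy : IsCappedLeximin c L y) {i : ι} (hi : load y i < c) {g : κ}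
    (hg : g ∈ L i) : leftover y g = 0 :=
  sub_eq_zero.mpr (hy.sum_eq_one hi hg).symm

lemma sum_liked_fill (hy : IsCappedLeximin c L y) (i : ι) :
    ∑ g ∈ L i, fill c y i g = load y i := by
  rw [← hy.sum_liked i]
  refine sum_congr rfl fun g hg => add_eq_left.mpr ?_
  obtain hi | hi := (hy.load_le i).lt_or_eq
  · rw [hy.leftover_eq_zero hi hg, mul_zero]
  · rw [hi, sub_self, zero_div, zero_mul]

lemma mem_and_load_le_of_fill_pos (hy : IsCappedLeximin c L y) {i j : ι} (hi : load y i < c)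
    {g : κ} (hg : g ∈ L i) (hj : 0 < fill c y j g) : g ∈ L j ∧ load y j ≤ load y i := by
  have hyj : 0 < y j g := by simpa [fill, hy.leftover_eq_zero hi hg] using hj
  exact ⟨by_contra fun h => hyj.ne' (hy.eq_zero j g h), hy.load_le_load hi hg hyj⟩

/- The items liked by the agents of `W` are completely assigned, and only to agents of `W`. -/
lemma sum_sum_liked_le (hy : IsCappedLeximin c L y) {W : Finset ι}
    (hW : ∀ i ∈ W, load y i < c) (hdown : ∀ i ∈ W, ∀ j, load y j ≤ load y i → j ∈ W)
    {z : ι → κ → ℝ} (hz0 : ∀ i g, 0 ≤ z i g) (hz1 : ∀ g, ∑ i, z i g ≤ 1) :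
    ∑ i ∈ W, ∑ g ∈ L i, z i g ≤ ∑ i ∈ W, load y i := by
  classical
  have item_le (g : κ) : ∑ i ∈ W with g ∈ L i, z i g ≤ ∑ i ∈ W, y i g := by
    obtain hempty | ⟨i, hi⟩ := (W.filter fun i => g ∈ L i).eq_empty_or_nonempty
    · rw [hempty, sum_empty]
      exact sum_nonneg fun i _ => hy.nonneg i g
    · obtain ⟨hiW, hg⟩ := mem_filter.mp hi
      have owners_subset : ∀ j ∉ W, y j g = 0 := fun j hj => by
        by_contra hne
        exact hj (hdown i hiW j (hy.load_le_load (hW i hiW) hg ((hy.nonneg j g).lt_of_ne' hne)))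
      calc ∑ i ∈ W with g ∈ L i, z i g ≤ ∑ i, z i g :=
            sum_le_univ_sum_of_nonneg fun i => hz0 i g
        _ ≤ ∑ i, y i g := (hz1 g).trans_eq (hy.sum_eq_one (hW i hiW) hg).symm
        _ = ∑ i ∈ W, y i g := (sum_subset (subset_univ W) fun j _ => owners_subset j).symm
  calc ∑ i ∈ W, ∑ g ∈ L i, z i g = ∑ g, ∑ i ∈ W with g ∈ L i, z i g :=
        sum_comm' (by simp)
    _ ≤ ∑ g, ∑ i ∈ W, y i g := sum_le_sum fun g _ => item_le g
    _ = ∑ i ∈ W, load y i := sum_comm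

end IsCappedLeximin

section Manipulation

variable {L' : ι → Finset κ} {y' z : ι → κ → ℝ} {i k : ι} {θ : ℝ}

/- The allocation `z` does not improve on `y` for the agents below the threshold `θ`, and neither
does `y` improve on `y'`. Only the agent `i` changes her liked items, so for each agent the sum of
the two improvements is nonnegative, and all of them have to vanish. -/
lemma IsCappedLeximin.improvement_nonpos (hy : IsCappedLeximin c L y)
    (hy' : IsCappedLeximin c L' y') (hL : ∀ k ≠ i, L' k = L k) (hz0 : ∀ k g, 0 ≤ z k g)
    (hz1 : ∀ g, ∑ k, z k g ≤ 1) (hz : ∀ k ≠ i, load y' k ≤ ∑ g ∈ L k, z k g)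
    (hzi : load y i < θ → load y i ≤ ∑ g ∈ L i, z i g) (hθc : θ ≤ c) (hθ : θ ≤ load y' i) (k : ι) :
    (if load y k < θ then ∑ g ∈ L k, z k g - load y k else 0) +
      (if load y' k < θ then load y k - load y' k else 0) ≤ 0 := by
  have z_not_better : ∑ k with load y k < θ, (∑ g ∈ L k, z k g - load y k) ≤ 0 := by
    rw [sum_sub_distrib, sub_nonpos]
    refine hy.sum_sum_liked_le (fun k hk => ?_) (fun k hk j hj => ?_) hz0 hz1
    · exact (mem_filter.mp hk).2.trans_le hθc
    · exact mem_filter.mpr ⟨mem_univ j, hj.trans_lt (mem_filter.mp hk).2⟩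
  have y_not_better : ∑ k with load y' k < θ, (load y k - load y' k) ≤ 0 := by
    rw [sum_sub_distrib, sub_nonpos]
    have agree (k : ι) (hk : k ∈ univ.filter fun k => load y' k < θ) :
        load y k = ∑ g ∈ L' k, y k g := by
      rw [hL k (by rintro rfl; exact (mem_filter.mp hk).2.not_ge hθ), hy.sum_liked]
    rw [sum_congr rfl agree]
    refine hy'.sum_sum_liked_le (fun k hk => ?_) (fun k hk j hj => ?_) hy.nonneg hy.sum_le_one
    · exact (mem_filter.mp hk).2.trans_le hθc
    · exact mem_filter.mpr ⟨mem_univ j, hj.trans_lt (mem_filter.mp hk).2⟩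
  rw [sum_filter] at z_not_better y_not_better
  refine (single_le_sum (fun k _ => ?_) (mem_univ k)).trans
    (sum_add_distrib.trans_le (add_nonpos z_not_better y_not_better))
  obtain rfl | hki := eq_or_ne k i
  · rw [if_neg hθ.not_gt, add_zero]
    split_ifs with h
    · exact sub_nonneg.mpr (hzi h)
    · rfl
  · have := hz k hki
    split_ifs <;> linarith

lemma IsCappedLeximin.sum_liked_fill_le_of_load_lt (hy : IsCappedLeximin c L y)
    (hy' : IsCappedLeximin c L' y') (hL : ∀ k ≠ i, L' k = L k)
    (hc : Fintype.card κ ≤ Fintype.card ι * c) (hi : load y i < load y' i) :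
    ∑ g ∈ L i, fill c y' i g ≤ load y i := by
  by_contra! hlt
  have := hy.improvement_nonpos hy' hL hy'.fill_nonneg (fun g => (hy'.sum_fill hc g).le)
    (fun k hk => (hL k hk ▸ hy'.sum_liked_fill k).ge) (fun _ => hlt.le) (hy'.load_le i) le_rfl i
  rw [if_pos hi, if_neg (lt_irrefl _)] at this
  linarith

lemma IsCappedLeximin.load_le_of_loses (hy : IsCappedLeximin c L y)
    (hy' : IsCappedLeximin c L' y') (hL : ∀ k ≠ i, L' k = L k) (hi : load y' i ≤ load y i)
    (hk : load y' k < load y k) : load y' i ≤ load y' k := by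
  by_contra! hlt
  have := hy.improvement_nonpos hy' hL (θ := min (load y' i) (load y k)) hy'.nonneg
    hy'.sum_le_one (fun k hk => (hL k hk ▸ hy'.sum_liked k).ge)
    (fun h => absurd (h.trans_le (min_le_left _ _)) hi.not_gt)
    ((min_le_left _ _).trans (hy'.load_le i)) (min_le_left _ _) k
  rw [if_neg (min_le_right _ _).not_gt, if_pos (lt_min hlt hk)] at this
  linarith

lemma IsCappedLeximin.sum_liked_leftover_le [DecidableEq ι] (hy : IsCappedLeximin c L y)
    (hy' : IsCappedLeximin c L' y') (hL : ∀ k ≠ i, L' k = L k) (hi : load y i < c) :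
    ∑ g ∈ L i, leftover y' g ≤ (load y i - ∑ g ∈ L i, y' i g) +
      ∑ k ∈ univ.erase i with load y k ≤ load y i, (load y k - load y' k) := by
  let z : ι → κ → ℝ := y' + Pi.single i (leftover y')
  have hz0 (k : ι) (g : κ) : 0 ≤ z k g :=
    add_nonneg (hy'.nonneg k g) <| by
      obtain rfl | h := eq_or_ne k i <;> simp [hy'.leftover_nonneg, *]
  have hz1 (g : κ) : ∑ k, z k g ≤ 1 := by
    simp [z, sum_add_distrib, Pi.single_apply, ite_apply, leftover]
  have hzi : ∑ g ∈ L i, z i g = ∑ g ∈ L i, y' i g + ∑ g ∈ L i, leftover y' g := by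
    simp [z, sum_add_distrib]
  have hzk (k : ι) (hk : k ≠ i) : ∑ g ∈ L k, z k g = load y' k := by
    simpa [z, hk] using hL k hk ▸ hy'.sum_liked k
  have hall := hy.sum_sum_liked_le (W := univ.filter fun k => load y k ≤ load y i)
    (fun k hk => (mem_filter.mp hk).2.trans_lt hi)
    (fun k hk j hj => mem_filter.mpr ⟨mem_univ j, hj.trans (mem_filter.mp hk).2⟩) hz0 hz1
  rw [← insert_erase (mem_univ i), filter_insert, if_pos le_rfl,
    sum_insert (by simp), sum_insert (by simp), hzi, sum_congr rfl fun k hk =>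
      hzk k (ne_of_mem_erase (mem_filter.mp hk).1)] at hall
  rw [sum_sub_distrib]
  linarith

lemma sub_mul_sub_le_sub_mul_sub {a b c s t w : ℝ} (hwa : w ≤ a) (hab : a ≤ b) (hbc : b ≤ c)
    (hts : t ≤ s) (hsc : s ≤ c) : (c - a) * (t - b) ≤ (s - w) * (c - b) := by
  have hac : a ≤ c := hab.trans hbc
  calc (c - a) * (t - b) ≤ (c - a) * (s - b) := by gcongr
    _ ≤ (s - a) * (c - b) := by linarith [mul_nonneg (sub_nonneg.mpr hsc) (sub_nonneg.mpr hab)]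
    _ ≤ (s - w) * (c - b) := by gcongr

/- An agent `k` who loses by the misreport of `i` has at least the load of `i` under `y'`, so her
loss is bounded in terms of her slack. -/
lemma IsCappedLeximin.slack_mul_loss_le (hy : IsCappedLeximin c L y) (hy' : IsCappedLeximin c L' y')
    (hL : ∀ k ≠ i, L' k = L k) (hi : load y' i ≤ load y i) (hk : load y k ≤ load y i) :
    (c - load y' i) * (load y k - load y' k) ≤
      (load y i - ∑ g ∈ L i, y' i g) * (c - load y' k) := by
  have liked_le_load : ∑ g ∈ L i, y' i g ≤ load y' i :=
    sum_le_univ_sum_of_nonneg (hy'.nonneg i)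
  obtain hk' | hk' := le_or_gt (load y k) (load y' k)
  · exact (mul_nonpos_of_nonneg_of_nonpos (hy'.slack_nonneg i) (sub_nonpos.mpr hk')).trans
      (mul_nonneg (sub_nonneg.mpr (liked_le_load.trans hi)) (hy'.slack_nonneg k))
  · exact sub_mul_sub_le_sub_mul_sub liked_le_load (hy.load_le_of_loses hy' hL hi hk')
      (hy'.load_le k) hk (hy.load_le i)

lemma IsCappedLeximin.slack_mul_sum_liked_leftover_le (hy : IsCappedLeximin c L y)
    (hy' : IsCappedLeximin c L' y') (hL : ∀ k ≠ i, L' k = L k) (hi : load y i < c)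
    (hle : load y' i ≤ load y i) : (c - load y' i) * ∑ g ∈ L i, leftover y' g ≤
      (load y i - ∑ g ∈ L i, y' i g) * ∑ k, (c - load y' k) := by
  classical
  have gain_nonneg : 0 ≤ load y i - ∑ g ∈ L i, y' i g :=
    sub_nonneg.mpr ((sum_le_univ_sum_of_nonneg (hy'.nonneg i)).trans hle)
  set gain := load y i - ∑ g ∈ L i, y' i g
  have exchange : ∑ k ∈ univ.erase i with load y k ≤ load y i,
      (c - load y' i) * (load y k - load y' k) ≤ ∑ k ∈ univ.erase i, gain * (c - load y' k) :=
    (sum_le_sum fun k hk => hy.slack_mul_loss_le hy' hL hle (mem_filter.mp hk).2).trans <|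
      sum_le_sum_of_subset_of_nonneg (filter_subset _ _) fun k _ _ =>
        mul_nonneg gain_nonneg (hy'.slack_nonneg k)
  calc (c - load y' i) * ∑ g ∈ L i, leftover y' g
      ≤ (c - load y' i) * (gain +
          ∑ k ∈ univ.erase i with load y k ≤ load y i, (load y k - load y' k)) :=
        mul_le_mul_of_nonneg_left (hy.sum_liked_leftover_le hy' hL hi) (hy'.slack_nonneg i)
    _ = gain * (c - load y' i) + ∑ k ∈ univ.erase i with load y k ≤ load y i,
          (c - load y' i) * (load y k - load y' k) := by
        rw [mul_add, mul_sum, mul_comm]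
    _ ≤ gain * (c - load y' i) + ∑ k ∈ univ.erase i, gain * (c - load y' k) := by gcongr
    _ = gain * ∑ k, (c - load y' k) := by
        rw [← mul_sum, ← mul_add, add_sum_erase _ (fun k => c - load y' k) (mem_univ i)]

lemma IsCappedLeximin.sum_liked_fill_le_of_load_le (hy : IsCappedLeximin c L y)
    (hy' : IsCappedLeximin c L' y') (hL : ∀ k ≠ i, L' k = L k) (hi : load y i < c)
    (hle : load y' i ≤ load y i) : ∑ g ∈ L i, fill c y' i g ≤ load y i := by
  have gain_nonneg : 0 ≤ load y i - ∑ g ∈ L i, y' i g :=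
    sub_nonneg.mpr ((sum_le_univ_sum_of_nonneg (hy'.nonneg i)).trans hle)
  have share_le : (c - load y' i) / (∑ k, (c - load y' k)) * ∑ g ∈ L i, leftover y' g ≤
      load y i - ∑ g ∈ L i, y' i g := by
    rw [div_mul_eq_mul_div]
    exact div_le_of_le_mul₀ hy'.sum_slack_nonneg gain_nonneg
      (hy.slack_mul_sum_liked_leftover_le hy' hL hi hle)
  simp only [fill]
  rw [sum_add_distrib, ← mul_sum]
  linarith

theorem IsCappedLeximin.sum_liked_fill_le (hy : IsCappedLeximin c L y)
    (hy' : IsCappedLeximin c L' y') (hL : ∀ k ≠ i, L' k = L k)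
    (hc : Fintype.card κ ≤ Fintype.card ι * c) : ∑ g ∈ L i, fill c y' i g ≤ load y i := by
  obtain hi | hi := (hy.load_le i).lt_or_eq
  · obtain hlt | hle := lt_or_ge (load y i) (load y' i)
    · exact hy.sum_liked_fill_le_of_load_lt hy' hL hc hlt
    · exact hy.sum_liked_fill_le_of_load_le hy' hL hi hle
  · calc ∑ g ∈ L i, fill c y' i g ≤ load (fill c y') i :=
          sum_le_univ_sum_of_nonneg (hy'.fill_nonneg i)
      _ ≤ c := hy'.load_fill_le hc i
      _ = load y i := hi.symm

end Manipulation

end Leximin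

section EnvyFreeness

variable {ι κ : Type*} [Fintype ι] [Fintype κ] [DecidableEq ι] [DecidableEq κ] {c : ℝ}
  {L : ι → Finset κ} {y : ι → κ → ℝ} {a : κ → ι}

lemma IsRounding.card_bundle_le_ceil (ha : IsRounding L (fill c y) a)
    (hy : IsCappedPartial c L y) (hc : Fintype.card κ ≤ Fintype.card ι * c) (i : ι) :
    (#(bundle a i) : ℤ) ≤ ⌈c⌉ :=
  (ha.card_bundle i).2.trans (Int.ceil_mono (hy.load_fill_le hc i))

lemma IsRounding.card_bundle_le_card_bundle_add_one (ha : IsRounding L (fill c y) a)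
    (hy : IsCappedPartial c L y) (hc : Fintype.card ι * c = Fintype.card κ) (i j : ι) :
    #(bundle a j) ≤ #(bundle a i) + 1 := by
  have floor_le : ⌊c⌋ ≤ #(bundle a i) :=
    (congrArg Int.floor (hy.load_fill_eq hc i)).ge.trans (ha.card_bundle i).1
  have := ha.card_bundle_le_ceil hy hc.ge j
  have := Int.ceil_le_floor_add_one c
  lia

lemma IsRounding.card_inter_liked_le_add_one (ha : IsRounding L (fill c y) a)
    (hy : IsCappedLeximin c L y) (hc : Fintype.card κ ≤ Fintype.card ι * c) (i j : ι) :
    #(bundle a j ∩ L i) ≤ #(bundle a i ∩ L i) + 1 := by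
  have floor_le : ⌊load y i⌋ ≤ #(bundle a i ∩ L i) :=
    hy.sum_liked_fill i ▸ (ha.card_liked i).1
  suffices (#(bundle a j ∩ L i) : ℤ) ≤ ⌈load y i⌉ by
    have := Int.ceil_le_floor_add_one (load y i)
    lia
  obtain hi | hi := (hy.load_le i).lt_or_eq
  · have owner_likes (g : κ) (hg : g ∈ bundle a j ∩ L i) :
        g ∈ L j ∧ load y j ≤ load y i := by
      obtain ⟨hgj, hgi⟩ := mem_inter.mp hg
      obtain rfl : a g = j := by simpa [bundle] using hgj
      exact hy.mem_and_load_le_of_fill_pos hi hgi (ha.share_pos g)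
    obtain hempty | ⟨g, hg⟩ := (bundle a j ∩ L i).eq_empty_or_nonempty
    · rw [hempty, card_empty, Nat.cast_zero]
      exact Int.ceil_nonneg (sum_nonneg fun g _ => hy.nonneg i g)
    · calc (#(bundle a j ∩ L i) : ℤ) ≤ #(bundle a j ∩ L j) := mod_cast card_le_card fun h hh =>
            mem_inter.mpr ⟨mem_of_mem_inter_left hh, (owner_likes h hh).1⟩
        _ ≤ ⌈load y j⌉ := hy.sum_liked_fill j ▸ (ha.card_liked j).2
        _ ≤ ⌈load y i⌉ := Int.ceil_mono (owner_likes g hg).2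
  · rw [hi]
    exact le_trans (mod_cast card_le_card inter_subset_left)
      (ha.card_bundle_le_ceil hy.toIsCappedPartial hc j)

end EnvyFreeness

section Bivalued

variable {κ : Type*} [DecidableEq κ] {p q : ℝ} {v : κ → ℝ}

lemma exists_subset_card_sdiff_eq_sub_one (B L : Finset κ) :
    ∃ S ⊆ B, #S ≤ 1 ∧ #(B \ S) = #B - 1 ∧ #((B \ S) ∩ L) = #(B ∩ L) - 1 := by
  obtain hBL | ⟨g, hg⟩ := (B ∩ L).eq_empty_or_nonempty
  · obtain ⟨S, hSB, hS⟩ := exists_subset_card_eq (min_le_left #B 1)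
    refine ⟨S, hSB, hS.trans_le (min_le_right _ _), ?_, ?_⟩
    · rw [card_sdiff_of_subset hSB, hS]
      lia
    · rw [sdiff_inter_right_comm, hBL, empty_sdiff, card_empty]
  · refine ⟨{g}, by simpa using mem_of_mem_inter_left hg, by simp, ?_, ?_⟩
    · rw [sdiff_singleton_eq_erase, card_erase_of_mem (mem_of_mem_inter_left hg)]
    · rw [sdiff_inter_right_comm, sdiff_singleton_eq_erase, card_erase_of_mem hg]

/-- The items to which the valuation `v` assigns the higher value `p`. -/
noncomputable def likes [Fintype κ] (p : ℝ) (v : κ → ℝ) : Finset κ := {g | v g = p}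

variable [Fintype κ]

lemma sum_bivalued_mul (hv : ∀ g, v g = p ∨ v g = q) (B : Finset κ) (x : κ → ℝ) :
    ∑ g ∈ B, v g * x g = q * ∑ g ∈ B, x g + (p - q) * ∑ g ∈ B ∩ likes p v, x g := by
  have value (g : κ) : v g = q + (p - q) * if v g = p then 1 else 0 := by
    obtain h | h := hv g <;> by_cases hpq : q = p <;> simp [h, hpq]
  have : B ∩ likes p v = B.filter fun g => v g = p := by
    simp [likes, inter_filter]
  rw [this, sum_filter, mul_sum, mul_sum, ← sum_add_distrib]
  refine sum_congr rfl fun g _ => ?_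
  conv_lhs => rw [value g]
  split_ifs <;> ring

lemma sum_bivalued (hv : ∀ g, v g = p ∨ v g = q) (B : Finset κ) :
    ∑ g ∈ B, v g = q * #B + (p - q) * #(B ∩ likes p v) := by
  simpa using sum_bivalued_mul hv B 1

lemma exists_sum_sdiff_le_of_bivalued (hv : ∀ g, v g = p ∨ v g = q) (hq : 0 ≤ q) (hpq : q ≤ p)
    {A B : Finset κ} (hcard : q = 0 ∨ #B ≤ #A + 1)
    (hliked : #(B ∩ likes p v) ≤ #(A ∩ likes p v) + 1) :
    ∃ S ⊆ B, #S ≤ 1 ∧ ∑ g ∈ B \ S, v g ≤ ∑ g ∈ A, v g := by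
  obtain ⟨S, hSB, hS, hcardS, hlikedS⟩ := exists_subset_card_sdiff_eq_sub_one B (likes p v)
  refine ⟨S, hSB, hS, ?_⟩
  rw [sum_bivalued hv, sum_bivalued hv]
  refine add_le_add ?_ (mul_le_mul_of_nonneg_left (mod_cast by lia) (sub_nonneg.mpr hpq))
  obtain rfl | hBA := hcard
  · simp
  · exact mul_le_mul_of_nonneg_left (mod_cast by lia) hq

end Bivalued

section Profiles

variable {n m : ℕ} {v : Fin n → Fin m → ℝ} {x : Fin n → Fin m → ℝ}

lemma ef1Realizable_of_mem_convexHull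
    (hx : x ∈ convexHull ℝ (assignmentMatrix '' {a | EFpm univ v (bundle a) 0 1})) :
    EF1Realizable v x := by
  obtain ⟨T, _, w, z, hw0, hw1, hz, hsum⟩ := mem_convexHull_iff_exists_fintype.mp hx
  choose a ha haz using hz
  let e := Fintype.equivFin T
  refine ⟨Fintype.card T, w ∘ e.symm, fun k => bundle (a (e.symm k)), fun k => hw0 _, ?_,
    fun k => ⟨fun i => subset_univ _, fun i j hij => ?_, fun g _ => ?_⟩, fun k => ha _,
    fun i g => ?_⟩
  · exact (e.symm.sum_comp w).trans hw1
  · exact disjoint_filter.mpr fun g _ hgi hgj => hij (hgi.symm.trans hgj)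
  · exact ⟨a (e.symm k) g, by simp [bundle]⟩
  · refine (e.symm.sum_comp fun t => if g ∈ bundle (a t) i then w t else 0).trans ?_
    simp [← hsum, ← haz, bundle, assignmentMatrix]

/- The weights `w` turn the valuations into prices at which every item is allocated to its highest
bidders. -/
lemma fracParetoOptimal_of_weights {w : Fin n → ℝ} (hw : ∀ i, 0 < w i)
    (hx0 : ∀ i g, 0 ≤ x i g) (hx1 : ∀ g, ∑ i, x i g = 1)
    (hmax : ∀ i j g, 0 < x i g → w j * v j g ≤ w i * v i g) : FracParetoOptimal v x := by
  rintro ⟨y, hy0, hy1, hle, i, hlt⟩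
  let price (g : Fin m) : ℝ := ∑ i, w i * v i g * x i g
  have le_price (j : Fin n) (g : Fin m) : w j * v j g ≤ price g :=
    calc w j * v j g = ∑ i, w j * v j g * x i g := by rw [← mul_sum, hx1, mul_one]
      _ ≤ price g := sum_le_sum fun i _ => by
        obtain h | h := (hx0 i g).lt_or_eq
        · exact mul_le_mul_of_nonneg_right (hmax i j g h) h.le
        · simp [← h]
  have welfare_eq (z : Fin n → Fin m → ℝ) :
      ∑ i, w i * ∑ g, v i g * z i g = ∑ g, ∑ i, w i * v i g * z i g := by
    rw [sum_comm]
    simp only [mul_sum, mul_assoc]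
  have welfare_le : ∑ i, w i * ∑ g, v i g * y i g ≤ ∑ i, w i * ∑ g, v i g * x i g := by
    rw [welfare_eq, welfare_eq]
    refine sum_le_sum fun g _ => ?_
    calc ∑ i, w i * v i g * y i g ≤ ∑ i, price g * y i g :=
          sum_le_sum fun i _ => mul_le_mul_of_nonneg_right (le_price i g) (hy0 i g)
      _ = price g := by rw [← mul_sum, hy1, mul_one]
  refine welfare_le.not_gt (sum_lt_sum (fun k _ => ?_) ⟨i, mem_univ i, ?_⟩)
  · exact mul_le_mul_of_nonneg_left (hle k) (hw k).le
  · exact mul_lt_mul_of_pos_left hlt (hw i)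

variable {p q c : ℝ} {y : Fin n → Fin m → ℝ}

lemma IsCappedLeximin.fracParetoOptimal_fill (hy : IsCappedLeximin c (fun i => likes p (v i)) y)
    (hv : ∀ i g, v i g = p ∨ v i g = q) (hq : 0 ≤ q) (hpq : q < p) (hc : m ≤ n * c)
    (hsat : ∀ i, load y i = c → 0 < q) : FracParetoOptimal v (fill c y) := by
  have hp : 0 < p := hq.trans_lt hpq
  have hc' : (Fintype.card (Fin m) : ℝ) ≤ Fintype.card (Fin n) * c := by simpa using hc
  let w (i : Fin n) : ℝ := if load y i < c then p else q
  refine fracParetoOptimal_of_weights (w := w) (fun i => ?_) hy.fill_nonneg (hy.sum_fill hc')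
    fun i j g hg => ?_
  · simp only [w]
    split_ifs with hi
    · exact hp
    · exact hsat i ((hy.load_le i).eq_of_not_lt hi)
  have le_winner : q * p ≤ w i * v i g := by
    by_cases hi : load y i < c
    · have hqv : q ≤ v i g := (hv i g).elim (fun h => h ▸ hpq.le) ge_of_eq
      simpa [w, hi, mul_comm q p] using mul_le_mul_of_nonneg_left hqv hp.le
    · have hig := hy.mem_of_fill_pos_of_load_eq ((hy.load_le i).eq_of_not_lt hi) hg
      exact (by simp_all [w, likes] : q * p = w i * v i g).le
  by_cases hj : load y j < c
  · obtain hjg | hjg := hv j g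
    · obtain ⟨hig, hle⟩ := hy.mem_and_load_le_of_fill_pos hj (by simpa [likes] using hjg) hg
      have hi : load y i < c := hle.trans_lt hj
      exact (by simp_all [w, likes] : w j * v j g = w i * v i g).le
    · exact (by simp [w, hj, hjg, mul_comm] : w j * v j g = q * p).trans_le le_winner
  · have hvp : v j g ≤ p := (hv j g).elim le_of_eq fun h => h ▸ hpq.le
    exact le_trans (by simpa [w, hj] using mul_le_mul_of_nonneg_left hvp hq) le_winner

lemma IsCappedLeximin.ef1Realizable_fill (hy : IsCappedLeximin c (fun i => likes p (v i)) y)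
    (hv : ∀ i g, v i g = p ∨ v i g = q) (hq : 0 ≤ q) (hpq : q ≤ p) (hc : m ≤ n * c)
    (hcq : q = 0 ∨ n * c = m) : EF1Realizable v (fill c y) := by
  have hc' : (Fintype.card (Fin m) : ℝ) ≤ Fintype.card (Fin n) * c := by simpa using hc
  refine ef1Realizable_of_mem_convexHull (convexHull_mono (Set.image_mono fun a ha i j => ?_)
    (mem_convexHull_isRounding (fun i => likes p (v i)) hy.fill_nonneg (hy.sum_fill hc')))
  obtain ⟨S, hSB, hS, hle⟩ := exists_sum_sdiff_le_of_bivalued (hv i) hq hpq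
    (A := bundle a i) (B := bundle a j)
    (hcq.imp_right fun h =>
      ha.card_bundle_le_card_bundle_add_one hy.toIsCappedPartial (by simpa) i j)
    (ha.card_inter_liked_le_add_one hy hc' i j)
  exact ⟨∅, S, empty_subset _, disjoint_empty_left _, card_empty.le, hSB, hS, by simpa using hle⟩

lemma IsCappedLeximin.utility_fill_le (hy : IsCappedLeximin c (fun i => likes p (v i)) y)
    {v' y' : Fin n → Fin m → ℝ} (hy' : IsCappedLeximin c (fun i => likes p (v' i)) y') {i : Fin n}
    (hv' : ∀ k ≠ i, v' k = v k) (hv : ∀ g, v i g = p ∨ v i g = q) (hpq : q ≤ p)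
    (hc : m ≤ n * c) (hcq : q = 0 ∨ n * c = m) :
    ∑ g, v i g * fill c y' i g ≤ ∑ g, v i g * fill c y i g := by
  have liked_le : ∑ g ∈ likes p (v i), fill c y' i g ≤ ∑ g ∈ likes p (v i), fill c y i g :=
    (hy.sum_liked_fill_le hy' (fun k hk => by rw [hv' k hk]) (by simpa)).trans_eq
      (hy.sum_liked_fill i).symm
  rw [sum_bivalued_mul hv, sum_bivalued_mul hv, univ_inter]
  refine add_le_add ?_ (mul_le_mul_of_nonneg_left liked_le (sub_nonneg.mpr hpq))
  obtain rfl | hnc := hcq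
  · simp
  · exact (congrArg (q * ·) ((hy'.load_fill_eq (by simpa) i).trans
      (hy.load_fill_eq (by simpa) i).symm)).le

lemma exists_capacity (hn : 1 ≤ n) (m : ℕ) (hq : 0 ≤ q) :
    ∃ c : ℝ, 0 ≤ c ∧ m ≤ n * c ∧ (q = 0 ∨ n * c = m) ∧ (q = 0 → m < c) := by
  have hn' : (1 : ℝ) ≤ n := mod_cast hn
  obtain rfl | hq := hq.eq_or_lt
  · exact ⟨m + 1, by positivity, by nlinarith [m.cast_nonneg (α := ℝ)], by simp, by simp⟩
  · have hmn : (n : ℝ) * (m / n) = m := mul_div_cancel₀ _ (by positivity)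
    exact ⟨m / n, by positivity, hmn.ge, Or.inr hmn, fun h => absurd h hq.ne'⟩

end Profiles

/-- For bi-valued valuations (every item worth `p` or `q`, where `p > q ≥ 0`) there is a
fractional allocation rule that is truthful, always Pareto-optimal among fractional
allocations, and always EF1-realizable. -/
theorem exists_truthful_EF1_PO_rule_bivalued (p q : ℝ) (hq : 0 ≤ q) (hpq : q < p)
    (n m : ℕ) (hn : 1 ≤ n) :
    ∃ F : (Fin n → Fin m → ℝ) → (Fin n → Fin m → ℝ),
      -- F outputs fractional allocations on bi-valued profiles
      (∀ val : Fin n → Fin m → ℝ, (∀ i g, val i g = p ∨ val i g = q) →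
        (∀ i g, 0 ≤ F val i g) ∧ (∀ g, ∑ i, F val i g = 1)) ∧
      -- truthfulness on bi-valued profiles
      (∀ val : Fin n → Fin m → ℝ, (∀ i g, val i g = p ∨ val i g = q) →
        ∀ i : Fin n, ∀ v' : Fin m → ℝ, (∀ g, v' g = p ∨ v' g = q) →
          ∑ g, val i g * F (Function.update val i v') i g ≤
            ∑ g, val i g * F val i g) ∧
      -- Pareto-optimality of the output among fractional allocations
      (∀ val : Fin n → Fin m → ℝ, (∀ i g, val i g = p ∨ val i g = q) →
        FracParetoOptimal val (F val)) ∧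
      -- EF1-realizability of the output
      (∀ val : Fin n → Fin m → ℝ, (∀ i g, val i g = p ∨ val i g = q) →
        EF1Realizable val (F val)) := by
  obtain ⟨c, hc0, hc, hcq, hcm⟩ := exists_capacity hn m hq
  choose Y hY using exists_isCappedLeximin (ι := Fin n) (κ := Fin m) hc0
  have hL (val : Fin n → Fin m → ℝ) := hY fun i => likes p (val i)
  refine ⟨fun val => fill c (Y fun i => likes p (val i)), fun val _ => ?_,
    fun val hval i v' _ => ?_, fun val hval => ?_, fun val hval => ?_⟩
  · exact ⟨(hL val).fill_nonneg, (hL val).sum_fill (by simpa)⟩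
  · exact (hL val).utility_fill_le (hL (Function.update val i v'))
      (fun k hk => Function.update_of_ne hk v' val) (hval i) hpq.le hc hcq
  · refine (hL val).fracParetoOptimal_fill hval hq hpq hc fun i hi => hq.lt_of_ne' fun hq0 => ?_
    exact (hi ▸ (hL val).load_le_card i).not_gt (by simpa using hcm hq0)
  · exact (hL val).ef1Realizable_fill hval hq hpq.le hc hcq
end

section
/- Consider two agents and six items g_1,…,g_6 with additive valuations v_1 = (2,2,1,1,1,1) and v_2 = (1,1,1,1,1,1), and let v'_1 agree with v_1 except that v'_1(g_3) = 2. Then: (i) the unique fractional allocation maximizing the Nash welfare (the product of the two agents' utilities) for the profile (v_1, v_2) is integral and gives agent 1 exactly {g_1, g_2}; (ii) the unique Nash-welfare-maximizing fractional allocation for the profile (v'_1, v_2) is integral and gives agent 1 exactly {g_1, g_2, g_3}; and hence agent 1's true utility is strictly larger under the misreport (5 versus 4), so the maximum Nash welfare rule is not truthful even for bi-valued valuations. -/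
open Finset

/-- A fractional allocation of six items to two agents. -/
def ValidFrac6 (x : Fin 2 → Fin 6 → ℝ) : Prop :=
  (∀ i g, 0 ≤ x i g) ∧ ∀ g, x 0 g + x 1 g = 1

/-- The Nash welfare (product of the two agents' utilities) of a fractional allocation. -/
def NW6 (v1 v2 : Fin 6 → ℝ) (x : Fin 2 → Fin 6 → ℝ) : ℝ :=
  (∑ g, v1 g * x 0 g) * (∑ g, v2 g * x 1 g)

/-- Agent 1's true valuation. -/
def v1true : Fin 6 → ℝ := ![2, 2, 1, 1, 1, 1]

/-- Agent 1's misreport, agreeing with `v1true` except on item `g₃`. -/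
def v1lie : Fin 6 → ℝ := ![2, 2, 2, 1, 1, 1]

/-- Agent 2's valuation. -/
def v2val : Fin 6 → ℝ := fun _ => 1

/-- The integral allocation giving agent 1 exactly `{g₁, g₂}`. -/
def xTruth : Fin 2 → Fin 6 → ℝ := fun i g =>
  if (g : ℕ) < 2 then (if i = 0 then 1 else 0) else (if i = 0 then 0 else 1)

/-- The integral allocation giving agent 1 exactly `{g₁, g₂, g₃}`. -/
def xLie : Fin 2 → Fin 6 → ℝ := fun i g =>
  if (g : ℕ) < 3 then (if i = 0 then 1 else 0) else (if i = 0 then 0 else 1)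

/-!
An allocation supported by prices whose total equals the number of agents (a competitive
equilibrium from equal incomes) maximizes the Nash welfare: against any other allocation, the
ratios of the new utilities to the equilibrium ones sum to at most the number of agents, so by
AM-GM their product is at most `1`. In case of equality every ratio is `1` and no agent receives
any part of an item that is overpriced for it. The supporting prices are
`(1/2, 1/2, 1/4, 1/4, 1/4, 1/4)` for the true profile and `1/3` for every item for the misreport.
Under the first, agent 2 finds `g₁, g₂` overpriced; under the second, agent 1 finds `g₄, g₅, g₆`
overpriced. Since the agent concerned already owns all the remaining items and must keep its
utility, its share is determined, and with it the whole allocation.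
-/

section ArithmeticGeometricMean

variable {ι : Type*} [Fintype ι] {t : ι → ℝ}

theorem le_exp_sub_one (a : ℝ) : a ≤ Real.exp (a - 1) := by
  simpa only [sub_add_cancel] using Real.add_one_le_exp (a - 1)

theorem prod_exp_sub_one_le_one (hsum : ∑ i, t i ≤ Fintype.card ι) :
    ∏ i, Real.exp (t i - 1) ≤ 1 := by
  rw [← Real.exp_sum, Real.exp_le_one_iff]
  simpa [sum_sub_distrib] using hsum

theorem prod_le_one_of_sum_le_card (ht : ∀ i, 0 ≤ t i) (hsum : ∑ i, t i ≤ Fintype.card ι) :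
    ∏ i, t i ≤ 1 :=
  (prod_le_prod (fun i _ => ht i) fun i _ => le_exp_sub_one (t i)).trans
    (prod_exp_sub_one_le_one hsum)

theorem eq_one_of_one_le_prod_of_sum_le_card (ht : ∀ i, 0 ≤ t i)
    (hsum : ∑ i, t i ≤ Fintype.card ι) (hprod : 1 ≤ ∏ i, t i) (i : ι) : t i = 1 := by
  have hpos (k : ι) : 0 < t k :=
    (ht k).lt_of_ne' (prod_ne_zero_iff.1 (zero_lt_one.trans_le hprod).ne' k (mem_univ k))
  by_contra hne
  have hstrict : t i < Real.exp (t i - 1) := by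
    simpa only [sub_add_cancel] using Real.add_one_lt_exp (sub_ne_zero.2 hne)
  have hlt : ∏ k, t k < ∏ k, Real.exp (t k - 1) :=
    prod_lt_prod (fun k _ => hpos k) (fun k _ => le_exp_sub_one (t k)) ⟨i, mem_univ i, hstrict⟩
  exact (hprod.trans_lt hlt).not_ge (prod_exp_sub_one_le_one hsum)

end ArithmeticGeometricMean

section CompetitiveEquilibrium

open scoped Matrix

variable {ι κ : Type*} [Fintype ι] {v x y : ι → κ → ℝ} {p : κ → ℝ}

/-- A fractional allocation of the items `κ` among finitely many agents `ι`; `ValidFrac6` is the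
case of two agents and six items. -/
def IsFracAllocation (x : ι → κ → ℝ) : Prop :=
  (∀ i g, 0 ≤ x i g) ∧ ∀ g, ∑ i, x i g = 1

theorem IsFracAllocation.le_one (hx : IsFracAllocation x) (i : ι) (g : κ) : x i g ≤ 1 :=
  hx.2 g ▸ single_le_sum (f := fun k => x k g) (fun k _ => hx.1 k g) (mem_univ i)

theorem IsFracAllocation.eq_of_apply_eq {x y : Fin 2 → κ → ℝ} (hx : IsFracAllocation x)
    (hy : IsFracAllocation y) {j : Fin 2} (h : y j = x j) : y = x := by
  have hsum (g : κ) : y 0 g + y 1 g = x 0 g + x 1 g := by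
    rw [← Fin.sum_univ_two fun i => y i g, ← Fin.sum_univ_two fun i => x i g, hx.2, hy.2]
  ext i g
  have hj := congrFun h g
  fin_cases j <;> fin_cases i <;>
    simp only [Fin.zero_eta, Fin.mk_one] at hj ⊢ <;> linarith [hsum g]

theorem isFracAllocation_ite (S : κ → Prop) [DecidablePred S] :
    IsFracAllocation fun (i : Fin 2) g =>
      if S g then (if i = 0 then 1 else 0) else (if i = 0 then 0 else 1) := by
  refine ⟨fun i g => ?_, fun g => ?_⟩
  · dsimp only
    split_ifs <;> norm_num
  · by_cases hg : S g <;> simp [hg, Fin.sum_univ_two]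

variable [Fintype κ]

theorem eq_of_le_of_dotProduct_eq {R : Type*} [Ring R] [LinearOrder R] [IsStrictOrderedRing R]
    {w a b : κ → R} (hw : ∀ g, 0 < w g) (hab : a ≤ b) (h : w ⬝ᵥ a = w ⬝ᵥ b) : a = b := by
  have hterms := (sum_eq_sum_iff_of_le fun g _ =>
    mul_le_mul_of_nonneg_left (hab g) (hw g).le).1 h
  exact funext fun g => mul_left_cancel₀ (hw g).ne' (hterms g (mem_univ g))

/-- The Nash welfare of `x` for the additive valuations `v`; the utility of agent `i` is encoded as
the dot product `v i ⬝ᵥ x i`. -/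
def nashWelfare (v x : ι → κ → ℝ) : ℝ :=
  ∏ i, v i ⬝ᵥ x i

/-- A competitive equilibrium from equal incomes, with allocation `x` and prices `p`, used as a
certificate of optimality for the Nash welfare. Every agent has income `1`, and no item yields agent
`i` more utility per unit of money than the bundle `x i` it buys. That each agent spends exactly its
income is not a separate field: it follows from the total price being the total income. -/
structure IsEquilibrium (v x : ι → κ → ℝ) (p : κ → ℝ) : Prop where
  isFracAllocation : IsFracAllocation x
  utility_pos : ∀ i, 0 < v i ⬝ᵥ x i
  value_le : ∀ i g, v i g ≤ p g * (v i ⬝ᵥ x i)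
  sum_price : ∑ g, p g = Fintype.card ι

theorem IsFracAllocation.sum_dotProduct (hx : IsFracAllocation x) (p : κ → ℝ) :
    ∑ i, p ⬝ᵥ x i = ∑ g, p g := by
  simp only [dotProduct]
  rw [sum_comm]
  simp only [← mul_sum, hx.2, mul_one]

namespace IsEquilibrium

theorem utility_ratio_le_spending (h : IsEquilibrium v x p) (i : ι) {z : κ → ℝ}
    (hz : ∀ g, 0 ≤ z g) : v i ⬝ᵥ z / v i ⬝ᵥ x i ≤ p ⬝ᵥ z := by
  rw [div_le_iff₀ (h.utility_pos i), dotProduct, dotProduct, sum_mul]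
  refine sum_le_sum fun g _ => ?_
  rw [mul_right_comm]
  exact mul_le_mul_of_nonneg_right (h.value_le i g) (hz g)

theorem sum_spending (h : IsEquilibrium v x p) (hy : IsFracAllocation y) :
    ∑ i, p ⬝ᵥ y i = Fintype.card ι :=
  (hy.sum_dotProduct p).trans h.sum_price

theorem sum_utility_ratio_le_card (h : IsEquilibrium v x p) (hy : IsFracAllocation y) :
    ∑ i, v i ⬝ᵥ y i / v i ⬝ᵥ x i ≤ Fintype.card ι :=
  (sum_le_sum fun i _ => h.utility_ratio_le_spending i (hy.1 i)).trans_eq (h.sum_spending hy)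

theorem nashWelfare_pos (h : IsEquilibrium v x p) : 0 < nashWelfare v x :=
  prod_pos fun i _ => h.utility_pos i

theorem utility_ratio_nonneg (h : IsEquilibrium v x p) (hv : ∀ i g, 0 ≤ v i g)
    (hy : IsFracAllocation y) (i : ι) : 0 ≤ v i ⬝ᵥ y i / v i ⬝ᵥ x i :=
  div_nonneg (sum_nonneg fun g _ => mul_nonneg (hv i g) (hy.1 i g)) (h.utility_pos i).le

theorem nashWelfare_le (h : IsEquilibrium v x p) (hv : ∀ i g, 0 ≤ v i g)
    (hy : IsFracAllocation y) : nashWelfare v y ≤ nashWelfare v x := by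
  have hprod := prod_le_one_of_sum_le_card (h.utility_ratio_nonneg hv hy)
    (h.sum_utility_ratio_le_card hy)
  rw [prod_div_distrib] at hprod
  exact (div_le_one h.nashWelfare_pos).1 hprod

section Maximizer

variable (h : IsEquilibrium v x p) (hv : ∀ i g, 0 ≤ v i g) (hy : IsFracAllocation y)
  (hmax : nashWelfare v x ≤ nashWelfare v y)

include h hv hy hmax

theorem utility_ratio_eq_one (i : ι) : v i ⬝ᵥ y i / v i ⬝ᵥ x i = 1 := by
  refine eq_one_of_one_le_prod_of_sum_le_card (h.utility_ratio_nonneg hv hy)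
    (h.sum_utility_ratio_le_card hy) ?_ i
  rw [prod_div_distrib]
  exact (one_le_div h.nashWelfare_pos).2 hmax

theorem utility_eq (i : ι) : v i ⬝ᵥ y i = v i ⬝ᵥ x i :=
  (div_eq_one_iff_eq (h.utility_pos i).ne').1 (h.utility_ratio_eq_one hv hy hmax i)

theorem spending_eq_one (i : ι) : p ⬝ᵥ y i = 1 := by
  have hle (k : ι) : 1 ≤ p ⬝ᵥ y k :=
    (h.utility_ratio_eq_one hv hy hmax k).symm.trans_le (h.utility_ratio_le_spending k (hy.1 k))
  have hsum : ∑ _k : ι, (1 : ℝ) = ∑ k, p ⬝ᵥ y k := by simp [h.sum_spending hy]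
  exact ((sum_eq_sum_iff_of_le fun k _ => hle k).1 hsum i (mem_univ i)).symm

theorem share_eq_zero_of_overpriced {i : ι} {g : κ} (hg : v i g < p g * (v i ⬝ᵥ x i)) :
    y i g = 0 := by
  have hsum : ∑ k, v i k * y i k = ∑ k, p k * (v i ⬝ᵥ x i) * y i k := by
    simp only [mul_right_comm _ (v i ⬝ᵥ x i), ← sum_mul]
    change v i ⬝ᵥ y i = p ⬝ᵥ y i * (v i ⬝ᵥ x i)
    rw [h.spending_eq_one hv hy hmax, h.utility_eq hv hy hmax, one_mul]
  have hterm : v i g * y i g = p g * (v i ⬝ᵥ x i) * y i g :=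
    (sum_eq_sum_iff_of_le fun k _ =>
      mul_le_mul_of_nonneg_right (h.value_le i k) (hy.1 i k)).1 hsum g (mem_univ g)
  exact (mul_eq_mul_right_iff.1 hterm).resolve_left hg.ne

theorem share_eq {j : ι} (hpos : ∀ g, 0 < v j g)
    (hover : ∀ g, x j g < 1 → v j g < p g * (v j ⬝ᵥ x j)) : y j = x j := by
  refine eq_of_le_of_dotProduct_eq hpos (fun g => ?_) (h.utility_eq hv hy hmax j)
  rcases lt_or_ge (x j g) 1 with hlt | hge
  · rw [h.share_eq_zero_of_overpriced hv hy hmax (hover g hlt)]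
    exact h.isFracAllocation.1 j g
  · exact (hy.le_one j g).trans hge

end Maximizer

end IsEquilibrium

end CompetitiveEquilibrium

section TwoAgentsSixItems

open scoped Matrix

theorem isFracAllocation_iff_validFrac6 {x : Fin 2 → Fin 6 → ℝ} :
    IsFracAllocation x ↔ ValidFrac6 x := by
  simp only [IsFracAllocation, ValidFrac6, Fin.sum_univ_two]

theorem nashWelfare_eq_NW6 (v₁ v₂ : Fin 6 → ℝ) (x : Fin 2 → Fin 6 → ℝ) :
    nashWelfare ![v₁, v₂] x = NW6 v₁ v₂ x :=
  Fin.prod_univ_two _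

theorem IsEquilibrium.unique_maximizer_NW6 {v₁ v₂ p : Fin 6 → ℝ} {x : Fin 2 → Fin 6 → ℝ}
    (h : IsEquilibrium ![v₁, v₂] x p) (hv : ∀ i g, 0 ≤ ![v₁, v₂] i g) {j : Fin 2}
    (hpos : ∀ g, 0 < ![v₁, v₂] j g)
    (hover : ∀ g, x j g < 1 → ![v₁, v₂] j g < p g * (![v₁, v₂] j ⬝ᵥ x j)) :
    ValidFrac6 x ∧
      (∀ y, ValidFrac6 y → NW6 v₁ v₂ y ≤ NW6 v₁ v₂ x) ∧
      (∀ y, ValidFrac6 y → (∀ z, ValidFrac6 z → NW6 v₁ v₂ z ≤ NW6 v₁ v₂ y) → y = x) := by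
  simp only [← isFracAllocation_iff_validFrac6, ← nashWelfare_eq_NW6]
  refine ⟨h.isFracAllocation, fun y hy => h.nashWelfare_le hv hy, fun y hy hmax => ?_⟩
  exact h.isFracAllocation.eq_of_apply_eq hy
    (h.share_eq hv hy (hmax x h.isFracAllocation) hpos hover)

theorem valuation_truth_pos (i : Fin 2) (g : Fin 6) : 0 < ![v1true, v2val] i g := by
  fin_cases i <;> fin_cases g <;> simp [v1true, v2val]

theorem valuation_lie_pos (i : Fin 2) (g : Fin 6) : 0 < ![v1lie, v2val] i g := by
  fin_cases i <;> fin_cases g <;> simp [v1lie, v2val]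

theorem utility_truth (i : Fin 2) : ![v1true, v2val] i ⬝ᵥ xTruth i = 4 := by
  fin_cases i <;> norm_num [dotProduct, v1true, v2val, xTruth, Fin.sum_univ_succ]

theorem utility_lie (i : Fin 2) : ![v1lie, v2val] i ⬝ᵥ xLie i = ![6, 3] i := by
  fin_cases i <;> norm_num [dotProduct, v1lie, v2val, xLie, Fin.sum_univ_succ]

theorem isEquilibrium_truth :
    IsEquilibrium ![v1true, v2val] xTruth ![1/2, 1/2, 1/4, 1/4, 1/4, 1/4] where
  isFracAllocation := isFracAllocation_ite fun g : Fin 6 => (g : ℕ) < 2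
  utility_pos i := by
    rw [utility_truth]
    norm_num
  value_le i g := by
    rw [utility_truth]
    fin_cases i <;> fin_cases g <;> norm_num [v1true, v2val]
  sum_price := by
    norm_num [Fin.sum_univ_succ]

theorem isEquilibrium_lie : IsEquilibrium ![v1lie, v2val] xLie fun _ => 1/3 where
  isFracAllocation := isFracAllocation_ite fun g : Fin 6 => (g : ℕ) < 3
  utility_pos i := by
    rw [utility_lie]
    fin_cases i <;> norm_num
  value_le i g := by
    rw [utility_lie]
    fin_cases i <;> fin_cases g <;> norm_num [v1lie, v2val]
  sum_price := by
    norm_num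

theorem overpriced_truth (g : Fin 6) (hg : xTruth 1 g < 1) :
    v2val g < ![1/2, 1/2, 1/4, 1/4, 1/4, 1/4] g * (v2val ⬝ᵥ xTruth 1) := by
  rw [show v2val ⬝ᵥ xTruth 1 = 4 from utility_truth 1]
  revert hg
  fin_cases g <;> norm_num [v2val, xTruth]

theorem overpriced_lie (g : Fin 6) (hg : xLie 0 g < 1) :
    v1lie g < 1/3 * (v1lie ⬝ᵥ xLie 0) := by
  rw [show v1lie ⬝ᵥ xLie 0 = 6 from utility_lie 0]
  revert hg
  fin_cases g <;> norm_num [v1lie, xLie]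

end TwoAgentsSixItems

/-- For the profile `(v1true, v2val)` the unique Nash-welfare-maximizing fractional
allocation is the integral allocation giving agent 1 exactly `{g₁,g₂}`; for the misreported
profile `(v1lie, v2val)` the unique maximizer gives agent 1 exactly `{g₁,g₂,g₃}`; and agent
1's true utility is strictly larger under the misreport.  Hence the maximum Nash welfare
rule is not truthful even for bi-valued valuations. -/
theorem MNW_not_truthful_bivalued :
    (ValidFrac6 xTruth ∧
      (∀ y, ValidFrac6 y → NW6 v1true v2val y ≤ NW6 v1true v2val xTruth) ∧
      (∀ x, ValidFrac6 x →
        (∀ y, ValidFrac6 y → NW6 v1true v2val y ≤ NW6 v1true v2val x) → x = xTruth)) ∧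
    (ValidFrac6 xLie ∧
      (∀ y, ValidFrac6 y → NW6 v1lie v2val y ≤ NW6 v1lie v2val xLie) ∧
      (∀ x, ValidFrac6 x →
        (∀ y, ValidFrac6 y → NW6 v1lie v2val y ≤ NW6 v1lie v2val x) → x = xLie)) ∧
    (∑ g, v1true g * xTruth 0 g < ∑ g, v1true g * xLie 0 g) := by
  refine ⟨isEquilibrium_truth.unique_maximizer_NW6 (fun i g => (valuation_truth_pos i g).le)
      (valuation_truth_pos 1) overpriced_truth,
    isEquilibrium_lie.unique_maximizer_NW6 (fun i g => (valuation_lie_pos i g).le)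
      (valuation_lie_pos 0) overpriced_lie, ?_⟩
  simp [v1true, xTruth, xLie, Fin.sum_univ_six]
end

section
/- Let S be a finite set of even cardinality, and let P and Q be two partitions of S into 2-element sets. Then there exists a subset X ⊆ S containing exactly one element of every pair of P and exactly one element of every pair of Q. -/
open Finset

/-! Let `p` and `q` exchange the two points of each pair of `P` and of `Q`. When neither
involution has a fixed point, no cycle of `p * q` contains both `x` and `p x`: otherwise
`p * (p * q) ^ k` would fix `x` for some `k`, but each of these permutations is conjugate to `p` or
to `q`. Hence `p` induces a fixed-point-free involution on the set of cycles of `p * q`, and `q`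
induces the same one; the union of one cycle from each of its orbits is a common transversal.
Points outside the pairs are fixed points of the involutions, and these are removed by passing to
two copies of the ground set. -/

section Group

variable {G : Type*} [Group G] {a b : G}

theorem semiconjBy_mul_inv_of_mul_self_eq_one (ha : a * a = 1) (hb : b * b = 1) :
    SemiconjBy a (a * b) (a * b)⁻¹ := by
  rw [SemiconjBy, mul_inv_rev, ← mul_assoc, ha, one_mul, inv_mul_cancel_right]
  exact eq_inv_of_mul_eq_one_left hb

theorem isConj_or_isConj_mul_zpow_of_mul_self_eq_one (ha : a * a = 1) (hb : b * b = 1) (k : ℤ) :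
    IsConj a (a * (a * b) ^ k) ∨ IsConj b (a * (a * b) ^ k) := by
  have hsemi (m : ℤ) : a * (a * b) ^ m = (a * b) ^ (-m) * a := by
    rw [zpow_neg, ← inv_zpow]
    exact (semiconjBy_mul_inv_of_mul_self_eq_one ha hb).zpow_right m
  obtain ⟨m, rfl | rfl⟩ := Int.even_or_odd' k
  · refine .inl (isConj_iff.2 ⟨(a * b) ^ (-m), ?_⟩)
    rw [← hsemi, zpow_neg, inv_inv, mul_assoc, ← zpow_add, two_mul]
  · refine .inr (isConj_iff.2 ⟨(a * b) ^ (-m), ?_⟩)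
    calc (a * b) ^ (-m) * b * ((a * b) ^ (-m))⁻¹
        = (a * b) ^ (-m) * a * (a * b) * (a * b) ^ m := by
          rw [zpow_neg, inv_inv, mul_assoc _ a, ← mul_assoc a a, ha, one_mul]
      _ = a * (a * b) ^ (2 * m + 1) := by
          rw [← hsemi, mul_assoc, mul_assoc, ← zpow_one_add, ← zpow_add]
          congr 2
          ring

end Group

section Involution

variable {α : Type*}

theorem apply_ne_of_isConj {p r : Equiv.Perm α} (h : IsConj p r) (hp : ∀ x, p x ≠ x) (x : α) :
    r x ≠ x := by
  obtain ⟨c, rfl⟩ := isConj_iff.1 h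
  intro hx
  exact hp (c⁻¹ x) (Equiv.Perm.eq_inv_iff_eq.2 hx)

theorem not_sameCycle_mul_apply {p q : Equiv.Perm α} (hpp : p * p = 1) (hqq : q * q = 1)
    (hp : ∀ x, p x ≠ x) (hq : ∀ x, q x ≠ x) (x : α) : ¬ (p * q).SameCycle x (p x) := by
  rintro ⟨k, hk⟩
  have hfix : (p * (p * q) ^ k) x = x := by
    rw [Equiv.Perm.mul_apply, hk, ← Equiv.Perm.mul_apply, hpp, Equiv.Perm.one_apply]
  rcases isConj_or_isConj_mul_zpow_of_mul_self_eq_one hpp hqq k with h | h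
  · exact apply_ne_of_isConj h hp x hfix
  · exact apply_ne_of_isConj h hq x hfix

theorem sameCycle_mul_apply_apply {p q : Equiv.Perm α} (hpp : p * p = 1) (hqq : q * q = 1)
    {x y : α} (h : (p * q).SameCycle x y) : (p * q).SameCycle (p x) (p y) := by
  have hconj : p * (p * q) * p⁻¹ = (p * q)⁻¹ :=
    mul_inv_eq_of_eq_mul (semiconjBy_mul_inv_of_mul_self_eq_one hpp hqq)
  simpa only [hconj, Equiv.Perm.sameCycle_inv] using h.conj (g := p)

theorem exists_set_apply_mem_iff_notMem {f : α → α} (hf : f.Involutive) (hne : ∀ x, f x ≠ x) :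
    ∃ X : Set α, ∀ x, f x ∈ X ↔ x ∉ X := by
  obtain ⟨_, -⟩ := exists_wellFoundedLT α
  refine ⟨{x | x < f x}, fun x ↦ ?_⟩
  rw [Set.mem_ofPred_eq, Set.mem_ofPred_eq, hf x, not_lt]
  exact (hne x).le_iff_lt.symm

theorem exists_common_set_apply_mem_iff_notMem {f g : α → α} (hf : f.Involutive)
    (hg : g.Involutive) (hfne : ∀ x, f x ≠ x) (hgne : ∀ x, g x ≠ x) :
    ∃ X : Set α, (∀ x, f x ∈ X ↔ x ∉ X) ∧ ∀ x, g x ∈ X ↔ x ∉ X := by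
  let p := hf.toPerm
  let q := hg.toPerm
  have hpp : p * p = 1 := Equiv.ext hf
  have hqq : q * q = 1 := Equiv.ext hg
  let cycles := Equiv.Perm.SameCycle.setoid (p * q)
  let onCycles : Quotient cycles → Quotient cycles :=
    Quotient.map p fun _ _ ↦ sameCycle_mul_apply_apply hpp hqq
  have hinvolutive : onCycles.Involutive :=
    Quotient.ind fun x ↦ congrArg (Quotient.mk cycles) (hf x)
  have hne : ∀ c, onCycles c ≠ c :=
    Quotient.ind fun x h ↦ not_sameCycle_mul_apply hpp hqq hfne hgne x (Quotient.exact h).symm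
  have hfg (x : α) : Quotient.mk cycles (g x) = Quotient.mk cycles (f x) :=
    Quotient.sound ⟨1, congrArg f (hg x)⟩
  obtain ⟨T, hT⟩ := exists_set_apply_mem_iff_notMem hinvolutive hne
  refine ⟨Quotient.mk cycles ⁻¹' T, fun x ↦ hT ⟦x⟧, fun x ↦ ?_⟩
  rw [Set.mem_preimage, hfg]
  exact hT ⟦x⟧

open Classical in
/-- The extension of a self-map `f` of `α` to two copies of `α` that acts as `f` on each copy,
except that it exchanges the two copies of every fixed point. It turns an involution into one
without fixed points. -/
noncomputable def doubleFixedPoints (f : α → α) (z : α × Bool) : α × Bool :=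
  if f z.1 = z.1 then (z.1, !z.2) else (f z.1, z.2)

theorem doubleFixedPoints_ne (f : α → α) (z : α × Bool) : doubleFixedPoints f z ≠ z := by
  unfold doubleFixedPoints
  split_ifs with h
  · simp [Prod.ext_iff]
  · simp [Prod.ext_iff, h]

theorem doubleFixedPoints_involutive {f : α → α} (hf : f.Involutive) :
    (doubleFixedPoints f).Involutive := by
  rintro ⟨x, b⟩
  by_cases h : f x = x
  · simp [doubleFixedPoints, h]
  · simp [doubleFixedPoints, h, hf x, Ne.symm h]

theorem exists_common_set_apply_mem_iff_notMem_of_apply_ne {f g : α → α} (hf : f.Involutive)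
    (hg : g.Involutive) :
    ∃ X : Set α, (∀ x, f x ≠ x → (f x ∈ X ↔ x ∉ X)) ∧ ∀ x, g x ≠ x → (g x ∈ X ↔ x ∉ X) := by
  obtain ⟨Y, hfY, hgY⟩ := exists_common_set_apply_mem_iff_notMem
    (doubleFixedPoints_involutive hf) (doubleFixedPoints_involutive hg)
    (doubleFixedPoints_ne f) (doubleFixedPoints_ne g)
  refine ⟨{x | (x, false) ∈ Y}, fun x hx ↦ ?_, fun x hx ↦ ?_⟩
  · simpa [doubleFixedPoints, hx] using hfY (x, false)
  · simpa [doubleFixedPoints, hx] using hgY (x, false)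

end Involution

section Pairs

variable {α : Type*}

theorem exists_eq_pair_of_mem_of_card_eq_two [DecidableEq α] {B : Finset α} (hB : #B = 2) {x : α}
    (hx : x ∈ B) : ∃ y, y ≠ x ∧ B = {x, y} := by
  obtain ⟨y, hy⟩ := card_eq_one.1 ((card_erase_of_mem hx).trans (by rw [hB]))
  refine ⟨y, ne_of_mem_erase (hy ▸ mem_singleton_self y), ?_⟩
  rw [← insert_erase hx, hy]

theorem exists_involutive_forall_eq_pair [DecidableEq α] {P : Set (Finset α)}
    (hcard : ∀ B ∈ P, #B = 2) (hdisj : P.PairwiseDisjoint id) :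
    ∃ f : α → α, f.Involutive ∧ ∀ B ∈ P, ∃ x, f x ≠ x ∧ B = {x, f x} := by
  have hpartner (x : α) : ∃ y, (∀ B ∈ P, x ∈ B → y ≠ x ∧ B = {x, y}) ∧
      ((∀ B ∈ P, x ∉ B) → y = x) := by
    by_cases hx : ∃ B ∈ P, x ∈ B
    · obtain ⟨B, hB, hxB⟩ := hx
      obtain ⟨y, hyx, hBy⟩ := exists_eq_pair_of_mem_of_card_eq_two (hcard B hB) hxB
      refine ⟨y, fun C hC hxC ↦ ⟨hyx, ?_⟩, fun h ↦ absurd hxB (h B hB)⟩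
      rw [← hdisj.elim_finset hB hC x hxB hxC, hBy]
    · push Not at hx
      exact ⟨x, fun B hB hxB ↦ absurd hxB (hx B hB), fun _ ↦ rfl⟩
  choose f hmem hnotMem using hpartner
  refine ⟨f, fun x ↦ ?_, fun B hB ↦ ?_⟩
  · by_cases hx : ∃ B ∈ P, x ∈ B
    · obtain ⟨B, hB, hxB⟩ := hx
      obtain ⟨hne, hBx⟩ := hmem x B hB hxB
      have hBfx : B = {f x, f (f x)} := (hmem (f x) B hB (by simp [hBx])).2
      have hxpair : x ∈ ({f x, f (f x)} : Finset α) := hBfx ▸ hxB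
      exact (mem_singleton.1 ((mem_insert.1 hxpair).resolve_left hne.symm)).symm
    · push Not at hx
      rw [hnotMem x hx, hnotMem x hx]
  · obtain ⟨x, hx⟩ := card_pos.1 (by rw [hcard B hB]; exact two_pos)
    exact ⟨x, hmem x B hB hx⟩

theorem ncard_pair_inter_eq_one {x y : α} {X : Set α} (h : y ∈ X ↔ x ∉ X) :
    (({x, y} : Set α) ∩ X).ncard = 1 := by
  by_cases hx : x ∈ X
  · have hy : y ∉ X := fun hy ↦ h.1 hy hx
    simp [Set.insert_inter_of_mem hx, hy]
  · simp [Set.insert_inter_of_notMem hx, h.2 hx]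

theorem exists_common_transversal_of_two_pair_partitions_general (P Q : Set (Finset α))
    (hP2 : ∀ B ∈ P, #B = 2) (hQ2 : ∀ B ∈ Q, #B = 2)
    (hPdisj : P.PairwiseDisjoint id) (hQdisj : Q.PairwiseDisjoint id) :
    ∃ X : Set α, (∀ B ∈ P, (↑B ∩ X).ncard = 1) ∧ ∀ B ∈ Q, (↑B ∩ X).ncard = 1 := by
  classical
  obtain ⟨f, hf, hfP⟩ := exists_involutive_forall_eq_pair hP2 hPdisj
  obtain ⟨g, hg, hgQ⟩ := exists_involutive_forall_eq_pair hQ2 hQdisj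
  obtain ⟨X, hfX, hgX⟩ := exists_common_set_apply_mem_iff_notMem_of_apply_ne hf hg
  refine ⟨X, fun B hB ↦ ?_, fun B hB ↦ ?_⟩
  · obtain ⟨x, hx, rfl⟩ := hfP B hB
    simpa only [coe_pair] using ncard_pair_inter_eq_one (hfX x hx)
  · obtain ⟨x, hx, rfl⟩ := hgQ B hB
    simpa only [coe_pair] using ncard_pair_inter_eq_one (hgX x hx)

end Pairs

/-- Given two partitions `P` and `Q` of a finite set into pairs, there is a subset `X`
containing exactly one element of every pair of `P` and exactly one element of every pair
of `Q`. -/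
theorem exists_common_transversal_of_two_pair_partitions {α : Type*} [Fintype α]
    [DecidableEq α] (P Q : Finset (Finset α))
    (hP2 : ∀ B ∈ P, B.card = 2) (hQ2 : ∀ B ∈ Q, B.card = 2)
    (hPdisj : ∀ B ∈ P, ∀ C ∈ P, B ≠ C → Disjoint B C)
    (hQdisj : ∀ B ∈ Q, ∀ C ∈ Q, B ≠ C → Disjoint B C)
    (hPcov : ∀ x : α, ∃ B ∈ P, x ∈ B)
    (hQcov : ∀ x : α, ∃ B ∈ Q, x ∈ B) :
    ∃ X : Finset α,
      (∀ B ∈ P, (B ∩ X).card = 1) ∧ (∀ B ∈ Q, (B ∩ X).card = 1) := by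
  classical
  obtain ⟨X, hP, hQ⟩ := exists_common_transversal_of_two_pair_partitions_general (P : Set _) Q
    hP2 hQ2 (fun B hB C hC ↦ hPdisj B hB C hC) (fun B hB C hC ↦ hQdisj B hB C hC)
  exact ⟨X.toFinset, by simpa [← Set.ncard_coe_finset] using And.intro hP hQ⟩
end

section
/- Let M' be a finite item set partitioned into k disjoint triples T_1,…,T_k, and let v_1, v_2 be additive valuations with v_1(M') = v_2(M') = 1 such that in every triple there is a single item that is strictly most valuable for both agents simultaneously, i.e., for each j there is a ∈ T_j with v_1(a) > v_1(b) and v_2(a) > v_2(b) for both other items b ∈ T_j. Then there exists X ⊆ M' with |X ∩ T_j| = 1 for every j such that for each agent i ∈ {1,2}: if v_i(X) < 1/3 then there exists an item g ∈ M' \ X with v_i(X) + (2/3)·v_i(g) ≥ 1/3, and if v_i(X) > 1/3 then there exists an item g ∈ X with v_i(X) − (2/3)·v_i(g) ≤ 1/3. -/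
open Finset

/-!
Regard the choice of `1/3` of every item as a fractional transversal. Among the fractional
transversals with the same value for both agents, a vertex has support at most `k + 2`: there are
`k` equations for the parts and two for the agents (Carathéodory's theorem for cones). Hence either
all parts but one are integral and the remaining one is split among at most three items, or all
parts but two are integral and these are split between two items each.

In the first case, picking an item of weight at least `1/3` in the split part moves the value of
either agent by at most two thirds of an item. In the second case, label the two split pairs so that
the first agent ranks each in the same direction. If the second agent ranks both of them in one
direction too, an opposite or a matching choice in the two pairs works for both agents. Otherwise
the agents disagree on exactly one pair, and the common favourite of its part, which can be added
as well as picked, closes the remaining cases.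
-/

section ConicCaratheodory

variable {𝕜 ι V : Type*} [Field 𝕜] [LinearOrder 𝕜] [IsStrictOrderedRing 𝕜]
  [AddCommGroup V] [Module 𝕜 V]

theorem exists_sub_smul_nonneg_of_exists_pos {x l : ι →₀ 𝕜} (hx : 0 ≤ x)
    (hl : l.support ⊆ x.support) (hpos : ∃ i, 0 < l i) :
    ∃ t : 𝕜, 0 ≤ x - t • l ∧ (x - t • l).support ⊂ x.support := by
  have hne : (l.support.filter (0 < l ·)).Nonempty := by
    obtain ⟨i, hi⟩ := hpos
    exact ⟨i, mem_filter.2 ⟨Finsupp.mem_support_iff.2 hi.ne', hi⟩⟩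
  obtain ⟨i, hi, hmin⟩ := exists_min_image _ (fun i ↦ x i / l i) hne
  obtain ⟨hil, hi⟩ := mem_filter.1 hi
  refine ⟨x i / l i, fun j ↦ ?_, ?_⟩
  · simp only [Finsupp.coe_zero, Pi.zero_apply, Finsupp.coe_sub, Finsupp.coe_smul, Pi.sub_apply,
      Pi.smul_apply, smul_eq_mul, sub_nonneg]
    rcases le_or_gt (l j) 0 with hj | hj
    · exact (mul_nonpos_of_nonneg_of_nonpos (div_nonneg (hx i) hi.le) hj).trans (hx j)
    · exact (le_div_iff₀ hj).1 (hmin j (mem_filter.2 ⟨Finsupp.mem_support_iff.2 hj.ne', hj⟩))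
  · refine (ssubset_iff_of_subset fun j hj ↦ ?_).2 ⟨i, hl hil, ?_⟩
    · contrapose! hj
      have hlj : l j = 0 := Finsupp.notMem_support_iff.1 fun h ↦ hj (hl h)
      simp [hlj, Finsupp.notMem_support_iff.1 hj]
    · simp [hi.ne']

theorem exists_nonneg_support_ssubset_of_not_linearIndepOn {u : ι → V} {x : ι →₀ 𝕜} (hx : 0 ≤ x)
    (hu : ¬ LinearIndepOn 𝕜 u (x.support : Set ι)) :
    ∃ y : ι →₀ 𝕜, 0 ≤ y ∧ Finsupp.linearCombination 𝕜 u y = Finsupp.linearCombination 𝕜 u x ∧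
      y.support ⊂ x.support := by
  obtain ⟨l, hl, hl0, hne⟩ : ∃ l : ι →₀ 𝕜, l.support ⊆ x.support ∧
      Finsupp.linearCombination 𝕜 u l = 0 ∧ l ≠ 0 := by
    simpa [linearIndepOn_iff, Finsupp.mem_supported] using hu
  wlog hpos : ∃ i, 0 < l i generalizing l
  · refine this (-l) (by simpa using hl) (by simp [hl0]) (neg_ne_zero.2 hne) ?_
    push Not at hpos
    obtain ⟨i, hi⟩ := Finsupp.ne_iff.1 hne
    exact ⟨i, neg_pos.2 ((hpos i).lt_of_ne hi)⟩
  obtain ⟨t, ht, hsupp⟩ := exists_sub_smul_nonneg_of_exists_pos hx hl hpos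
  exact ⟨x - t • l, ht, by simp [hl0], hsupp⟩

theorem exists_nonneg_linearCombination_eq_card_support_le_finrank [Module.Finite 𝕜 V]
    (u : ι → V) {x : ι →₀ 𝕜} (hx : 0 ≤ x) :
    ∃ y : ι →₀ 𝕜, 0 ≤ y ∧ Finsupp.linearCombination 𝕜 u y = Finsupp.linearCombination 𝕜 u x ∧
      #y.support ≤ Module.finrank 𝕜 V := by
  induction hs : x.support using Finset.strongInduction generalizing x with
  | H s ih =>
    subst hs
    by_cases hu : LinearIndepOn 𝕜 u (x.support : Set ι)
    · exact ⟨x, hx, rfl, by simpa using hu.linearIndependent.fintype_card_le_finrank⟩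
    · obtain ⟨y, hy, hyu, hyx⟩ := exists_nonneg_support_ssubset_of_not_linearIndepOn hx hu
      obtain ⟨z, hz, hzu, hcard⟩ := ih _ hyx hy rfl
      exact ⟨z, hz, hzu.trans hyu, hcard⟩

end ConicCaratheodory

section Pair

variable {𝕜 α β : Type*} [Field 𝕜]

/-- The value of the fractional selection that takes `x` of `p` and `1 - x` of `q` from one part,
valued by `f`, and `y` of `r` and `1 - y` of `s` from another part, valued by `g`. -/
def splitValue (f : α → 𝕜) (g : β → 𝕜) (x y : 𝕜) (p q : α) (r s : β) : 𝕜 :=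
  x * f p + (1 - x) * f q + (y * g r + (1 - y) * g s)

theorem splitValue_swap_left (f : α → 𝕜) (g : β → 𝕜) (x y : 𝕜) (p q : α) (r s : β) :
    splitValue f g (1 - x) y q p r s = splitValue f g x y p q r s := by
  unfold splitValue; ring

theorem splitValue_swap_right (f : α → 𝕜) (g : β → 𝕜) (x y : 𝕜) (p q : α) (r s : β) :
    splitValue f g x (1 - y) p q s r = splitValue f g x y p q r s := by
  unfold splitValue; ring

theorem splitValue_swap (f : α → 𝕜) (g : β → 𝕜) (x y : 𝕜) (p q : α) (r s : β) :
    splitValue g f y x r s p q = splitValue f g x y p q r s :=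
  add_comm _ _

variable [LinearOrder 𝕜]

/-- Picking `a` from a part valued by `f` and `b` from a part valued by `g` rounds the target `t`:
two thirds of a picked item pay for any excess over `t`, and two thirds of an unpicked item of
these two parts pay for any deficit. For nonnegative values each inequality is automatic on one side
of `t`, so neither is guarded by a comparison of `f a + g b` with `t`. -/
def IsPairRounding (f : α → 𝕜) (g : β → 𝕜) (t : 𝕜) (a : α) (b : β) : Prop :=
  (f a + g b ≤ t + 2 / 3 * f a ∨ f a + g b ≤ t + 2 / 3 * g b) ∧
    ((∃ o ≠ a, t ≤ f a + g b + 2 / 3 * f o) ∨ ∃ o ≠ b, t ≤ f a + g b + 2 / 3 * g o)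

variable {f f₁ f₂ : α → 𝕜} {g g₁ g₂ : β → 𝕜} {t x y : 𝕜} {p q : α} {r s : β}

theorem IsPairRounding.swap {a : α} {b : β} (h : IsPairRounding f g t a b) :
    IsPairRounding g f t b a := by
  simpa only [IsPairRounding, or_comm, add_comm (g b)] using h

/-- One choice from the two parts rounds the split selection of `splitValue` for both agents at
once; the agents value the first part by `f₁`, `f₂` and the second by `g₁`, `g₂`. -/
def HasCommonRounding (f₁ f₂ : α → 𝕜) (g₁ g₂ : β → 𝕜) (x y : 𝕜) (p q : α) (r s : β) : Prop :=
  ∃ a b, IsPairRounding f₁ g₁ (splitValue f₁ g₁ x y p q r s) a b ∧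
    IsPairRounding f₂ g₂ (splitValue f₂ g₂ x y p q r s) a b

theorem HasCommonRounding.swap_agents (h : HasCommonRounding f₁ f₂ g₁ g₂ x y p q r s) :
    HasCommonRounding f₂ f₁ g₂ g₁ x y p q r s :=
  let ⟨a, b, h₁, h₂⟩ := h
  ⟨a, b, h₂, h₁⟩

theorem HasCommonRounding.swap_parts (h : HasCommonRounding f₁ f₂ g₁ g₂ x y p q r s) :
    HasCommonRounding g₁ g₂ f₁ f₂ y x r s p q := by
  obtain ⟨a, b, h₁, h₂⟩ := h
  rw [← splitValue_swap] at h₁ h₂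
  exact ⟨b, a, h₁.swap, h₂.swap⟩

theorem hasCommonRounding_swap_left :
    HasCommonRounding f₁ f₂ g₁ g₂ (1 - x) y q p r s ↔
      HasCommonRounding f₁ f₂ g₁ g₂ x y p q r s := by
  simp only [HasCommonRounding, splitValue_swap_left]

theorem hasCommonRounding_swap_right :
    HasCommonRounding f₁ f₂ g₁ g₂ x (1 - y) p q s r ↔
      HasCommonRounding f₁ f₂ g₁ g₂ x y p q r s := by
  simp only [HasCommonRounding, splitValue_swap_right]

variable [IsStrictOrderedRing 𝕜]

theorem mul_sub_mem_Icc_zero_mul {a b c d : 𝕜} (ha : 0 ≤ a) (hac : a ≤ c) (hd : 0 ≤ d)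
    (hdb : d ≤ b) : a * (b - d) ∈ Set.Icc 0 (c * b) :=
  ⟨mul_nonneg ha (sub_nonneg.2 hdb),
    mul_le_mul hac (sub_le_self b hd) (sub_nonneg.2 hdb) (ha.trans hac)⟩

theorem add_mul_le_mul_or_le_mul {a b c l m : 𝕜} (hl : 0 ≤ l) (hm : 0 ≤ m) (ha : 0 ≤ a)
    (hb : 0 ≤ b) (hc : l + m ≤ c) : l * a + m * b ≤ c * a ∨ l * a + m * b ≤ c * b := by
  rcases le_total a b with hab | hba
  · right
    calc l * a + m * b ≤ l * b + m * b := by gcongr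
      _ = (l + m) * b := by ring
      _ ≤ c * b := by gcongr
  · left
    calc l * a + m * b ≤ l * a + m * a := by gcongr
      _ = (l + m) * a := by ring
      _ ≤ c * a := by gcongr

theorem isPairRounding_splitValue_opposite (hf : ∀ a, 0 ≤ f a) (hg : ∀ b, 0 ≤ g b) (hpq : p ≠ q)
    (hrs : r ≠ s) (hfg : 0 ≤ (f p - f q) * (g r - g s)) (hx : 1 / 3 ≤ x) (hx1 : x ≤ 1)
    (hy0 : 0 ≤ y) (hy : y ≤ 2 / 3) : IsPairRounding f g (splitValue f g x y p q r s) p s := by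
  have hx' : 1 - x ≤ 2 / 3 := by linarith
  have hx0 : 0 ≤ 1 - x := sub_nonneg.2 hx1
  unfold IsPairRounding splitValue
  rcases mul_nonneg_iff.1 hfg with ⟨hf', hg'⟩ | ⟨hf', hg'⟩
  · have ⟨hgain, hgain_le⟩ := mul_sub_mem_Icc_zero_mul hx0 hx' (hf q) (sub_nonneg.1 hf')
    have ⟨hloss, hloss_le⟩ := mul_sub_mem_Icc_zero_mul hy0 hy (hg s) (sub_nonneg.1 hg')
    exact ⟨.inl (by linarith), .inr ⟨r, hrs, by linarith⟩⟩
  · have ⟨hloss, hloss_le⟩ := mul_sub_mem_Icc_zero_mul hx0 hx' (hf p) (sub_nonpos.1 hf')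
    have ⟨hgain, hgain_le⟩ := mul_sub_mem_Icc_zero_mul hy0 hy (hg r) (sub_nonpos.1 hg')
    exact ⟨.inr (by linarith), .inl ⟨q, hpq.symm, by linarith⟩⟩

theorem isPairRounding_splitValue_same (hf : ∀ a, 0 ≤ f a) (hg : ∀ b, 0 ≤ g b) (hpq : p ≠ q)
    (hrs : r ≠ s) (hfg : 0 ≤ (f p - f q) * (g r - g s)) (hx1 : x ≤ 1) (hy1 : y ≤ 1)
    (hxy : 4 / 3 ≤ x + y) : IsPairRounding f g (splitValue f g x y p q r s) p r := by
  have hx0 : 0 ≤ 1 - x := sub_nonneg.2 hx1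
  have hy0 : 0 ≤ 1 - y := sub_nonneg.2 hy1
  have hxy' : (1 - x) + (1 - y) ≤ 2 / 3 := by linarith
  have hfp := mul_nonneg hx0 (hf p)
  have hfq := mul_nonneg hx0 (hf q)
  have hgr := mul_nonneg hy0 (hg r)
  have hgs := mul_nonneg hy0 (hg s)
  unfold IsPairRounding splitValue
  rcases mul_nonneg_iff.1 hfg with ⟨hf', hg'⟩ | ⟨hf', hg'⟩
  · have hfpq := mul_nonneg hx0 hf'
    have hgrs := mul_nonneg hy0 hg'
    refine ⟨?_, .inl ⟨q, hpq.symm, by linarith [hf q]⟩⟩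
    exact (add_mul_le_mul_or_le_mul hx0 hy0 (hf p) (hg r) hxy').imp
      (fun h ↦ by linarith) (fun h ↦ by linarith)
  · have hfqp := mul_nonneg hx0 (neg_nonneg.2 hf')
    have hgsr := mul_nonneg hy0 (neg_nonneg.2 hg')
    refine ⟨.inl (by linarith [hf p]), ?_⟩
    exact (add_mul_le_mul_or_le_mul hx0 hy0 (hf q) (hg s) hxy').imp
      (fun h ↦ ⟨q, hpq.symm, by linarith⟩) (fun h ↦ ⟨s, hrs.symm, by linarith⟩)

theorem hasCommonRounding_of_aligned (hf₁ : ∀ a, 0 ≤ f₁ a) (hf₂ : ∀ a, 0 ≤ f₂ a)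
    (hg₁ : ∀ b, 0 ≤ g₁ b) (hg₂ : ∀ b, 0 ≤ g₂ b) (hpq : p ≠ q) (hrs : r ≠ s)
    (hx0 : 0 ≤ x) (hx1 : x ≤ 1) (hy0 : 0 ≤ y) (hy1 : y ≤ 1)
    (h₁ : 0 ≤ (f₁ p - f₁ q) * (g₁ r - g₁ s)) (h₂ : 0 ≤ (f₂ p - f₂ q) * (g₂ r - g₂ s)) :
    HasCommonRounding f₁ f₂ g₁ g₂ x y p q r s := by
  wlog hxy : 1 ≤ x + y generalizing x y p q r s
  · refine hasCommonRounding_swap_left.1 (hasCommonRounding_swap_right.1 ?_)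
    exact this hpq.symm hrs.symm (by linarith) (by linarith) (by linarith) (by linarith)
      (by linarith) (by linarith) (by linarith)
  rcases le_total y (2 / 3) with hy | hy
  · exact ⟨p, s, isPairRounding_splitValue_opposite hf₁ hg₁ hpq hrs h₁ (by linarith) hx1 hy0 hy,
      isPairRounding_splitValue_opposite hf₂ hg₂ hpq hrs h₂ (by linarith) hx1 hy0 hy⟩
  rcases le_total x (2 / 3) with hx | hx
  · refine HasCommonRounding.swap_parts ⟨r, q, ?_, ?_⟩
    · exact isPairRounding_splitValue_opposite hg₁ hf₁ hrs hpq (by rwa [mul_comm]) (by linarith)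
        hy1 hx0 hx
    · exact isPairRounding_splitValue_opposite hg₂ hf₂ hrs hpq (by rwa [mul_comm]) (by linarith)
        hy1 hx0 hx
  · exact ⟨p, r, isPairRounding_splitValue_same hf₁ hg₁ hpq hrs h₁ hx1 hy1 (by linarith),
      isPairRounding_splitValue_same hf₂ hg₂ hpq hrs h₂ hx1 hy1 (by linarith)⟩

theorem hasCommonRounding_of_opposed_of_le_of_le (hf₁ : ∀ a, 0 ≤ f₁ a) (hf₂ : ∀ a, 0 ≤ f₂ a)
    (hg₁ : ∀ b, 0 ≤ g₁ b) (hg₂ : ∀ b, 0 ≤ g₂ b) (hpq : p ≠ q) (hx0 : 0 ≤ x) (hy0 : 0 ≤ y)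
    (hd₁ : f₁ q ≤ f₁ p) (hd₂ : f₂ q ≤ f₂ p) (he₁ : g₁ s ≤ g₁ r) (he₂ : g₂ r ≤ g₂ s)
    {b : β} (hbr : b ≠ r) (hbs : b ≠ s) (hb₁ : g₁ r ≤ g₁ b) (hb₂ : g₂ s ≤ g₂ b)
    (hx : x ≤ 2 / 3) (hy : y ≤ 2 / 3) : HasCommonRounding f₁ f₂ g₁ g₂ x y p q r s := by
  have hy0' : 0 ≤ 1 - y := by linarith
  have hq₁ := hf₁ q
  have hq₂ := hf₂ q
  have hs₁ := hg₁ s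
  have hr₂ := hg₂ r
  have ⟨hxd₁, hxd₁'⟩ := mul_sub_mem_Icc_zero_mul hx0 hx hq₁ hd₁
  have ⟨hxd₂, hxd₂'⟩ := mul_sub_mem_Icc_zero_mul hx0 hx hq₂ hd₂
  have ⟨hye₂, hye₂'⟩ := mul_sub_mem_Icc_zero_mul hy0 hy hr₂ he₂
  have hye₁ := mul_nonneg hy0 (sub_nonneg.2 he₁)
  have hy'e₁ := mul_nonneg hy0' (sub_nonneg.2 he₁)
  have hy'e₂ := mul_nonneg hy0' (sub_nonneg.2 he₂)
  unfold HasCommonRounding IsPairRounding splitValue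
  rcases le_or_gt (x * (f₁ p - f₁ q) + y * (g₁ r - g₁ s)) (2 / 3 * g₁ b) with hb | hb
  · exact ⟨q, s, ⟨.inl (by linarith), .inr ⟨b, hbs, by linarith⟩⟩,
      .inr (by linarith), .inl ⟨p, hpq, by linarith⟩⟩
  rcases le_or_gt (g₂ b - (y * g₂ r + (1 - y) * g₂ s) - x * (f₂ p - f₂ q)) (2 / 3 * g₂ b)
    with hb' | hb'
  · exact ⟨q, b, ⟨.inr (by linarith), .inl ⟨p, hpq, by linarith⟩⟩,
      .inr (by linarith), .inl ⟨p, hpq, by linarith⟩⟩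
  · exact ⟨q, r, ⟨.inr (by linarith), .inl ⟨p, hpq, by linarith⟩⟩,
      .inl (by linarith), .inr ⟨b, hbr, by linarith⟩⟩

theorem hasCommonRounding_of_opposed_of_ge_of_ge (hf₁ : ∀ a, 0 ≤ f₁ a) (hf₂ : ∀ a, 0 ≤ f₂ a)
    (hg₁ : ∀ b, 0 ≤ g₁ b) (hg₂ : ∀ b, 0 ≤ g₂ b) (hpq : p ≠ q) (hrs : r ≠ s) (hx1 : x ≤ 1)
    (hy1 : y ≤ 1) (hd₁ : f₁ q ≤ f₁ p) (hd₂ : f₂ q ≤ f₂ p) (he₁ : g₁ s ≤ g₁ r)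
    (he₂ : g₂ r ≤ g₂ s) (hx : 2 / 3 ≤ x) (hy : 2 / 3 ≤ y) :
    HasCommonRounding f₁ f₂ g₁ g₂ x y p q r s := by
  refine ⟨p, r, isPairRounding_splitValue_same hf₁ hg₁ hpq hrs ?_ hx1 hy1 (by linarith), ?_⟩
  · exact mul_nonneg (sub_nonneg.2 hd₁) (sub_nonneg.2 he₁)
  · rw [← splitValue_swap_right]
    exact isPairRounding_splitValue_opposite hf₂ hg₂ hpq hrs.symm
      (mul_nonneg (sub_nonneg.2 hd₂) (sub_nonneg.2 he₂)) (by linarith) hx1 (by linarith)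
      (by linarith)

theorem hasCommonRounding_of_opposed_of_ge_of_mem_Icc (hf₁ : ∀ a, 0 ≤ f₁ a)
    (hf₂ : ∀ a, 0 ≤ f₂ a) (hg₁ : ∀ b, 0 ≤ g₁ b) (hg₂ : ∀ b, 0 ≤ g₂ b) (hpq : p ≠ q)
    (hx1 : x ≤ 1) (hd₁ : f₁ q ≤ f₁ p) (hd₂ : f₂ q ≤ f₂ p) (he₁ : g₁ s ≤ g₁ r)
    (he₂ : g₂ r ≤ g₂ s) {b : β} (hbr : b ≠ r) (hbs : b ≠ s) (hb₁ : g₁ r ≤ g₁ b)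
    (hb₂ : g₂ s ≤ g₂ b) (hx : 2 / 3 ≤ x) (hy : y ∈ Set.Icc (1 / 3) (2 / 3)) :
    HasCommonRounding f₁ f₂ g₁ g₂ x y p q r s := by
  have hx0' : 0 ≤ 1 - x := sub_nonneg.2 hx1
  have hx' : 1 - x ≤ 2 / 3 := by linarith
  have hy0 : 0 ≤ y := by linarith [hy.1]
  have hy0' : 0 ≤ 1 - y := by linarith [hy.2]
  have hy' : 1 - y ≤ 2 / 3 := by linarith [hy.1]
  have hq₁ := hf₁ q
  have hq₂ := hf₂ q
  have hxd₂ := mul_nonneg (by linarith : 0 ≤ x) (sub_nonneg.2 hd₂)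
  have ⟨hx'd₁, hx'd₁'⟩ := mul_sub_mem_Icc_zero_mul hx0' hx' hq₁ hd₁
  have ⟨hx'd₂, hx'd₂'⟩ := mul_sub_mem_Icc_zero_mul hx0' hx' hq₂ hd₂
  have ⟨hye₁, hye₁'⟩ := mul_sub_mem_Icc_zero_mul hy0 hy.2 (hg₁ s) he₁
  have ⟨hye₂, hye₂'⟩ := mul_sub_mem_Icc_zero_mul hy0 hy.2 (hg₂ r) he₂
  have ⟨hy'e₁, hy'e₁'⟩ := mul_sub_mem_Icc_zero_mul hy0' hy' (hg₁ s) he₁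
  have ⟨hy'e₂, hy'e₂'⟩ := mul_sub_mem_Icc_zero_mul hy0' hy' (hg₂ r) he₂
  unfold HasCommonRounding IsPairRounding splitValue
  -- Given the failure of the earlier corners, each corner can fail only in the inequality tested;
  -- the four failures together make `(q, b)` succeed for both agents.
  rcases le_or_gt ((1 - x) * (f₁ p - f₁ q) + (1 - y) * (g₁ r - g₁ s)) (2 / 3 * f₁ p) with h₁ | h₁
  · exact ⟨p, r, ⟨.inl (by linarith), .inl ⟨q, hpq.symm, by linarith⟩⟩,
      .inl (by linarith), .inr ⟨b, hbr, by linarith⟩⟩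
  rcases le_or_gt ((1 - x) * (f₂ p - f₂ q) + y * (g₂ s - g₂ r)) (2 / 3 * f₂ p) with h₂ | h₂
  · exact ⟨p, s, ⟨.inl (by linarith), .inr ⟨b, hbs, by linarith⟩⟩,
      .inl (by linarith), .inl ⟨q, hpq.symm, by linarith⟩⟩
  rcases le_or_gt (x * (f₁ p - f₁ q) + y * (g₁ r - g₁ s)) (2 / 3 * g₁ b) with h₃ | h₃
  · exact ⟨q, s, ⟨.inl (by linarith), .inr ⟨b, hbs, by linarith⟩⟩,
      .inr (by linarith), .inl ⟨p, hpq, by linarith⟩⟩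
  rcases le_or_gt (x * (f₂ p - f₂ q) + (1 - y) * (g₂ s - g₂ r)) (2 / 3 * g₂ b) with h₄ | h₄
  · exact ⟨q, r, ⟨.inr (by linarith), .inl ⟨p, hpq, by linarith⟩⟩,
      .inl (by linarith), .inr ⟨b, hbr, by linarith⟩⟩
  · exact ⟨q, b, ⟨.inr (by linarith), .inl ⟨p, hpq, by linarith⟩⟩,
      .inr (by linarith), .inl ⟨p, hpq, by linarith⟩⟩

theorem hasCommonRounding_of_opposed (hf₁ : ∀ a, 0 ≤ f₁ a) (hf₂ : ∀ a, 0 ≤ f₂ a)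
    (hg₁ : ∀ b, 0 ≤ g₁ b) (hg₂ : ∀ b, 0 ≤ g₂ b) (hg : ∃ b, ∀ c, g₁ c ≤ g₁ b ∧ g₂ c ≤ g₂ b)
    (hpq : p ≠ q) (hrs : r ≠ s) (hx0 : 0 ≤ x) (hx1 : x ≤ 1) (hy0 : 0 ≤ y) (hy1 : y ≤ 1)
    (hd₁ : f₁ q ≤ f₁ p) (hd₂ : f₂ q ≤ f₂ p) (he₁ : g₁ s ≤ g₁ r) (he₂ : g₂ r ≤ g₂ s) :
    HasCommonRounding f₁ f₂ g₁ g₂ x y p q r s := by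
  obtain ⟨b, hb⟩ := hg
  rcases eq_or_ne b r with rfl | hbr
  · exact hasCommonRounding_of_aligned hf₁ hf₂ hg₁ hg₂ hpq hrs hx0 hx1 hy0 hy1
      (mul_nonneg (sub_nonneg.2 hd₁) (sub_nonneg.2 he₁))
      (mul_nonneg (sub_nonneg.2 hd₂) (sub_nonneg.2 (hb s).2))
  rcases eq_or_ne b s with rfl | hbs
  · exact hasCommonRounding_swap_right.1 <| hasCommonRounding_of_aligned hf₁ hf₂ hg₁ hg₂ hpq
      hrs.symm hx0 hx1 (sub_nonneg.2 hy1) (sub_le_self 1 hy0)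
      (mul_nonneg (sub_nonneg.2 hd₁) (sub_nonneg.2 (hb r).1))
      (mul_nonneg (sub_nonneg.2 hd₂) (sub_nonneg.2 he₂))
  wlog hy : y ≤ 2 / 3 generalizing f₁ f₂ g₁ g₂ y r s
  · refine (hasCommonRounding_swap_right.1 ?_).swap_agents
    exact this hf₂ hf₁ hg₂ hg₁ hrs.symm (sub_nonneg.2 hy1) (sub_le_self 1 hy0) hd₂ hd₁ he₂ he₁
      (fun c ↦ (hb c).symm) hbs hbr (by linarith)
  rcases le_total x (2 / 3) with hx | hx
  · exact hasCommonRounding_of_opposed_of_le_of_le hf₁ hf₂ hg₁ hg₂ hpq hx0 hy0 hd₁ hd₂ he₁ he₂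
      hbr hbs (hb r).1 (hb s).2 hx hy
  rcases le_total (1 / 3) y with hy' | hy'
  · exact hasCommonRounding_of_opposed_of_ge_of_mem_Icc hf₁ hf₂ hg₁ hg₂ hpq hx1 hd₁ hd₂ he₁ he₂
      hbr hbs (hb r).1 (hb s).2 hx ⟨hy', hy⟩
  · refine (hasCommonRounding_swap_right.1 ?_).swap_agents
    exact hasCommonRounding_of_opposed_of_ge_of_ge hf₂ hf₁ hg₂ hg₁ hpq hrs.symm hx1
      (sub_le_self 1 hy0) hd₂ hd₁ he₂ he₁ hx (by linarith)

theorem hasCommonRounding (hf₁ : ∀ a, 0 ≤ f₁ a) (hf₂ : ∀ a, 0 ≤ f₂ a)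
    (hg₁ : ∀ b, 0 ≤ g₁ b) (hg₂ : ∀ b, 0 ≤ g₂ b) (hf : ∃ a, ∀ c, f₁ c ≤ f₁ a ∧ f₂ c ≤ f₂ a)
    (hg : ∃ b, ∀ c, g₁ c ≤ g₁ b ∧ g₂ c ≤ g₂ b) (hpq : p ≠ q) (hrs : r ≠ s)
    (hx0 : 0 ≤ x) (hx1 : x ≤ 1) (hy0 : 0 ≤ y) (hy1 : y ≤ 1) :
    HasCommonRounding f₁ f₂ g₁ g₂ x y p q r s := by
  wlog hd₁ : f₁ q ≤ f₁ p generalizing p q x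
  · exact hasCommonRounding_swap_left.1 <| this hpq.symm (sub_nonneg.2 hx1) (sub_le_self 1 hx0)
      (le_of_not_ge hd₁)
  wlog he₁ : g₁ s ≤ g₁ r generalizing r s y
  · exact hasCommonRounding_swap_right.1 <| this hrs.symm (sub_nonneg.2 hy1) (sub_le_self 1 hy0)
      (le_of_not_ge he₁)
  have h₁ : 0 ≤ (f₁ p - f₁ q) * (g₁ r - g₁ s) := mul_nonneg (sub_nonneg.2 hd₁) (sub_nonneg.2 he₁)
  rcases le_total (f₂ q) (f₂ p) with hd₂ | hd₂ <;> rcases le_total (g₂ s) (g₂ r) with he₂ | he₂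
  · exact hasCommonRounding_of_aligned hf₁ hf₂ hg₁ hg₂ hpq hrs hx0 hx1 hy0 hy1 h₁
      (mul_nonneg (sub_nonneg.2 hd₂) (sub_nonneg.2 he₂))
  · exact hasCommonRounding_of_opposed hf₁ hf₂ hg₁ hg₂ hg hpq hrs hx0 hx1 hy0 hy1 hd₁ hd₂ he₁ he₂
  · exact (hasCommonRounding_of_opposed hg₁ hg₂ hf₁ hf₂ hf hrs hpq hy0 hy1 hx0 hx1 he₁ he₂ hd₁
      hd₂).swap_parts
  · exact hasCommonRounding_of_aligned hf₁ hf₂ hg₁ hg₂ hpq hrs hx0 hx1 hy0 hy1 h₁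
      (mul_nonneg_of_nonpos_of_nonpos (sub_nonpos.2 hd₂) (sub_nonpos.2 he₂))

end Pair

section Simplex

variable {𝕜 α : Type*} [Field 𝕜] [LinearOrder 𝕜] [Fintype α] {w f : α → 𝕜} {c : α}

theorem card_support_pos_of_mem_stdSimplex (hw : w ∈ stdSimplex 𝕜 α) : 0 < #{a | w a ≠ 0} := by
  obtain ⟨a, -, ha⟩ := exists_ne_zero_of_sum_ne_zero (hw.2 ▸ one_ne_zero : ∑ a, w a ≠ 0)
  exact card_pos.2 ⟨a, mem_filter_univ a |>.2 ha⟩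

theorem eq_single_of_mem_stdSimplex [DecidableEq α] (hw : w ∈ stdSimplex 𝕜 α)
    (hcard : #{a | w a ≠ 0} ≤ 1) (hc : w c ≠ 0) : w = Pi.single c 1 := by
  have hzero : ∀ a, a ≠ c → w a = 0 := fun a hac ↦ by
    by_contra ha
    exact hac (card_le_one.1 hcard a (by simpa) c (by simpa))
  have hone : w c = 1 := by rw [← hw.2, Fintype.sum_eq_single c hzero]
  ext a
  rcases eq_or_ne a c with rfl | hac
  · rw [Pi.single_eq_same, hone]
  · rw [Pi.single_eq_of_ne hac, hzero a hac]

variable [IsStrictOrderedRing 𝕜]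

theorem exists_dotProduct_eq_of_card_support_eq_two (hw : w ∈ stdSimplex 𝕜 α)
    (hcard : #{a | w a ≠ 0} = 2) :
    ∃ p q, p ≠ q ∧ ∃ x, 0 ≤ x ∧ x ≤ 1 ∧ ∀ f : α → 𝕜, w ⬝ᵥ f = x * f p + (1 - x) * f q := by
  classical
  obtain ⟨p, q, hpq, hsupp⟩ := card_eq_two.1 hcard
  have hzero : ∀ a, a ≠ p ∧ a ≠ q → w a = 0 := fun a ha ↦ by
    by_contra h
    have hmem : a ∈ ({p, q} : Finset α) := hsupp ▸ (mem_filter_univ a).2 h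
    simp [ha] at hmem
  have hsum : w p + w q = 1 := by rw [← hw.2, Fintype.sum_eq_add p q hpq hzero]
  refine ⟨p, q, hpq, w p, hw.1 p, hw.2 ▸ single_le_sum (fun a _ ↦ hw.1 a) (mem_univ p),
    fun f ↦ ?_⟩
  rw [← hsum, add_sub_cancel_left]
  exact Fintype.sum_eq_add p q hpq fun a ha ↦ by rw [hzero a ha, zero_mul]

theorem exists_one_div_le_of_card_support_le (hw : w ∈ stdSimplex 𝕜 α) {n : ℕ}
    (hcard : #{a | w a ≠ 0} ≤ n) : ∃ a, 1 / (n : 𝕜) ≤ w a := by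
  have hpos := card_support_pos_of_mem_stdSimplex hw
  have hsum : ∑ a with w a ≠ 0, 1 / (n : 𝕜) ≤ ∑ a with w a ≠ 0, w a := by
    have hn : (0 : 𝕜) < n := by exact_mod_cast hpos.trans_le hcard
    rw [sum_filter_ne_zero, hw.2, sum_const, nsmul_eq_mul, mul_one_div, div_le_one hn]
    exact_mod_cast hcard
  exact (exists_le_of_sum_le (card_pos.1 hpos) hsum).imp fun a ha ↦ ha.2

theorem mul_le_dotProduct_of_mem_stdSimplex (hw : w ∈ stdSimplex 𝕜 α) (hf : ∀ a, 0 ≤ f a)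
    (c : α) : w c * f c ≤ w ⬝ᵥ f :=
  single_le_sum (f := fun a ↦ w a * f a) (fun a _ ↦ mul_nonneg (hw.1 a) (hf a)) (mem_univ c)

theorem dotProduct_le_of_mem_stdSimplex (hw : w ∈ stdSimplex 𝕜 α) {b : α} (hb : ∀ a, f a ≤ f b)
    (c : α) : w ⬝ᵥ f ≤ w c * f c + (1 - w c) * f b := by
  classical
  calc w ⬝ᵥ f = w c * f c + ∑ a ∈ univ.erase c, w a * f a :=
        (add_sum_erase _ (fun a ↦ w a * f a) (mem_univ c)).symm
    _ ≤ w c * f c + ∑ a ∈ univ.erase c, w a * f b := by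
        gcongr with a
        exacts [hw.1 a, hb a]
    _ = w c * f c + (1 - w c) * f b := by
        rw [← sum_mul, ← hw.2, sum_erase_eq_sub (mem_univ c)]

end Simplex

theorem sum_le_card_add_of_sum_le {κ : Type*} [Fintype κ] {m : κ → ℕ} {d : ℕ} (hm : ∀ j, 1 ≤ m j)
    (hsum : ∑ j, m j ≤ Fintype.card κ + d) (s : Finset κ) : ∑ j ∈ s, m j ≤ #s + d := by
  classical
  have hcompl : #sᶜ ≤ ∑ j ∈ sᶜ, m j := by
    simpa using sum_le_sum fun j (_ : j ∈ sᶜ) ↦ hm j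
  have hsplit := sum_add_sum_compl s m
  have hcard := card_add_card_compl s
  lia

section Family

variable {𝕜 κ : Type*} {α : κ → Type*} [Field 𝕜] [LinearOrder 𝕜] [Fintype κ]

/-- The selection of one item `c j` from each part `j` rounds the target value `t` of an agent with
valuation `v`: a deficit is covered by two thirds of an item outside the selection, an excess by two
thirds of a selected item. Parts are the members of a family of types, so they are disjoint. -/
def IsRounding_s18 (v : ∀ j, α j → 𝕜) (t : 𝕜) (c : ∀ j, α j) : Prop :=
  (∑ j, v j (c j) < t → ∃ j, ∃ b ≠ c j, t ≤ ∑ j, v j (c j) + 2 / 3 * v j b) ∧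
    (t < ∑ j, v j (c j) → ∃ j, ∑ j, v j (c j) - 2 / 3 * v j (c j) ≤ t)

theorem isRounding_of_sum_eq {v : ∀ j, α j → 𝕜} {t : 𝕜} {c : ∀ j, α j}
    (h : ∑ j, v j (c j) = t) : IsRounding_s18 v t c :=
  ⟨fun hlt ↦ absurd h hlt.ne, fun hlt ↦ absurd h hlt.ne'⟩

variable [IsStrictOrderedRing 𝕜] [∀ j, Fintype (α j)]

theorem exists_mem_stdSimplex_sum_card_support_le {n : Type*} [Fintype n] (v : n → ∀ j, α j → 𝕜)
    {x : ∀ j, α j → 𝕜} (hx : ∀ j, x j ∈ stdSimplex 𝕜 (α j)) :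
    ∃ y : ∀ j, α j → 𝕜, (∀ j, y j ∈ stdSimplex 𝕜 (α j)) ∧
      (∀ i, ∑ j, y j ⬝ᵥ v i j = ∑ j, x j ⬝ᵥ v i j) ∧
      ∑ j, #{a | y j a ≠ 0} ≤ Fintype.card κ + Fintype.card n := by
  classical
  let u : (Σ j, α j) → (κ → 𝕜) × (n → 𝕜) := fun s ↦ (Pi.single s.1 1, fun i ↦ v i s.1 s.2)
  have hu (z : (Σ j, α j) →₀ 𝕜) : Finsupp.linearCombination 𝕜 u z =
      (fun j ↦ ∑ a, z ⟨j, a⟩, fun i ↦ ∑ j, (fun a ↦ z ⟨j, a⟩) ⬝ᵥ v i j) := by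
    rw [Finsupp.linearCombination_apply, Finsupp.sum_fintype _ _ (by simp), Fintype.sum_sigma]
    ext i
    · simp [u, Prod.fst_sum, Finset.sum_apply, Pi.single_apply]
    · simp [u, Prod.snd_sum, Finset.sum_apply, dotProduct]
  obtain ⟨y, hy, hyx, hcard⟩ := exists_nonneg_linearCombination_eq_card_support_le_finrank u
    (x := Finsupp.equivFunOnFinite.symm fun s ↦ x s.1 s.2) fun s ↦ (hx s.1).1 s.2
  rw [hu, hu, Prod.mk.injEq] at hyx
  refine ⟨fun j a ↦ y ⟨j, a⟩, fun j ↦ ⟨fun a ↦ hy _, ?_⟩, fun i ↦ congrFun hyx.2 i, ?_⟩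
  · exact (congrFun hyx.1 j).trans (hx j).2
  · calc ∑ j, #{a | y ⟨j, a⟩ ≠ 0} = #y.support := by
          rw [← card_sigma]
          congr 1
          ext; simp
      _ ≤ Module.finrank 𝕜 ((κ → 𝕜) × (n → 𝕜)) := hcard
      _ = Fintype.card κ + Fintype.card n := by simp

theorem isRounding_of_forall_ne_eq_single [∀ j, DecidableEq (α j)]
    {v y : ∀ j, α j → 𝕜} (hv : ∀ j a, 0 ≤ v j a)
    {c : ∀ j, α j} {j₁ : κ} (hy : y j₁ ∈ stdSimplex 𝕜 (α j₁)) (hc : 1 / 3 ≤ y j₁ (c j₁))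
    (hint : ∀ j, j ≠ j₁ → y j = Pi.single (c j) 1) :
    IsRounding_s18 v (∑ j, y j ⬝ᵥ v j) c := by
  have hsum : ∑ j, v j (c j) - ∑ j, y j ⬝ᵥ v j = v j₁ (c j₁) - y j₁ ⬝ᵥ v j₁ := by
    rw [← sum_sub_distrib]
    exact Fintype.sum_eq_single j₁ fun j hj ↦ by simp [hint j hj]
  have hvc := hv j₁ (c j₁)
  have hcv : 1 / 3 * v j₁ (c j₁) ≤ y j₁ (c j₁) * v j₁ (c j₁) := by gcongr
  refine ⟨fun hlt ↦ ⟨j₁, ?_⟩, fun _ ↦ ⟨j₁, ?_⟩⟩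
  · obtain ⟨b, -, hb⟩ := exists_max_image univ (v j₁) ⟨c j₁, mem_univ _⟩
    have hmean := dotProduct_le_of_mem_stdSimplex hy (fun a ↦ hb a (mem_univ a)) (c j₁)
    refine ⟨b, ?_, ?_⟩
    · rintro rfl
      linarith
    · have hcb : (1 - y j₁ (c j₁)) * v j₁ b ≤ 2 / 3 * v j₁ b := by
        gcongr
        exacts [hv j₁ b, by linarith]
      have hyc : y j₁ (c j₁) * v j₁ (c j₁) ≤ 1 * v j₁ (c j₁) := by
        gcongr
        exact hy.2 ▸ single_le_sum (fun a _ ↦ hy.1 a) (mem_univ _)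
      linarith
  · linarith [mul_le_dotProduct_of_mem_stdSimplex hy (hv j₁) (c j₁)]

theorem IsPairRounding.isRounding [∀ j, DecidableEq (α j)]
    {v y : ∀ j, α j → 𝕜} {c : ∀ j, α j} {j₁ j₂ : κ} (hne : j₁ ≠ j₂)
    (h : IsPairRounding (v j₁) (v j₂) (y j₁ ⬝ᵥ v j₁ + y j₂ ⬝ᵥ v j₂) (c j₁) (c j₂))
    (hint : ∀ j, j ≠ j₁ ∧ j ≠ j₂ → y j = Pi.single (c j) 1) :
    IsRounding_s18 v (∑ j, y j ⬝ᵥ v j) c := by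
  have hsum : ∑ j, v j (c j) - ∑ j, y j ⬝ᵥ v j =
      (v j₁ (c j₁) - y j₁ ⬝ᵥ v j₁) + (v j₂ (c j₂) - y j₂ ⬝ᵥ v j₂) := by
    rw [← sum_sub_distrib]
    exact Fintype.sum_eq_add j₁ j₂ hne fun j hj ↦ by simp [hint j hj]
  obtain ⟨hupper, hlower⟩ := h
  refine ⟨fun _ ↦ ?_, fun _ ↦ ?_⟩
  · rcases hlower with ⟨b, hb, hle⟩ | ⟨b, hb, hle⟩
    · exact ⟨j₁, b, hb, by linarith⟩
    · exact ⟨j₂, b, hb, by linarith⟩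
  · rcases hupper with hle | hle
    · exact ⟨j₁, by linarith⟩
    · exact ⟨j₂, by linarith⟩

theorem exists_forall_isRounding_of_card_support_eq_two [∀ j, DecidableEq (α j)]
    {v : Fin 2 → ∀ j, α j → 𝕜}
    (hv : ∀ i j a, 0 ≤ v i j a) (hfav : ∀ j, ∃ a, ∀ i b, v i j b ≤ v i j a) {y : ∀ j, α j → 𝕜}
    {c : ∀ j, α j} {j₁ j₂ : κ} (hne : j₁ ≠ j₂) (hy₁ : y j₁ ∈ stdSimplex 𝕜 (α j₁))
    (hy₂ : y j₂ ∈ stdSimplex 𝕜 (α j₂)) (hcard₁ : #{a | y j₁ a ≠ 0} = 2)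
    (hcard₂ : #{a | y j₂ a ≠ 0} = 2) (hint : ∀ j, j ≠ j₁ ∧ j ≠ j₂ → y j = Pi.single (c j) 1) :
    ∃ d : ∀ j, α j, ∀ i, IsRounding_s18 (v i) (∑ j, y j ⬝ᵥ v i j) d := by
  classical
  obtain ⟨p, q, hpq, x, hx0, hx1, hx⟩ := exists_dotProduct_eq_of_card_support_eq_two hy₁ hcard₁
  obtain ⟨r, s, hrs, z, hz0, hz1, hz⟩ := exists_dotProduct_eq_of_card_support_eq_two hy₂ hcard₂
  have hfav' (j) : ∃ a, ∀ b, v 0 j b ≤ v 0 j a ∧ v 1 j b ≤ v 1 j a :=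
    (hfav j).imp fun a ha b ↦ ⟨ha 0 b, ha 1 b⟩
  obtain ⟨a, b, h₀, h₁⟩ := hasCommonRounding (hv 0 j₁) (hv 1 j₁) (hv 0 j₂) (hv 1 j₂) (hfav' j₁)
    (hfav' j₂) hpq hrs hx0 hx1 hz0 hz1
  rw [splitValue, ← hx, ← hz] at h₀ h₁
  let d := Function.update (Function.update c j₁ a) j₂ b
  have hd₁ : d j₁ = a := by simp [d, hne]
  have hd₂ : d j₂ = b := by simp [d]
  have hd : ∀ j, j ≠ j₁ ∧ j ≠ j₂ → y j = Pi.single (d j) 1 := fun j hj ↦ by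
    simp [d, hj.1, hj.2, hint j hj]
  rw [← hd₁, ← hd₂] at h₀ h₁
  exact ⟨d, Fin.forall_fin_two.2 ⟨h₀.isRounding hne hd, h₁.isRounding hne hd⟩⟩

theorem exists_forall_isRounding_of_sum_card_support_le {v : Fin 2 → ∀ j, α j → 𝕜}
    (hv : ∀ i j a, 0 ≤ v i j a) (hfav : ∀ j, ∃ a, ∀ i b, v i j b ≤ v i j a) {y : ∀ j, α j → 𝕜}
    (hy : ∀ j, y j ∈ stdSimplex 𝕜 (α j))
    (hcard : ∑ j, #{a | y j a ≠ 0} ≤ Fintype.card κ + 2) :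
    ∃ c : ∀ j, α j, ∀ i, IsRounding_s18 (v i) (∑ j, y j ⬝ᵥ v i j) c := by
  classical
  have hexcess := sum_le_card_add_of_sum_le
    (fun j ↦ Nat.succ_le_of_lt (card_support_pos_of_mem_stdSimplex (hy j))) hcard
  have hthree (j) : ∃ a, 1 / 3 ≤ y j a := mod_cast
    exists_one_div_le_of_card_support_le (hy j) (by simpa using hexcess {j} : _ ≤ 3)
  choose c hc using hthree
  have hint (j) (hj : #{a | y j a ≠ 0} ≤ 1) : y j = Pi.single (c j) 1 :=
    eq_single_of_mem_stdSimplex (hy j) hj (by linarith [hc j] : 0 < y j (c j)).ne'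
  by_cases hfrac : ∃ j₁, 1 < #{a | y j₁ a ≠ 0}
  · obtain ⟨j₁, hj₁⟩ := hfrac
    by_cases hfrac' : ∃ j₂, j₂ ≠ j₁ ∧ 1 < #{a | y j₂ a ≠ 0}
    · obtain ⟨j₂, hne, hj₂⟩ := hfrac'
      have hpair := hexcess {j₁, j₂}
      rw [sum_pair hne.symm, card_pair hne.symm] at hpair
      refine exists_forall_isRounding_of_card_support_eq_two hv hfav hne.symm (hy j₁) (hy j₂)
        (by lia) (by lia) fun j hj ↦ hint j ?_
      have htriple := hexcess {j, j₁, j₂}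
      rw [sum_insert (by simp [hj]), card_insert_of_notMem (by simp [hj]), sum_pair hne.symm,
        card_pair hne.symm] at htriple
      lia
    · push Not at hfrac'
      exact ⟨c, fun i ↦ isRounding_of_forall_ne_eq_single (hv i) (hy j₁) (hc j₁) fun j hj ↦
        hint j (hfrac' j hj)⟩
  · push Not at hfrac
    exact ⟨c, fun i ↦ isRounding_of_sum_eq <| by simp [hint _ (hfrac _)]⟩

theorem exists_forall_isRounding {v : Fin 2 → ∀ j, α j → 𝕜} (hv : ∀ i j a, 0 ≤ v i j a)
    (hfav : ∀ j, ∃ a, ∀ i b, v i j b ≤ v i j a) {x : ∀ j, α j → 𝕜}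
    (hx : ∀ j, x j ∈ stdSimplex 𝕜 (α j)) :
    ∃ c : ∀ j, α j, ∀ i, IsRounding_s18 (v i) (∑ j, x j ⬝ᵥ v i j) c := by
  obtain ⟨y, hy, hyx, hcard⟩ := exists_mem_stdSimplex_sum_card_support_le v hx
  rw [Fintype.card_fin] at hcard
  simpa only [hyx] using exists_forall_isRounding_of_sum_card_support_le hv hfav hy hcard

end Family

section Transversal

variable {ι κ : Type*} {T : κ → Finset ι}

theorem eq_of_coe_mem (hT : Pairwise (Function.onFun Disjoint T)) (c : ∀ j, T j) {j j' : κ}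
    (h : (c j' : ι) ∈ T j) : j' = j := by
  by_contra hne
  exact disjoint_left.1 (hT hne) (c j').2 h

variable [Fintype κ]

theorem image_coe_inter_eq_singleton [DecidableEq ι] (hT : Pairwise (Function.onFun Disjoint T))
    (c : ∀ j, T j) (j : κ) : univ.image (fun j ↦ (c j : ι)) ∩ T j = {(c j : ι)} := by
  ext g
  simp only [mem_inter, mem_image, mem_univ, true_and, mem_singleton]
  refine ⟨?_, fun hg ↦ ⟨⟨j, hg.symm⟩, hg ▸ (c j).2⟩⟩
  rintro ⟨⟨j', rfl⟩, hg⟩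
  rw [eq_of_coe_mem hT c hg]

theorem sum_sum_eq_sum_univ {M : Type*} [AddCommMonoid M] [Fintype ι]
    (hT : Pairwise (Function.onFun Disjoint T)) (hcov : ∀ g, ∃ j, g ∈ T j) (f : ι → M) :
    ∑ j, ∑ g ∈ T j, f g = ∑ g, f g := by
  classical
  rw [← sum_biUnion (hT.set_pairwise _)]
  congr 1
  ext
  simp only [mem_biUnion, mem_univ, true_and, hcov]

end Transversal

theorem exists_rounded_transversal_general {𝕜 ι κ : Type*} [Field 𝕜] [LinearOrder 𝕜]
    [IsStrictOrderedRing 𝕜] [DecidableEq ι] [Fintype κ] {T : κ → Finset ι}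
    (hT : Pairwise (Function.onFun Disjoint T)) {v : Fin 2 → ι → 𝕜} (hv : ∀ i g, 0 ≤ v i g)
    (hfav : ∀ j, ∃ a ∈ T j, ∀ i, ∀ b ∈ T j, v i b ≤ v i a) {x : ι → 𝕜} (hx : ∀ g, 0 ≤ x g)
    (hx1 : ∀ j, ∑ g ∈ T j, x g = 1) :
    ∃ X : Finset ι, (∀ j, #(X ∩ T j) = 1) ∧ ∀ i,
      (∑ g ∈ X, v i g < ∑ j, ∑ g ∈ T j, x g * v i g →
        ∃ g, g ∉ X ∧ ∑ j, ∑ g ∈ T j, x g * v i g ≤ ∑ g' ∈ X, v i g' + 2 / 3 * v i g) ∧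
      (∑ j, ∑ g ∈ T j, x g * v i g < ∑ g ∈ X, v i g →
        ∃ g ∈ X, ∑ g' ∈ X, v i g' - 2 / 3 * v i g ≤ ∑ j, ∑ g ∈ T j, x g * v i g) := by
  obtain ⟨c, hc⟩ := exists_forall_isRounding (α := fun j ↦ T j) (v := fun i j g ↦ v i g)
    (x := fun j g ↦ x g) (fun i j g ↦ hv i g)
    (fun j ↦ let ⟨a, ha, hfav⟩ := hfav j; ⟨⟨a, ha⟩, fun i b ↦ hfav i b b.2⟩)
    (fun j ↦ ⟨fun g ↦ hx g, (sum_coe_sort (T j) x).trans (hx1 j)⟩)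
  have hinter := image_coe_inter_eq_singleton hT c
  refine ⟨univ.image fun j ↦ (c j : ι), fun j ↦ by rw [hinter, card_singleton], fun i ↦ ?_⟩
  have hsum : ∑ g ∈ univ.image (fun j ↦ (c j : ι)), v i g = ∑ j, v i (c j) :=
    sum_image fun j _ j' _ h ↦ eq_of_coe_mem hT c (h.symm ▸ (c j').2)
  have htarget : ∑ j, ∑ g ∈ T j, x g * v i g =
      ∑ j, (fun g : T j ↦ x g) ⬝ᵥ fun g : T j ↦ v i g :=
    sum_congr rfl fun j _ ↦ (sum_coe_sort (T j) fun g ↦ x g * v i g).symm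
  rw [hsum, htarget]
  refine ⟨fun hlt ↦ ?_, fun hlt ↦ ?_⟩
  · obtain ⟨j, b, hb, hle⟩ := (hc i).1 hlt
    refine ⟨b, fun hbX ↦ hb (Subtype.ext ?_), hle⟩
    exact mem_singleton.1 (hinter j ▸ mem_inter.2 ⟨hbX, b.2⟩)
  · obtain ⟨j, hle⟩ := (hc i).2 hlt
    exact ⟨c j, mem_image_of_mem _ (mem_univ j), hle⟩

/-- Let the item set (the whole finite type `ι`) be partitioned into `k` disjoint triples
`T j`, and let two agents have additive valuations `v 0`, `v 1`, each summing to `1`, such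
that every triple has a single item that is strictly most valuable for both agents
simultaneously.  Then there is a transversal `X` (one item from each triple) whose value for
each agent is `1/3` up to adding a `2/3` fraction of one outside item or removing a `2/3`
fraction of one inside item. -/
theorem exists_rounded_transversal {ι : Type*} [Fintype ι] [DecidableEq ι]
    (k : ℕ) (T : Fin k → Finset ι)
    (hT3 : ∀ j, (T j).card = 3)
    (hTdisj : ∀ j j', j ≠ j' → Disjoint (T j) (T j'))
    (hTcov : ∀ g : ι, ∃ j, g ∈ T j)
    (v : Fin 2 → ι → ℝ) (hv : ∀ i g, 0 ≤ v i g)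
    (hnorm : ∀ i, ∑ g, v i g = 1)
    (hfav : ∀ j, ∃ a ∈ T j, ∀ b ∈ T j, b ≠ a → v 0 b < v 0 a ∧ v 1 b < v 1 a) :
    ∃ X : Finset ι,
      (∀ j, (X ∩ T j).card = 1) ∧
      ∀ i : Fin 2,
        ((∑ g ∈ X, v i g < 1 / 3) →
          ∃ g, g ∉ X ∧ 1 / 3 ≤ (∑ g' ∈ X, v i g') + 2 / 3 * v i g) ∧
        ((1 / 3 < ∑ g ∈ X, v i g) →
          ∃ g ∈ X, (∑ g' ∈ X, v i g') - 2 / 3 * v i g ≤ 1 / 3) := by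
  have htarget (i) : ∑ j, ∑ g ∈ T j, 1 / 3 * v i g = 1 / 3 := by
    rw [sum_sum_eq_sum_univ hTdisj hTcov, ← mul_sum, hnorm, mul_one]
  have hfav' (j) : ∃ a ∈ T j, ∀ i, ∀ b ∈ T j, v i b ≤ v i a := by
    obtain ⟨a, ha, hlt⟩ := hfav j
    refine ⟨a, ha, fun i b hb ↦ ?_⟩
    rcases eq_or_ne b a with rfl | hba
    · exact le_rfl
    · exact (Fin.forall_fin_two (p := fun i ↦ v i b < v i a)).2 (hlt b hb hba) i |>.le
  simpa only [htarget] using exists_rounded_transversal_general (x := fun _ ↦ 1 / 3) hTdisj hv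
    hfav' (fun _ ↦ by norm_num) (fun j ↦ by norm_num [hT3])
end
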